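/- arXiv:math/0311449 — 3 statements merged into one kernel-verified Lean document; each statement's English description precedes it below -/
import Mathlib

section
/- For every integer k ≥ 3 and every ε > 0 there exists n₀ such that every graph G on n ≥ n₀ vertices with minimum degree at least n·(1 - 1/(9k¹⁰) + ε) has a fractional K_k-decomposition. -/
/-- `c` is a copy of `H` in `G`, i.e. a subgraph of `G` isomorphic to `H`. -/
def SimpleGraph.Subgraph.IsCopy {α β : Type*} {G : SimpleGraph α} (c : G.Subgraph)
    (H : SimpleGraph β) : Prop :=
  Nonempty (c.coe ≃g H)

/-- A fractional `H`-decomposition of `G`: an assignment of nonnegative real weights to the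
copies of `H` in `G` such that for each edge `e` of `G`, the sum of the weights of the copies
of `H` containing `e` equals `1`. -/
def IsFracDecomp {α β : Type*} (G : SimpleGraph α) (H : SimpleGraph β)
    (ψ : G.Subgraph → ℝ) : Prop :=
  (∀ c, 0 ≤ ψ c) ∧ (∀ c, ¬ c.IsCopy H → ψ c = 0) ∧
  ∀ e ∈ G.edgeSet, (∑ᶠ c ∈ {c : G.Subgraph | c.IsCopy H ∧ e ∈ c.edgeSet}, ψ c) = 1

/-!
Put a uniform weight `p` on every `k`-clique, so small that no edge receives total weight more than
`1`. The deficit of an edge `e` is then spread over the `(k + 2)`-cliques `S` containing `e`: inside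
each `S`, a signed weighting of the `k`-subsets of `S` raises the weight of `e` and leaves that of
the other pairs of `S` unchanged, so all deficits can be corrected independently. On a `k`-clique
`K`, negative corrections only come from pairs meeting `K` in exactly one vertex. By a union bound
over common neighbourhoods, every edge lies in almost as many `k`-cliques and `(k + 2)`-cliques as
it would in a complete graph, so the deficits are too small to make the weight of `K` negative.
-/

open Finset
open scoped Nat

section Subsets

variable {V : Type*} [DecidableEq V] {S K A e f : Finset V} {k r : ℕ}

lemma card_filter_powersetCard_subset_eq_choose_sub (hA : A ⊆ S) (hr : r ≤ #S) :
    #{K ∈ powersetCard r S | A ⊆ K} = (#S - #A).choose (#S - r) := by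
  have hAS := card_le_card hA
  rcases le_or_gt #A r with hAr | hrA
  · rw [card_filter_powersetCard_subset A S r hA hAr, ← Nat.choose_symm (by lia)]
    congr 1
    lia
  · rw [Nat.choose_eq_zero_of_lt (by lia), card_eq_zero, filter_eq_empty_iff]
    intro K hK hAK
    exact (card_le_card hAK).not_gt ((mem_powersetCard.1 hK).2 ▸ hrA)

lemma sum_filter_powersetCard_card_inter (hf : f ⊆ S) (he : e ⊆ S) (hr : r ≤ #S) :
    ∑ K ∈ powersetCard r S with f ⊆ K, #(e ∩ K) =
      #(e ∩ f) * (#S - #f).choose (#S - r) + #(e \ f) * (#S - (#f + 1)).choose (#S - r) := by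
  have count (a : V) (ha : a ∈ e) :
      ∑ K ∈ powersetCard r S with f ⊆ K, (if a ∈ K then 1 else 0) =
        (#S - #(insert a f)).choose (#S - r) := by
    rw [← card_filter_powersetCard_subset_eq_choose_sub (insert_subset (he ha) hf) hr,
      ← card_filter, filter_filter]
    simp only [insert_subset_iff, and_comm]
  calc ∑ K ∈ powersetCard r S with f ⊆ K, #(e ∩ K)
    _ = ∑ a ∈ e, (#S - #(insert a f)).choose (#S - r) := by
      simp_rw [← filter_mem_eq_inter, card_filter]
      rw [sum_comm]
      exact sum_congr rfl count
    _ = ∑ _ ∈ e ∩ f, (#S - #f).choose (#S - r) +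
        ∑ _ ∈ e \ f, (#S - (#f + 1)).choose (#S - r) := by
      rw [← sum_inter_add_sum_sdiff e f]
      congr 1
      · exact sum_congr rfl fun _ ha ↦ by rw [insert_eq_of_mem (mem_inter.1 ha).2]
      · exact sum_congr rfl fun _ ha ↦ by rw [card_insert_of_notMem (mem_sdiff.1 ha).2]
    _ = _ := by simp only [sum_const, smul_eq_mul]

lemma card_filter_card_inter_eq_one_le :
    #{e ∈ powersetCard 2 S | #(e ∩ K) = 1} ≤ #K * #(S \ K) := by
  rw [← card_product]
  refine (card_le_card fun e he ↦ ?_).trans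
    (card_image_le (f := fun p : V × V ↦ ({p.1, p.2} : Finset V)))
  obtain ⟨he, he1⟩ := mem_filter.1 he
  obtain ⟨heS, he2⟩ := mem_powersetCard.1 he
  obtain ⟨a, ha⟩ := card_eq_one.1 he1
  obtain ⟨b, hb⟩ := card_eq_one.1 (show #(e \ K) = 1 by
    have := card_inter_add_card_sdiff e K
    lia)
  have haK : a ∈ e ∩ K := ha ▸ mem_singleton_self a
  have hbK : b ∈ e \ K := hb ▸ mem_singleton_self b
  refine mem_image.2 ⟨(a, b), mk_mem_product (mem_inter.1 haK).2 ?_, ?_⟩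
  · exact sdiff_subset_sdiff heS subset_rfl hbK
  · rw [insert_eq, ← ha, ← hb, union_comm, sdiff_union_inter]

/-- The weight of a `k`-subset `K` of a `(k + 2)`-set in the gadget of a pair `e`: summed over all
`K` containing a given pair `f`, it gives `1` if `f = e` and `0` otherwise. It depends only on
`#(e ∩ K)`, with values `(k - 2) / k`, `-(k - 2) / (k (k - 1))` and `2 / (k (k - 1))` at
`0`, `1` and `2`. -/
noncomputable def pairGadget (k : ℕ) (e K : Finset V) : ℝ :=
  (k - 2) / k - (k - 2) / (k - 1) * #(e ∩ K) + if e ⊆ K then 1 else 0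

lemma pairGadget_nonneg (hk : 2 ≤ k) (he : #e = 2) (h : #(e ∩ K) ≠ 1) : 0 ≤ pairGadget k e K := by
  have hk' : (2 : ℝ) ≤ k := mod_cast hk
  have hk1 : (k : ℝ) - 1 ≠ 0 := by linarith
  have hle : #(e ∩ K) ≤ 2 := he ▸ card_le_card inter_subset_left
  obtain h0 | h2 : #(e ∩ K) = 0 ∨ #(e ∩ K) = 2 := by lia
  · have := div_nonneg (sub_nonneg.2 hk') (Nat.cast_nonneg k)
    rw [pairGadget, h0]
    split_ifs <;> push_cast <;> linarith
  · have heK : e ⊆ K := inter_eq_left.1 (eq_of_subset_of_card_le inter_subset_left (by lia))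
    have : pairGadget k e K = 2 / (k * (k - 1)) := by
      rw [pairGadget, h2, if_pos heK]
      field_simp
      push_cast
      ring
    rw [this]
    exact div_nonneg zero_le_two (mul_nonneg (by linarith) (by linarith))

lemma neg_inv_le_pairGadget (hk : 2 ≤ k) (h : #(e ∩ K) = 1) : -(k : ℝ)⁻¹ ≤ pairGadget k e K := by
  have hk' : (2 : ℝ) ≤ k := mod_cast hk
  have hk1 : 0 < (k : ℝ) - 1 := by linarith
  have key : (k - 2) / k - (k - 2) / (k - 1) + (k : ℝ)⁻¹ = 1 / (k * (k - 1)) := by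
    field_simp
    ring
  have : 0 ≤ 1 / (k * ((k : ℝ) - 1)) := by positivity
  rw [pairGadget, h, Nat.cast_one, mul_one]
  split_ifs <;> linarith

lemma pairGadget_balance {j : ℕ} (hk : 2 ≤ k) (hj : j ≤ 2) :
    (k.choose 2 : ℝ) * ((k - 2) / k) -
      (k - 2) / (k - 1) * (j * k.choose 2 + (2 - j : ℕ) * (k - 1).choose 2 : ℕ) +
      (k - 2 + j).choose 2 = if j = 2 then 1 else 0 := by
  obtain ⟨m, rfl⟩ := Nat.exists_eq_add_of_le' hk
  have hm : ((m + 2 : ℕ) : ℝ) - 1 = m + 1 := by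
    push_cast
    ring
  rw [hm]
  interval_cases j
  all_goals
    simp only [Nat.add_sub_cancel, Nat.add_one_sub_one, Nat.cast_add, Nat.cast_mul,
      Nat.cast_choose_two, Nat.reduceSub, Nat.reduceEqDiff, reduceIte]
    field_simp
    push_cast
    ring

lemma sum_pairGadget (hk : 2 ≤ k) (hS : #S = k + 2) (he : #e = 2) (hf : #f = 2)
    (heS : e ⊆ S) (hfS : f ⊆ S) :
    ∑ K ∈ powersetCard k S with f ⊆ K, pairGadget k e K = if e = f then 1 else 0 := by
  have hkS : k ≤ #S := by lia
  have hinter : #(e ∩ f) = 2 ↔ e = f := by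
    constructor
    · intro h
      rw [← eq_of_subset_of_card_le (inter_subset_left (s₁ := e) (s₂ := f)) (by lia)]
      exact eq_of_subset_of_card_le inter_subset_right (by lia)
    · rintro rfl
      rwa [inter_self]
  have h_union : ∑ K ∈ powersetCard k S with f ⊆ K, (if e ⊆ K then (1 : ℝ) else 0) =
      (k - 2 + #(e ∩ f)).choose 2 := by
    have hunion := card_union_add_card_inter e f
    rw [sum_boole, filter_filter]
    simp only [← union_subset_iff]
    rw [card_filter_powersetCard_subset_eq_choose_sub (union_subset hfS heS) hkS, union_comm,
      show #S - k = 2 by lia, show #S - #(e ∪ f) = k - 2 + #(e ∩ f) by lia]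
  have hsdiff : #(e \ f) = 2 - #(e ∩ f) := by
    have := card_inter_add_card_sdiff e f
    lia
  have hle : #(e ∩ f) ≤ 2 := he ▸ card_le_card inter_subset_left
  simp only [pairGadget, sum_add_distrib, sum_sub_distrib, ← mul_sum, sum_const, nsmul_eq_mul,
    ← Nat.cast_sum, sum_filter_powersetCard_card_inter hfS heS hkS,
    card_filter_powersetCard_subset_eq_choose_sub hfS hkS, h_union, ← hinter, hsdiff, hS, hf,
    Nat.add_sub_cancel, Nat.add_sub_cancel_left, Nat.reduceAdd]
  exact pairGadget_balance hk hle

lemma neg_two_mul_le_sum_mul_pairGadget {c : Finset V → ℝ} {δ : ℝ} (hk : 2 ≤ k) (hKS : K ⊆ S)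
    (hK : #K = k) (hS : #S = k + 2) (hδ : 0 ≤ δ) (hc : ∀ e ∈ powersetCard 2 S, c e ∈ Set.Icc 0 δ) :
    -(2 * δ) ≤ ∑ e ∈ powersetCard 2 S, c e * pairGadget k e K := by
  have hcrossing : (#{e ∈ powersetCard 2 S | #(e ∩ K) = 1} : ℝ) ≤ k * 2 := by
    have h := card_filter_card_inter_eq_one_le (S := S) (K := K)
    rw [card_sdiff_of_subset hKS, hK, hS, Nat.add_sub_cancel_left] at h
    exact_mod_cast h
  calc -(2 * δ)
    _ = -(k * 2 * (δ * (k : ℝ)⁻¹)) := by field_simp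
    _ ≤ -(#{e ∈ powersetCard 2 S | #(e ∩ K) = 1} * (δ * (k : ℝ)⁻¹)) := by gcongr
    _ = ∑ e ∈ powersetCard 2 S, if #(e ∩ K) = 1 then -(δ * (k : ℝ)⁻¹) else 0 := by
      rw [← sum_filter, sum_const, nsmul_eq_mul, mul_neg]
    _ ≤ ∑ e ∈ powersetCard 2 S, c e * pairGadget k e K := sum_le_sum fun e he ↦ by
      obtain ⟨hc0, hcδ⟩ := hc e he
      split_ifs with h1
      · calc -(δ * (k : ℝ)⁻¹)
          _ ≤ -(c e * (k : ℝ)⁻¹) := by gcongr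
          _ = c e * -(k : ℝ)⁻¹ := by ring
          _ ≤ c e * pairGadget k e K := by
            gcongr
            exact neg_inv_le_pairGadget hk h1
      · exact mul_nonneg hc0 (pairGadget_nonneg hk (mem_powersetCard.1 he).2 h1)

end Subsets

section CliquesOver

variable {V : Type*} [Fintype V] [DecidableEq V] (G : SimpleGraph V) [DecidableRel G.Adj]
  {A K S f : Finset V} {k r s : ℕ} {γ : ℝ}

/-- The `r`-cliques of `G` containing the vertex set `A`. Edges are encoded as `2`-cliques. -/
def cliquesOver (r : ℕ) (A : Finset V) : Finset (Finset V) :=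
  {S ∈ G.cliqueFinset r | A ⊆ S}

variable {G} in
lemma mem_cliquesOver : S ∈ cliquesOver G r A ↔ G.IsNClique r S ∧ A ⊆ S := by
  rw [cliquesOver, mem_filter, SimpleGraph.mem_cliqueFinset_iff]

lemma cliquesOver_card_subset_singleton : cliquesOver G #A A ⊆ {A} := fun S hS ↦ by
  obtain ⟨hS, hAS⟩ := mem_cliquesOver.1 hS
  exact mem_singleton.2 (eq_of_subset_of_card_le hAS hS.card_eq.le).symm

lemma sum_cliquesOver_comm (f : Finset V → Finset V → ℝ) :
    ∑ K ∈ cliquesOver G r A, ∑ S ∈ cliquesOver G s K, f K S =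
      ∑ S ∈ cliquesOver G s A, ∑ K ∈ powersetCard r S with A ⊆ K, f K S := by
  refine sum_comm' fun K S ↦ ?_
  simp only [mem_cliquesOver, mem_filter, mem_powersetCard]
  constructor
  · rintro ⟨⟨hK, hAK⟩, hS, hKS⟩
    exact ⟨⟨⟨hKS, hK.card_eq⟩, hAK⟩, hS, hAK.trans hKS⟩
  · rintro ⟨⟨⟨hKS, hK⟩, hAK⟩, hS, -⟩
    exact ⟨⟨⟨hS.isClique.subset (coe_subset.2 hKS), hK⟩, hAK⟩, hS, hKS⟩

/-- The common neighbourhood of a vertex set, which is the set of vertices extending it to a larger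
clique if it is itself a clique. -/
def commonNeighborFinset (S : Finset V) : Finset V :=
  {x | ∀ v ∈ S, G.Adj v x}

variable {G} in
lemma mem_commonNeighborFinset {x : V} : x ∈ commonNeighborFinset G S ↔ ∀ v ∈ S, G.Adj v x :=
  mem_filter_univ x

variable {G} in
lemma card_cliquesOver_succ (hS : G.IsNClique r S) :
    #(cliquesOver G (r + 1) S) = #(commonNeighborFinset G S) := by
  have not_mem {x : V} (hx : x ∈ commonNeighborFinset G S) : x ∉ S := fun hxS ↦
    G.irrefl (mem_commonNeighborFinset.1 hx x hxS)
  symm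
  refine card_nbij (insert · S) (fun x hx ↦ ?_) (fun x hx _ _ hxy ↦ ?_) (fun T hT ↦ ?_)
  · refine mem_cliquesOver.2 ⟨hS.insert fun v hv ↦ ?_, subset_insert x S⟩
    exact (mem_commonNeighborFinset.1 hx v hv).symm
  · exact (insert_inj (not_mem hx)).1 hxy
  · obtain ⟨hT, hST⟩ := mem_cliquesOver.1 hT
    obtain ⟨x, hx, rfl⟩ := (covBy_iff_exists_insert).1
      (covBy_iff_card_sdiff_eq_one.2 ⟨hST, by
        rw [card_sdiff_of_subset hST, hT.card_eq, hS.card_eq, Nat.add_sub_cancel_left]⟩)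
    refine ⟨x, mem_commonNeighborFinset.2 fun v hv ↦ ?_, rfl⟩
    exact hT.isClique (mem_insert_of_mem hv) (mem_insert_self x S) (ne_of_mem_of_not_mem hv hx)

lemma card_cliquesOver_succ_mul (hr : #A ≤ r) :
    (#(cliquesOver G (r + 1) A) : ℝ) * (r - #A + 1 : ℕ) =
      ∑ S ∈ cliquesOver G r A, (#(commonNeighborFinset G S) : ℝ) := by
  calc (#(cliquesOver G (r + 1) A) : ℝ) * (r - #A + 1 : ℕ)
    _ = ∑ T ∈ cliquesOver G (r + 1) A, ∑ K ∈ powersetCard r T with A ⊆ K, 1 := by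
      rw [← nsmul_eq_mul, ← sum_const]
      refine sum_congr rfl fun T hT ↦ ?_
      obtain ⟨hT, hAT⟩ := mem_cliquesOver.1 hT
      have hrT : r ≤ #T := hT.card_eq ▸ r.le_succ
      rw [sum_const, nsmul_one, card_filter_powersetCard_subset_eq_choose_sub hAT hrT,
        hT.card_eq, Nat.add_sub_cancel_left, Nat.choose_one_right, Nat.sub_add_comm hr]
    _ = ∑ S ∈ cliquesOver G r A, (#(commonNeighborFinset G S) : ℝ) := by
      rw [← sum_cliquesOver_comm]
      refine sum_congr rfl fun S hS ↦ ?_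
      rw [sum_const, nsmul_one, card_cliquesOver_succ (mem_cliquesOver.1 hS).1]

lemma card_cliquesOver_mul_factorial_le (hr : #A ≤ r) :
    (#(cliquesOver G r A) : ℝ) * (r - #A)! ≤ (Fintype.card V : ℝ) ^ (r - #A) := by
  induction r, hr using Nat.le_induction with
  | base => simpa using card_le_card (cliquesOver_card_subset_singleton G)
  | succ r hr ih =>
    have hstep : ∑ S ∈ cliquesOver G r A, (#(commonNeighborFinset G S) : ℝ) ≤
        #(cliquesOver G r A) * Fintype.card V := by
      rw [← nsmul_eq_mul]
      exact sum_le_card_nsmul _ _ _ fun S _ ↦ mod_cast card_le_univ _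
    rw [Nat.sub_add_comm hr, Nat.factorial_succ, Nat.cast_mul, ← mul_assoc,
      card_cliquesOver_succ_mul G hr, pow_succ]
    calc (∑ S ∈ cliquesOver G r A, (#(commonNeighborFinset G S) : ℝ)) * (r - #A)!
      _ ≤ #(cliquesOver G r A) * Fintype.card V * (r - #A)! := by gcongr
      _ = #(cliquesOver G r A) * (r - #A)! * Fintype.card V := by ring
      _ ≤ Fintype.card V ^ (r - #A) * Fintype.card V := by gcongr

lemma le_card_commonNeighborFinset
    (hdeg : ∀ v, (1 - γ) * Fintype.card V ≤ G.degree v) (S : Finset V) :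
    (1 - #S * γ) * Fintype.card V ≤ #(commonNeighborFinset G S) := by
  induction S using Finset.induction_on with
  | empty => simp [commonNeighborFinset]
  | insert v S hv ih =>
    have hle : #(G.neighborFinset v ∪ commonNeighborFinset G S) ≤ Fintype.card V := card_le_univ _
    have hcard := card_union_add_card_inter (G.neighborFinset v) (commonNeighborFinset G S)
    rw [G.card_neighborFinset_eq_degree] at hcard
    rify at hle hcard
    have hinter : commonNeighborFinset G (insert v S) =
        G.neighborFinset v ∩ commonNeighborFinset G S := by
      ext x
      simp [mem_commonNeighborFinset]
    rw [hinter, card_insert_of_notMem hv]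
    push_cast
    linarith [hdeg v]

lemma le_card_cliquesOver_mul_factorial (hγ : 0 ≤ γ)
    (hdeg : ∀ v, (1 - γ) * Fintype.card V ≤ G.degree v) (hA : G.IsClique A) (hr : #A ≤ r) :
    (1 - r.choose 2 * γ) * (Fintype.card V : ℝ) ^ (r - #A) ≤
      #(cliquesOver G r A) * (r - #A)! := by
  induction r, hr using Nat.le_induction with
  | base =>
    have hmem : A ∈ cliquesOver G #A A := mem_cliquesOver.2 ⟨⟨hA, rfl⟩, subset_rfl⟩
    have hone : (1 : ℝ) ≤ #(cliquesOver G #A A) := mod_cast card_pos.2 ⟨A, hmem⟩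
    have : 0 ≤ (#A).choose 2 * γ := by positivity
    rw [Nat.sub_self, pow_zero, Nat.factorial_zero]
    push_cast
    linarith
  | succ r hr ih =>
    have hstep : (#(cliquesOver G r A) : ℝ) * ((1 - r * γ) * Fintype.card V) ≤
        ∑ S ∈ cliquesOver G r A, (#(commonNeighborFinset G S) : ℝ) := by
      rw [← nsmul_eq_mul]
      refine card_nsmul_le_sum _ _ _ fun S hS ↦ ?_
      simpa only [(mem_cliquesOver.1 hS).1.card_eq] using le_card_commonNeighborFinset G hdeg S
    have hchoose : ((r + 1).choose 2 : ℝ) = r.choose 2 + r := by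
      rw [Nat.choose_succ_succ' r 1, Nat.choose_one_right, Nat.cast_add, add_comm]
    have hle := card_cliquesOver_mul_factorial_le G hr
    rw [Nat.sub_add_comm hr, Nat.factorial_succ, Nat.cast_mul, ← mul_assoc,
      card_cliquesOver_succ_mul G hr, pow_succ, hchoose]
    set n := (Fintype.card V : ℝ)
    calc (1 - (r.choose 2 + r) * γ) * (n ^ (r - #A) * n)
      _ = (1 - r.choose 2 * γ) * n ^ (r - #A) * n - r * γ * n ^ (r - #A) * n := by ring
      _ ≤ #(cliquesOver G r A) * (r - #A)! * n -
          r * γ * (#(cliquesOver G r A) * (r - #A)!) * n := by gcongr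
      _ = #(cliquesOver G r A) * ((1 - r * γ) * n) * (r - #A)! := by ring
      _ ≤ _ := by gcongr

end CliquesOver

section FracCliqueDecomp

variable {V : Type*} [Fintype V] [DecidableEq V] (G : SimpleGraph V) [DecidableRel G.Adj]
  {K f : Finset V} {k : ℕ} {p δ : ℝ} {c : Finset V → ℝ}

/-- A fractional `K_k`-decomposition of `G` in which copies of `K_k` and edges are encoded by
their vertex sets, the `k`-cliques and the `2`-cliques of `G`. -/
structure IsFracCliqueDecomp (k : ℕ) (w : Finset V → ℝ) : Prop where
  nonneg {K : Finset V} : G.IsNClique k K → 0 ≤ w K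
  sum_eq_one {f : Finset V} : G.IsNClique 2 f → ∑ K ∈ cliquesOver G k f, w K = 1

/-- The uniform weight `p` on `k`-cliques, modified by `c e` times the gadget of `e` inside every
`(k + 2)`-clique containing the pair `e`. -/
noncomputable def correctedWeight (k : ℕ) (p : ℝ) (c : Finset V → ℝ) (K : Finset V) : ℝ :=
  p + ∑ S ∈ cliquesOver G (k + 2) K, ∑ e ∈ powersetCard 2 S, c e * pairGadget k e K

lemma sum_correctedWeight (hk : 2 ≤ k) (hf : #f = 2) (p : ℝ) (c : Finset V → ℝ) :
    ∑ K ∈ cliquesOver G k f, correctedWeight G k p c K =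
      #(cliquesOver G k f) * p + #(cliquesOver G (k + 2) f) * c f := by
  have hgadget : ∀ S ∈ cliquesOver G (k + 2) f,
      ∑ K ∈ powersetCard k S with f ⊆ K, ∑ e ∈ powersetCard 2 S, c e * pairGadget k e K = c f := by
    intro S hS
    obtain ⟨hS, hfS⟩ := mem_cliquesOver.1 hS
    rw [sum_comm]
    calc ∑ e ∈ powersetCard 2 S, ∑ K ∈ powersetCard k S with f ⊆ K, c e * pairGadget k e K
      _ = ∑ e ∈ powersetCard 2 S, if e = f then c e else 0 := sum_congr rfl fun e he ↦ by
        obtain ⟨heS, he⟩ := mem_powersetCard.1 he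
        rw [← mul_sum, sum_pairGadget hk hS.card_eq he hf heS hfS, mul_ite, mul_one, mul_zero]
      _ = c f := by rw [sum_ite_eq_of_mem' _ _ _ (mem_powersetCard.2 ⟨hfS, hf⟩)]
  simp only [correctedWeight, sum_add_distrib, sum_const, nsmul_eq_mul, sum_cliquesOver_comm]
  rw [sum_congr rfl hgadget, sum_const, nsmul_eq_mul]

variable {G} in
lemma correctedWeight_nonneg (hk : 2 ≤ k) (hK : G.IsNClique k K) (hδ : 0 ≤ δ)
    (hp : Fintype.card V ^ 2 * δ ≤ p) (hc : ∀ e, G.IsNClique 2 e → c e ∈ Set.Icc 0 δ) :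
    0 ≤ correctedWeight G k p c K := by
  have hgadgets : ∀ S ∈ cliquesOver G (k + 2) K,
      -(2 * δ) ≤ ∑ e ∈ powersetCard 2 S, c e * pairGadget k e K := by
    intro S hS
    obtain ⟨hS, hKS⟩ := mem_cliquesOver.1 hS
    refine neg_two_mul_le_sum_mul_pairGadget hk hKS hK.card_eq hS.card_eq hδ fun e he ↦ hc e ?_
    obtain ⟨heS, he⟩ := mem_powersetCard.1 he
    exact ⟨hS.isClique.subset (coe_subset.2 heS), he⟩
  have hcard : (#(cliquesOver G (k + 2) K) : ℝ) * 2 ≤ Fintype.card V ^ 2 := by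
    have h := card_cliquesOver_mul_factorial_le G (A := K) (r := k + 2)
      (hK.card_eq.trans_le (k.le_add_right 2))
    rwa [hK.card_eq, Nat.add_sub_cancel_left, Nat.factorial_two, Nat.cast_two] at h
  have hsum := card_nsmul_le_sum _ _ _ hgadgets
  rw [nsmul_eq_mul] at hsum
  rw [correctedWeight]
  linarith [mul_le_mul_of_nonneg_right hcard hδ]

lemma isFracCliqueDecomp_correctedWeight (hk : 2 ≤ k) (hδ : 0 ≤ δ)
    (hp : Fintype.card V ^ 2 * δ ≤ p)
    (hle : ∀ f, G.IsNClique 2 f → #(cliquesOver G k f) * p ≤ 1)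
    (hdeficit : ∀ f, G.IsNClique 2 f →
      1 - #(cliquesOver G k f) * p ≤ δ * #(cliquesOver G (k + 2) f)) :
    IsFracCliqueDecomp G k (correctedWeight G k p fun f ↦
      (1 - #(cliquesOver G k f) * p) / #(cliquesOver G (k + 2) f)) where
  nonneg hK := correctedWeight_nonneg hk hK hδ hp fun f hf ↦
    ⟨div_nonneg (sub_nonneg.2 (hle f hf)) (Nat.cast_nonneg _),
      div_le_of_le_mul₀ (Nat.cast_nonneg _) hδ (hdeficit f hf)⟩
  sum_eq_one {f} hf := by
    have h_imp (h0 : (#(cliquesOver G (k + 2) f) : ℝ) = 0) :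
        1 - #(cliquesOver G k f) * p = 0 := by
      have := hdeficit f hf
      rw [h0, mul_zero] at this
      exact this.antisymm (sub_nonneg.2 (hle f hf))
    rw [sum_correctedWeight G hk hf.card_eq, mul_div_cancel_of_imp' h_imp, add_sub_cancel]

lemma choose_two_mul_two_div_pow_four_le (hk : 2 ≤ k) :
    k * (k - 1) * (k.choose 2 * (2 / k ^ 4)) ≤ 1 - (k + 2).choose 2 * (2 / k ^ 4 : ℝ) := by
  have hk' : (2 : ℝ) ≤ k := mod_cast hk
  rw [le_sub_iff_add_le, Nat.cast_choose_two, Nat.cast_choose_two]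
  push_cast
  calc k * (k - 1) * (k * (k - 1) / 2 * (2 / k ^ 4)) +
        (k + 2) * (k + 2 - 1) / 2 * (2 / k ^ 4 : ℝ)
    _ = (k ^ 2 * (k - 1) ^ 2 + (k + 2) * (k + 1) : ℝ) / k ^ 4 := by ring
    _ ≤ 1 := by
      rw [div_le_one (by positivity)]
      nlinarith [mul_nonneg (mul_nonneg (sub_nonneg.2 hk') (sub_nonneg.2 hk')) (sub_nonneg.2 hk'),
        mul_nonneg (sub_nonneg.2 hk') (sub_nonneg.2 hk')]

variable {G} in
lemma one_sub_card_cliquesOver_mul_le (hk : 2 ≤ k)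
    (hdeg : ∀ v, (1 - 2 / k ^ 4) * (Fintype.card V : ℝ) ≤ G.degree v) (hf : G.IsNClique 2 f) :
    1 - #(cliquesOver G k f) * ((k - 2)! / (Fintype.card V : ℝ) ^ (k - 2)) ≤
      (k - 2)! / (Fintype.card V : ℝ) ^ k * #(cliquesOver G (k + 2) f) := by
  have hk' : (2 : ℝ) ≤ k := mod_cast hk
  have hn : 0 < (Fintype.card V : ℝ) := by
    obtain ⟨v, -⟩ : f.Nonempty := card_pos.1 (hf.card_eq ▸ two_pos)
    exact mod_cast Fintype.card_pos_iff.2 ⟨v⟩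
  have hγ : (0 : ℝ) ≤ 2 / k ^ 4 := by positivity
  have hN := le_card_cliquesOver_mul_factorial G hγ hdeg hf.isClique (hf.card_eq.trans_le hk)
  have hT := le_card_cliquesOver_mul_factorial G hγ hdeg hf.isClique
    (hf.card_eq.trans_le (Nat.le_add_left 2 k))
  rw [hf.card_eq] at hN hT
  rw [Nat.add_sub_cancel] at hT
  have hfactorial : (k ! : ℝ) = k * (k - 1) * (k - 2)! := by
    rw [← Nat.mul_factorial_pred (by lia), ← Nat.mul_factorial_pred (by lia), Nat.sub_sub]
    push_cast [Nat.cast_pred (two_pos.trans_le hk)]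
    ring
  set n := (Fintype.card V : ℝ)
  calc 1 - #(cliquesOver G k f) * ((k - 2)! / n ^ (k - 2))
    _ ≤ k.choose 2 * (2 / k ^ 4) := by
      rw [sub_le_comm, ← mul_div_assoc _ _ (n ^ _), le_div_iff₀ (by positivity)]
      exact hN
    _ ≤ (k - 2)! / n ^ k * #(cliquesOver G (k + 2) f) := by
      rw [div_mul_eq_mul_div, le_div_iff₀ (by positivity)]
      refine le_of_mul_le_mul_left ?_ (show (0 : ℝ) < k * (k - 1) by nlinarith)
      calc k * (k - 1) * (k.choose 2 * (2 / k ^ 4) * n ^ k)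
        _ = k * (k - 1) * (k.choose 2 * (2 / k ^ 4)) * n ^ k := by ring
        _ ≤ (1 - (k + 2).choose 2 * (2 / k ^ 4)) * n ^ k := by
          gcongr
          exact choose_two_mul_two_div_pow_four_le hk
        _ ≤ #(cliquesOver G (k + 2) f) * k ! := hT
        _ = k * (k - 1) * ((k - 2)! * #(cliquesOver G (k + 2) f)) := by
          rw [hfactorial]
          ring

lemma exists_isFracCliqueDecomp (hk : 2 ≤ k)
    (hdeg : ∀ v, (1 - 2 / k ^ 4) * (Fintype.card V : ℝ) ≤ G.degree v) :
    ∃ w, IsFracCliqueDecomp G k w := by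
  refine ⟨_, isFracCliqueDecomp_correctedWeight G
    (p := (k - 2)! / (Fintype.card V : ℝ) ^ (k - 2)) (δ := (k - 2)! / (Fintype.card V : ℝ) ^ k)
    hk (by positivity) ?_ (fun f hf ↦ ?_)
    (fun f hf ↦ one_sub_card_cliquesOver_mul_le hk hdeg hf)⟩
  · obtain ⟨m, rfl⟩ := Nat.exists_eq_add_of_le' hk
    rw [Nat.add_sub_cancel, pow_add, ← div_div, mul_div_left_comm]
    exact mul_le_of_le_one_right (by positivity) (div_self_le_one _)
  · have h := card_cliquesOver_mul_factorial_le G (hf.card_eq.trans_le hk)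
    rw [hf.card_eq] at h
    rw [mul_div_assoc']
    exact div_le_one_of_le₀ h (by positivity)

end FracCliqueDecomp

section Copies

open SimpleGraph

variable {V β : Type*} {G : SimpleGraph V} {c : G.Subgraph} {K : Finset V} {k : ℕ} {a b : V}

lemma adj_of_isCopy_top (hc : c.IsCopy (⊤ : SimpleGraph β)) (ha : a ∈ c.verts) (hb : b ∈ c.verts)
    (hab : a ≠ b) : c.Adj a b := by
  obtain ⟨i⟩ := hc
  exact i.map_adj_iff.1 (i.injective.ne (Subtype.coe_ne_coe.1 hab : (⟨a, ha⟩ : c.verts) ≠ ⟨b, hb⟩))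

lemma isInduced_of_isCopy_top (hc : c.IsCopy (⊤ : SimpleGraph β)) : c.IsInduced :=
  fun _ ha _ hb hab ↦ adj_of_isCopy_top hc ha hb hab.ne

lemma isNClique_verts_of_isCopy_top [Fintype c.verts] (hc : c.IsCopy (⊤ : SimpleGraph (Fin k))) :
    G.IsNClique k c.verts.toFinset := by
  refine ⟨fun a ha b hb hab ↦ ?_, ?_⟩
  · rw [Set.coe_toFinset] at ha hb
    exact (adj_of_isCopy_top hc ha hb hab).adj_sub
  · obtain ⟨i⟩ := hc
    rw [Set.toFinset_card, Fintype.card_congr i.toEquiv, Fintype.card_fin]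

lemma isCopy_top_induce (hK : G.IsNClique k K) :
    ((⊤ : G.Subgraph).induce K).IsCopy (⊤ : SimpleGraph (Fin k)) := by
  rw [Subgraph.IsCopy, ← induce_eq_coe_induce_top, induce_eq_top.2 hK.isClique]
  exact ⟨Iso.completeGraph (equivFinOfCardEq hK.card_eq)⟩

variable [Fintype V] [DecidableEq V] [DecidableRel G.Adj]

lemma bijOn_induce_cliquesOver_pair (hab : G.Adj a b) :
    Set.BijOn (fun K : Finset V ↦ (⊤ : G.Subgraph).induce K) (cliquesOver G k {a, b})
      {c | c.IsCopy (⊤ : SimpleGraph (Fin k)) ∧ s(a, b) ∈ c.edgeSet} := by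
  refine ⟨fun K hK ↦ ?_, fun K _ L _ hKL ↦ coe_injective (congrArg Subgraph.verts hKL),
    fun c ⟨hc, habc⟩ ↦ ?_⟩
  · obtain ⟨hK, habK⟩ := mem_cliquesOver.1 hK
    rw [insert_subset_iff, singleton_subset_iff] at habK
    exact ⟨isCopy_top_induce hK, habK.1, habK.2, hab⟩
  · classical
    refine ⟨c.verts.toFinset, mem_cliquesOver.2 ⟨isNClique_verts_of_isCopy_top hc, ?_⟩, ?_⟩
    · rw [insert_subset_iff, singleton_subset_iff, Set.mem_toFinset, Set.mem_toFinset]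
      exact ⟨Subgraph.Adj.fst_mem habc, Subgraph.Adj.snd_mem habc⟩
    · simp only [Set.coe_toFinset]
      exact (isInduced_of_isCopy_top hc).induce_top_verts

open scoped Classical in
lemma IsFracCliqueDecomp.exists_isFracDecomp {w : Finset V → ℝ} (hw : IsFracCliqueDecomp G k w) :
    ∃ ψ, IsFracDecomp G (⊤ : SimpleGraph (Fin k)) ψ := by
  refine ⟨fun c ↦ if c.IsCopy (⊤ : SimpleGraph (Fin k)) then w c.verts.toFinset else 0,
    fun c ↦ ?_, fun c hc ↦ if_neg hc, fun e he ↦ ?_⟩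
  · dsimp only
    split_ifs with hc
    · exact hw.nonneg (isNClique_verts_of_isCopy_top hc)
    · exact le_rfl
  · induction e with
    | h a b =>
      have hpair : G.IsNClique 2 {a, b} := by
        refine ⟨?_, card_pair (G.mem_edgeSet.1 he).ne⟩
        rw [coe_pair, isClique_pair]
        exact fun _ ↦ he
      rw [← hw.sum_eq_one hpair, ← finsum_mem_coe_finset]
      refine (finsum_mem_eq_of_bijOn _ (bijOn_induce_cliquesOver_pair he) fun K hK ↦ ?_).symm
      simp [isCopy_top_induce (mem_cliquesOver.1 hK).1]

end Copies

theorem frac_kk_decomposition_of_min_degree_general {V : Type*} [Fintype V] (G : SimpleGraph V)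
    {k : ℕ} (hk : 2 ≤ k)
    (hdeg : ∀ v, (Fintype.card V : ℝ) * (1 - 2 / (k : ℝ) ^ 4) ≤ ((G.neighborSet v).ncard : ℝ)) :
    ∃ ψ : G.Subgraph → ℝ, IsFracDecomp G (⊤ : SimpleGraph (Fin k)) ψ := by
  classical
  obtain ⟨w, hw⟩ := exists_isFracCliqueDecomp G hk fun v ↦ by
    rw [mul_comm, ← G.card_neighborSet_eq_degree, Set.fintypeCard_eq_ncard]
    exact hdeg v
  exact hw.exists_isFracDecomp

/-- For every integer `k ≥ 3` and every `ε > 0` there exists `n₀` such that every graph `G` on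
`n ≥ n₀` vertices with minimum degree at least `n·(1 - 1/(9k^10) + ε)` has a fractional
`K_k`-decomposition. -/
theorem frac_kk_decomposition_of_min_degree (k : ℕ) (hk : 3 ≤ k) (ε : ℝ) (hε : 0 < ε) :
    ∃ n₀ : ℕ, ∀ n : ℕ, n₀ ≤ n → ∀ G : SimpleGraph (Fin n),
      (∀ v, (n : ℝ) * (1 - 1 / (9 * (k : ℝ) ^ 10) + ε) ≤ ((G.neighborSet v).ncard : ℝ)) →
      ∃ ψ : G.Subgraph → ℝ, IsFracDecomp G (⊤ : SimpleGraph (Fin k)) ψ := by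
  refine ⟨0, fun n _ G hG ↦ frac_kk_decomposition_of_min_degree_general G (by lia) fun v ↦ ?_⟩
  have hk1 : (1 : ℝ) ≤ k := mod_cast (by lia : 1 ≤ k)
  have hle : 1 / (9 * (k : ℝ) ^ 10) ≤ 2 / k ^ 4 :=
    div_le_div₀ zero_le_two one_le_two (by positivity)
      ((pow_le_pow_right₀ hk1 (by norm_num)).trans
        (le_mul_of_one_le_left (by positivity) (by norm_num)))
  rw [Fintype.card_fin]
  refine le_trans ?_ (hG v)
  gcongr
  linarith
end

section
/- For every integer k ≥ 3, every graph H with k vertices and at least one edge, and every ε > 0, there exists n₀ such that every graph G on n ≥ n₀ vertices with minimum degree at least n·(1 - 1/(9k¹⁰) + ε) has a fractional H-decomposition. -/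
/-!
Averaging over all relabellings of its vertices turns `H` into a fractional `H`-decomposition of
`K_k`, so it suffices to find nonnegative weights on the `k`-cliques of `G` that give every edge
total weight `1`. In a graph of large minimum degree every edge lies in almost
`n ^ (k - 2) / (k - 2)!` cliques of order `k`, so the constant weight `(k - 2)! / n ^ (k - 2)`
leaves only a small deficit at each edge. Inside a `(k + 2)`-clique there is a signed weighting of
the `k`-cliques that adds `1` to a prescribed edge and `0` to all the others. The deficit at an edge
is repaired by such weightings, spread evenly over the many `(k + 2)`-cliques containing the edge,
so thinly that all weights stay nonnegative.
-/

open Finset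

section Family

variable {ι κ α β γ : Type*} {G : SimpleGraph α} {K : SimpleGraph γ} {H : SimpleGraph β}

open Classical in
/-- A fractional `H`-decomposition of `G` presented by weights on a finite family of copies instead
of weights on subgraphs. Several indices may give the same subgraph, whose weight is then the sum
of theirs. -/
structure IsFracDecompFamily [Fintype ι] (φ : ι → SimpleGraph.Copy H G) (w : ι → ℝ) : Prop where
  nonneg : ∀ i, 0 ≤ w i
  sum_eq_one : ∀ ⦃x y⦄, G.Adj x y → ∑ i with (φ i).toSubgraph.Adj x y, w i = 1

theorem IsFracDecompFamily.exists_isFracDecomp [Finite α] [Fintype ι]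
    {φ : ι → SimpleGraph.Copy H G} {w : ι → ℝ} (h : IsFracDecompFamily φ w) :
    ∃ ψ : G.Subgraph → ℝ, IsFracDecomp G H ψ := by
  classical
  have hcopy (i : ι) : (φ i).toSubgraph.IsCopy H := ⟨(φ i).isoToSubgraph.symm⟩
  have : Fintype G.Subgraph := Fintype.ofFinite _
  refine ⟨fun c => ∑ i with (φ i).toSubgraph = c, w i, fun c => sum_nonneg fun i _ => h.nonneg i,
    fun c hc => ?_, fun e => ?_⟩
  · have hne (i : ι) : (φ i).toSubgraph ≠ c := fun hi => hc (hi ▸ hcopy i)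
    simp only [hne, filter_false, sum_empty]
  · induction e with | _ x y =>
    intro he
    rw [finsum_mem_eq_toFinset_sum, ← h.sum_eq_one he]
    simp only [sum_filter]
    rw [sum_comm]
    simp only [sum_ite_eq, Set.mem_toFinset, Set.mem_ofPred_eq, hcopy, true_and,
      SimpleGraph.Subgraph.mem_edgeSet]

theorem comp_toSubgraph_adj_iff (φ : SimpleGraph.Copy K G) (χ : SimpleGraph.Copy H K) {x y : α} :
    (φ.comp χ).toSubgraph.Adj x y ↔ ∃ a b, χ.toSubgraph.Adj a b ∧ φ a = x ∧ φ b = y := by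
  constructor
  · rintro ⟨a, b, hab, rfl, rfl⟩
    exact ⟨χ a, χ b, ⟨a, b, hab, rfl, rfl⟩, rfl, rfl⟩
  · rintro ⟨_, _, ⟨a, b, hab, rfl, rfl⟩, rfl, rfl⟩
    exact ⟨a, b, hab, rfl, rfl⟩

theorem IsFracDecompFamily.comp [Fintype ι] [Fintype κ] {φ : ι → SimpleGraph.Copy K G}
    {w : ι → ℝ} (hφ : IsFracDecompFamily φ w) {χ : κ → SimpleGraph.Copy H K} {u : κ → ℝ}
    (hχ : IsFracDecompFamily χ u) :
    IsFracDecompFamily (fun p : ι × κ => (φ p.1).comp (χ p.2)) (fun p => w p.1 * u p.2) where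
  nonneg p := mul_nonneg (hφ.nonneg p.1) (hχ.nonneg p.2)
  sum_eq_one x y hxy := by
    classical
    rw [sum_filter, Fintype.sum_prod_type, ← hφ.sum_eq_one hxy, sum_filter]
    refine sum_congr rfl fun i _ => ?_
    simp only [comp_toSubgraph_adj_iff]
    split_ifs with hi
    · obtain ⟨a, b, hab, rfl, rfl⟩ := hi
      have hiff (j : κ) : (∃ a' b', (χ j).toSubgraph.Adj a' b' ∧ φ i a' = φ i a ∧
          φ i b' = φ i b) ↔ (χ j).toSubgraph.Adj a b := by
        have hinj : Function.Injective (φ i) := (φ i).injective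
        simp [hinj.eq_iff]
      simp only [SimpleGraph.Copy.toHom_apply, hiff]
      rw [← sum_filter, ← mul_sum, hχ.sum_eq_one hab, mul_one]
    · refine sum_eq_zero fun j _ => if_neg ?_
      rintro ⟨a, b, hab, rfl, rfl⟩
      exact hi ⟨a, b, hab.adj_sub, rfl, rfl⟩

/-- The copy of `H` in the complete graph on its own vertex set that moves the vertices by `σ`; with
uniform weights these copies form a fractional decomposition. -/
def permCopy (H : SimpleGraph β) (σ : Equiv.Perm β) :
    SimpleGraph.Copy H (⊤ : SimpleGraph β) where
  toHom := ⟨σ, fun hab => σ.injective.ne hab.ne⟩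
  injective' := σ.injective

theorem permCopy_toSubgraph_adj_iff (H : SimpleGraph β) (σ : Equiv.Perm β) {x y : β} :
    (permCopy H σ).toSubgraph.Adj x y ↔ H.Adj (σ.symm x) (σ.symm y) := by
  constructor
  · rintro ⟨a, b, hab, rfl, rfl⟩
    simpa [permCopy] using hab
  · intro h
    exact ⟨_, _, h, σ.apply_symm_apply x, σ.apply_symm_apply y⟩

open Classical in
theorem card_perm_symm_adj_eq [Fintype β] (H : SimpleGraph β) {a b x y : β} (hab : a ≠ b)
    (hxy : x ≠ y) :
    #{σ : Equiv.Perm β | H.Adj (σ.symm x) (σ.symm y)} =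
      #{σ : Equiv.Perm β | H.Adj (σ.symm a) (σ.symm b)} := by
  obtain ⟨τ, rfl, rfl⟩ :=
    MulAction.is_two_pretransitive_iff.mp (Equiv.Perm.isMultiplyPretransitive β 2) hab hxy
  exact (card_equiv (Equiv.mulLeft τ) fun σ => by simp [Equiv.Perm.mul_def]).symm

open Classical in
theorem isFracDecompFamily_permCopy [Fintype β] {a b : β} (hab : H.Adj a b) :
    IsFracDecompFamily (permCopy H)
      fun _ => (#{σ : Equiv.Perm β | H.Adj (σ.symm a) (σ.symm b)} : ℝ)⁻¹ where
  nonneg _ := by positivity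
  sum_eq_one x y hxy := by
    have hpos : #{σ : Equiv.Perm β | H.Adj (σ.symm a) (σ.symm b)} ≠ 0 :=
      card_ne_zero_of_mem (mem_filter.mpr ⟨mem_univ 1, hab⟩)
    simp only [permCopy_toSubgraph_adj_iff, sum_const, nsmul_eq_mul,
      card_perm_symm_adj_eq H hab.ne hxy.ne]
    exact mul_inv_cancel₀ (Nat.cast_ne_zero.mpr hpos)

/-- The copy of the complete graph on `β` given by a labelling `f` of the clique `S` of `G`. -/
def cliqueCopy {S : Finset α} (hS : G.IsClique S) (f : β ≃ S) :
    SimpleGraph.Copy (⊤ : SimpleGraph β) G where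
  toHom := ⟨fun b => f b, fun hab => hS (f _).2 (f _).2 (by simpa using hab)⟩
  injective' := Subtype.val_injective.comp f.injective

theorem cliqueCopy_toSubgraph_adj_iff [DecidableEq α] {S : Finset α} (hS : G.IsClique S)
    (f : β ≃ S) {x y : α} (hxy : x ≠ y) : (cliqueCopy hS f).toSubgraph.Adj x y ↔ {x, y} ⊆ S := by
  rw [insert_subset_iff, singleton_subset_iff]
  constructor
  · rintro ⟨a, b, -, rfl, rfl⟩
    exact ⟨(f a).2, (f b).2⟩
  · rintro ⟨hx, hy⟩
    refine ⟨f.symm ⟨x, hx⟩, f.symm ⟨y, hy⟩, by simpa using hxy, ?_, ?_⟩ <;> simp [cliqueCopy]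

end Family

section CliquesAbove

variable {V : Type*} [Fintype V] [DecidableEq V] (G : SimpleGraph V) [DecidableRel G.Adj]

/-- The `m`-cliques of `G` that contain the vertex set `S`. -/
def cliquesAbove (m : ℕ) (S : Finset V) : Finset (Finset V) := {T ∈ G.cliqueFinset m | S ⊆ T}

variable {G}

theorem mem_cliquesAbove_iff {m : ℕ} {S T : Finset V} :
    T ∈ cliquesAbove G m S ↔ G.IsNClique m T ∧ S ⊆ T := by
  rw [cliquesAbove, mem_filter, SimpleGraph.mem_cliqueFinset_iff]

theorem sum_cliquesAbove_sdiff {M : Type*} [AddCommMonoid M] (a b : ℕ) (f : Finset V)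
    (F : Finset V → Finset V → M) :
    ∑ S ∈ cliquesAbove G a f, ∑ Q ∈ cliquesAbove G (a + b) S, F Q (Q \ S) =
      ∑ Q ∈ cliquesAbove G (a + b) f, ∑ p ∈ (Q \ f).powersetCard b, F Q p := by
  rw [sum_sigma', sum_sigma']
  refine sum_bij' (fun x _ => ⟨x.2, x.2 \ x.1⟩) (fun x _ => ⟨x.1 \ x.2, x.1⟩) ?_ ?_ ?_ ?_ ?_
  all_goals
    rintro ⟨A, B⟩ hx
    simp only [mem_sigma, mem_cliquesAbove_iff, mem_powersetCard, subset_sdiff] at hx ⊢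
  · obtain ⟨⟨hA, hfA⟩, hB, hAB⟩ := hx
    refine ⟨⟨hB, hfA.trans hAB⟩, ⟨sdiff_subset, disjoint_of_subset_right hfA sdiff_disjoint⟩, ?_⟩
    rw [card_sdiff_of_subset hAB, hA.card_eq, hB.card_eq, Nat.add_sub_cancel_left]
  · obtain ⟨⟨hA, hfA⟩, ⟨hBA, hBf⟩, hB⟩ := hx
    refine ⟨⟨⟨hA.isClique.subset (coe_subset.mpr sdiff_subset), ?_⟩, hfA, hBf.symm⟩,
      hA, sdiff_subset⟩
    rw [card_sdiff_of_subset hBA, hA.card_eq, hB, Nat.add_sub_cancel]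
  · rw [Finset.sdiff_sdiff_eq_self hx.2.2]
  · rw [Finset.sdiff_sdiff_eq_self hx.2.1.1]

theorem sum_card_cliquesAbove_succ (m : ℕ) (f : Finset V) :
    ∑ S ∈ cliquesAbove G (#f + m) f, #(cliquesAbove G (#f + m + 1) S) =
      #(cliquesAbove G (#f + m + 1) f) * (m + 1) := by
  have hcount := sum_cliquesAbove_sdiff (G := G) (#f + m) 1 f fun _ _ => 1
  simp only [sum_const, smul_eq_mul, mul_one, card_powersetCard, Nat.choose_one_right] at hcount
  rw [hcount]
  refine sum_const_nat fun Q hQ => ?_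
  obtain ⟨hQ, hfQ⟩ := mem_cliquesAbove_iff.mp hQ
  rw [card_sdiff_of_subset hfQ, hQ.card_eq, add_assoc, Nat.add_sub_cancel_left]

theorem card_cliquesAbove_succ {m : ℕ} {S : Finset V} (hS : G.IsNClique m S) :
    #(cliquesAbove G (m + 1) S) = #{v | ∀ u ∈ S, G.Adj u v} := by
  symm
  refine card_bij (fun v _ => insert v S) (fun v hv => ?_) (fun v hv w hw hvw => ?_)
    fun T hT => ?_
  · rw [mem_filter_univ] at hv
    exact mem_cliquesAbove_iff.mpr ⟨hS.insert fun u hu => (hv u hu).symm, subset_insert _ _⟩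
  · rw [mem_filter_univ] at hv hw
    exact (insert_inj fun hvS => G.irrefl (hv v hvS)).mp hvw
  · obtain ⟨hT, hST⟩ := mem_cliquesAbove_iff.mp hT
    obtain ⟨v, hvS, rfl⟩ := exists_eq_insert_iff.mpr
      ⟨hST, by rw [hS.card_eq, hT.card_eq]⟩
    refine ⟨v, (mem_filter_univ v).mpr fun u hu => ?_, rfl⟩
    exact hT.isClique (mem_insert_of_mem hu) (mem_insert_self v S) (ne_of_mem_of_not_mem hu hvS)

theorem card_filter_not_adj_le {δ : ℝ} (hdeg : ∀ v, (1 - δ) * Fintype.card V ≤ G.degree v)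
    (S : Finset V) :
    (#{v | ¬ ∀ u ∈ S, G.Adj u v} : ℝ) ≤ #S * (δ * Fintype.card V) := by
  have hsubset : ({v | ¬ ∀ u ∈ S, G.Adj u v} : Finset V) ⊆
      S.biUnion fun u => (G.neighborFinset u)ᶜ := by
    intro v
    simp
  have hcard (u : V) : (#(G.neighborFinset u)ᶜ : ℝ) ≤ δ * Fintype.card V := by
    rw [card_compl, Nat.cast_sub (card_le_univ _), G.card_neighborFinset_eq_degree]
    linarith [hdeg u]
  calc (#{v | ¬ ∀ u ∈ S, G.Adj u v} : ℝ)
      ≤ ∑ u ∈ S, (#(G.neighborFinset u)ᶜ : ℝ) := by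
        exact_mod_cast (card_le_card hsubset).trans card_biUnion_le
    _ ≤ #S * (δ * Fintype.card V) := by
        rw [← nsmul_eq_mul]
        exact sum_le_card_nsmul _ _ _ fun u _ => hcard u

theorem le_card_cliquesAbove_succ {δ : ℝ}
    (hdeg : ∀ v, (1 - δ) * Fintype.card V ≤ G.degree v) {m : ℕ} {S : Finset V}
    (hS : G.IsNClique m S) :
    (1 - m * δ) * Fintype.card V ≤ #(cliquesAbove G (m + 1) S) := by
  have hsplit : (#{v | ∀ u ∈ S, G.Adj u v} + #{v | ¬ ∀ u ∈ S, G.Adj u v} : ℝ) =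
      Fintype.card V := by
    exact_mod_cast card_filter_add_card_filter_not (s := univ) fun v => ∀ u ∈ S, G.Adj u v
  have hbad := card_filter_not_adj_le hdeg S
  rw [hS.card_eq] at hbad
  rw [card_cliquesAbove_succ hS]
  linarith

theorem card_cliquesAbove_succ_le {m : ℕ} {S : Finset V} (hS : G.IsNClique m S) :
    #(cliquesAbove G (m + 1) S) ≤ Fintype.card V := by
  rw [card_cliquesAbove_succ hS]
  exact card_le_univ _

theorem cliquesAbove_card_of_isClique {f : Finset V} (hf : G.IsClique f) :
    cliquesAbove G #f f = {f} := by
  ext T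
  rw [mem_cliquesAbove_iff, mem_singleton]
  constructor
  · rintro ⟨hT, hfT⟩
    exact (eq_of_subset_of_card_le hfT hT.card_eq.le).symm
  · rintro rfl
    exact ⟨⟨hf, rfl⟩, Subset.rfl⟩

theorem factorial_mul_card_cliquesAbove_le {f : Finset V} (hf : G.IsClique f) (m : ℕ) :
    m.factorial * #(cliquesAbove G (#f + m) f) ≤ Fintype.card V ^ m := by
  induction m with
  | zero => simp [cliquesAbove_card_of_isClique hf]
  | succ m ih =>
    have hstep : #(cliquesAbove G (#f + m + 1) f) * (m + 1) ≤
        #(cliquesAbove G (#f + m) f) * Fintype.card V := by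
      rw [← sum_card_cliquesAbove_succ]
      exact sum_le_card_nsmul _ _ _ fun S hS =>
        card_cliquesAbove_succ_le (mem_cliquesAbove_iff.mp hS).1
    calc (m + 1).factorial * #(cliquesAbove G (#f + m + 1) f)
        = m.factorial * (#(cliquesAbove G (#f + m + 1) f) * (m + 1)) := by
          rw [Nat.factorial_succ]; ring
      _ ≤ m.factorial * (#(cliquesAbove G (#f + m) f) * Fintype.card V) := by gcongr
      _ = m.factorial * #(cliquesAbove G (#f + m) f) * Fintype.card V := by ring
      _ ≤ Fintype.card V ^ m * Fintype.card V := by gcongr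
      _ = Fintype.card V ^ (m + 1) := (pow_succ _ _).symm

theorem le_factorial_mul_card_cliquesAbove {δ : ℝ} (hδ : 0 ≤ δ)
    (hdeg : ∀ v, (1 - δ) * Fintype.card V ≤ G.degree v) {f : Finset V} (hf : G.IsClique f)
    (m : ℕ) :
    (1 - (#f + m).choose 2 * δ) * (Fintype.card V : ℝ) ^ m ≤
      m.factorial * #(cliquesAbove G (#f + m) f) := by
  induction m with
  | zero =>
    have : 0 ≤ (#f).choose 2 * δ := by positivity
    simpa [cliquesAbove_card_of_isClique hf] using this
  | succ m ih =>
    have hupper : (m.factorial * #(cliquesAbove G (#f + m) f) : ℝ) ≤ (Fintype.card V : ℝ) ^ m := by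
      exact_mod_cast factorial_mul_card_cliquesAbove_le hf m
    set n : ℝ := (Fintype.card V : ℝ)
    set j := #f + m
    have hstep : #(cliquesAbove G j f) * ((1 - j * δ) * n) ≤
        (#(cliquesAbove G (j + 1) f) * (m + 1) : ℝ) := by
      rw [← Nat.cast_succ, ← Nat.cast_mul, ← sum_card_cliquesAbove_succ, Nat.cast_sum,
        ← nsmul_eq_mul]
      exact card_nsmul_le_sum _ _ _ fun S hS =>
        le_card_cliquesAbove_succ hdeg (mem_cliquesAbove_iff.mp hS).1
    have hpascal : ((j + 1).choose 2 : ℝ) = j + j.choose 2 := by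
      rw [Nat.choose_succ_succ' j 1, Nat.choose_one_right, Nat.cast_add]
    calc (1 - (j + 1).choose 2 * δ) * n ^ (m + 1)
        = (1 - j.choose 2 * δ) * n ^ m * n - j * δ * n * n ^ m := by rw [hpascal]; ring
      _ ≤ m.factorial * #(cliquesAbove G j f) * n -
            j * δ * n * (m.factorial * #(cliquesAbove G j f)) := by gcongr
      _ = m.factorial * (#(cliquesAbove G j f) * ((1 - j * δ) * n)) := by ring
      _ ≤ m.factorial * (#(cliquesAbove G (j + 1) f) * (m + 1)) := by gcongr
      _ = (m + 1).factorial * #(cliquesAbove G (j + 1) f) := by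
          rw [Nat.factorial_succ]; push_cast; ring

end CliquesAbove

section EdgeGadget

variable {V : Type*} [DecidableEq V]

/-- The edge gadget: in a `(k + 2)`-clique `Q` with an edge `e`, giving each `k`-clique `S ⊆ Q` the
weight `edgeGadget k e (Q \ S)` yields total weight `1` on `e` and `0` on every other edge of `Q`.
The clique `S` is encoded by its complementary pair `p = Q \ S`, and the coefficients, which depend
only on `#(e ∩ p)`, are the ones forced by this property. -/
noncomputable def edgeGadget (k : ℕ) (e p : Finset V) : ℝ :=
  2 / (k * (k - 1)) - #(e ∩ p) / (k - 1) + if p = e then 1 else 0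

theorem sum_card_inter_powersetCard (e A : Finset V) (r : ℕ) :
    ∑ p ∈ A.powersetCard (r + 1), #(e ∩ p) = #(e ∩ A) * (#A - 1).choose r := by
  have hcount : ∀ v ∈ e ∩ A, #{p ∈ A.powersetCard (r + 1) | v ∈ p} = (#A - 1).choose r := by
    intro v hv
    have hvA : {v} ⊆ A := singleton_subset_iff.mpr (mem_of_mem_inter_right hv)
    simpa using card_filter_powersetCard_subset {v} A (r + 1) hvA (by simp)
  rw [← sum_card_inter hcount]
  refine sum_congr rfl fun p hp => ?_
  rw [inter_assoc, inter_eq_right.mpr (mem_powersetCard.mp hp).1]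

theorem sum_edgeGadget {k : ℕ} (hk : 2 ≤ k) {e A : Finset V} (he : #e = 2) (hA : #A = k) :
    ∑ p ∈ A.powersetCard 2, edgeGadget k e p = if Disjoint e A then 1 else 0 := by
  have hk0 : (k : ℝ) ≠ 0 := by positivity
  have hk1 : (k : ℝ) - 1 ≠ 0 := sub_ne_zero.mpr (by exact_mod_cast (by lia : k ≠ 1))
  have hinter : ∑ p ∈ A.powersetCard 2, (#(e ∩ p) : ℝ) = #(e ∩ A) * (k - 1) := by
    have := sum_card_inter_powersetCard e A 1
    rw [hA, Nat.choose_one_right] at this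
    rw [← Nat.cast_pred (by lia : 0 < k)]
    exact_mod_cast this
  have hself : ∑ p ∈ A.powersetCard 2, (if p = e then (1 : ℝ) else 0) =
      if #(e ∩ A) = 2 then 1 else 0 := by
    rw [sum_ite_eq']
    simp only [mem_powersetCard, he, and_true, ← inter_eq_left]
    refine if_congr ⟨fun h => (congrArg card h).trans he, fun h => ?_⟩ rfl rfl
    exact eq_of_subset_of_card_le inter_subset_left (he.trans h.symm).le
  have hle : #(e ∩ A) ≤ 2 := he ▸ card_le_card inter_subset_left
  simp only [edgeGadget]
  rw [sum_add_distrib, sum_sub_distrib, hself, sum_const, card_powersetCard, hA, nsmul_eq_mul,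
    Nat.cast_choose_two, ← sum_div, hinter, mul_div_cancel_right₀ _ hk1,
    div_mul_div_cancel₀' (mul_ne_zero hk0 hk1)]
  simp only [disjoint_iff_inter_eq_empty, ← card_eq_zero]
  interval_cases #(e ∩ A) <;> norm_num

theorem neg_card_inter_div_le_edgeGadget {k : ℕ} (hk : 2 ≤ k) {e p : Finset V} (he : #e = 2) :
    -(#(e ∩ p) / k : ℝ) ≤ edgeGadget k e p := by
  have hk1 : (0 : ℝ) < k - 1 := sub_pos.mpr (by exact_mod_cast hk)
  have hle : (#(e ∩ p) : ℝ) ≤ 2 := by exact_mod_cast he ▸ card_le_card inter_subset_left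
  calc -(#(e ∩ p) / k : ℝ)
      ≤ -(#(e ∩ p) / k : ℝ) + (2 - #(e ∩ p)) / (k * (k - 1)) :=
        le_add_of_nonneg_right (div_nonneg (sub_nonneg.mpr hle) (by positivity))
    _ = 2 / (k * (k - 1)) - #(e ∩ p) / (k - 1) := by field_simp; ring
    _ ≤ edgeGadget k e p := le_add_of_nonneg_right (by split_ifs <;> norm_num)

theorem neg_le_sum_mul_edgeGadget {k : ℕ} (hk : 2 ≤ k) {Q p : Finset V} (hQ : #Q = k + 2)
    (hpQ : p ∈ Q.powersetCard 2) {c : Finset V → ℝ} {B : ℝ}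
    (hc : ∀ e ∈ Q.powersetCard 2, 0 ≤ c e ∧ c e ≤ B) :
    -(2 * (k + 1) / k * B) ≤ ∑ e ∈ Q.powersetCard 2, c e * edgeGadget k e p := by
  obtain ⟨hpQ, hp⟩ := mem_powersetCard.mp hpQ
  have hinter : ∑ e ∈ Q.powersetCard 2, (#(e ∩ p) : ℝ) = 2 * (k + 1) := by
    have := sum_card_inter_powersetCard p Q 1
    rw [inter_eq_left.mpr hpQ, hp, hQ, Nat.choose_one_right] at this
    simp only [inter_comm p] at this
    exact_mod_cast this
  calc -(2 * (k + 1) / k * B) = ∑ e ∈ Q.powersetCard 2, -(B * (#(e ∩ p) / k)) := by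
        rw [sum_neg_distrib, ← mul_sum, ← sum_div, hinter, mul_comm B]
    _ ≤ ∑ e ∈ Q.powersetCard 2, c e * edgeGadget k e p := sum_le_sum fun e he => ?_
  calc -(B * (#(e ∩ p) / k)) ≤ c e * -(#(e ∩ p) / k : ℝ) := by
        rw [mul_neg, neg_le_neg_iff]
        exact mul_le_mul_of_nonneg_right (hc e he).2 (by positivity)
    _ ≤ c e * edgeGadget k e p := mul_le_mul_of_nonneg_left
        (neg_card_inter_div_le_edgeGadget hk (mem_powersetCard.mp he).2) (hc e he).1

end EdgeGadget

section CliqueWeight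

variable {V : Type*} [Fintype V] [DecidableEq V] (G : SimpleGraph V) [DecidableRel G.Adj]

/-- The constant weight `t` on the `k`-cliques `S` of `G`, corrected by `c e` times the edge gadget
of `e` in `Q` for every `(k + 2)`-clique `Q` and every edge `e` of `Q`. -/
noncomputable def cliqueWeight (k : ℕ) (t : ℝ) (c : Finset V → ℝ) (S : Finset V) : ℝ :=
  t + ∑ Q ∈ cliquesAbove G (k + 2) S, ∑ e ∈ Q.powersetCard 2, c e * edgeGadget k e (Q \ S)

variable {G}

theorem sum_cliqueWeight {k : ℕ} (hk : 2 ≤ k) (t : ℝ) (c : Finset V → ℝ) {f : Finset V}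
    (hf : #f = 2) :
    ∑ S ∈ cliquesAbove G k f, cliqueWeight G k t c S =
      #(cliquesAbove G k f) * t + #(cliquesAbove G (k + 2) f) * c f := by
  simp only [cliqueWeight]
  rw [sum_add_distrib, sum_const, nsmul_eq_mul,
    sum_cliquesAbove_sdiff k 2 f fun Q p => ∑ e ∈ Q.powersetCard 2, c e * edgeGadget k e p,
    ← nsmul_eq_mul (#(cliquesAbove G (k + 2) f))]
  congr 1
  refine sum_eq_card_nsmul fun Q hQ => ?_
  obtain ⟨hQ, hfQ⟩ := mem_cliquesAbove_iff.mp hQ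
  have hcard : #(Q \ f) = k := by
    rw [card_sdiff_of_subset hfQ, hQ.card_eq, hf, Nat.add_sub_cancel]
  have hiff : ∀ e ∈ Q.powersetCard 2, Disjoint e (Q \ f) ↔ e = f := by
    intro e he
    obtain ⟨heQ, he⟩ := mem_powersetCard.mp he
    refine ⟨fun hdisj => ?_, fun h => h ▸ disjoint_sdiff⟩
    have hef : e ⊆ f := by
      intro v hv
      by_contra hvf
      exact disjoint_left.mp hdisj hv (mem_sdiff.mpr ⟨heQ hv, hvf⟩)
    exact eq_of_subset_of_card_le hef (hf.trans he.symm).le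
  calc ∑ p ∈ (Q \ f).powersetCard 2, ∑ e ∈ Q.powersetCard 2, c e * edgeGadget k e p
      = ∑ e ∈ Q.powersetCard 2, if e = f then c e else 0 := by
        rw [sum_comm]
        refine sum_congr rfl fun e he => ?_
        rw [← mul_sum, sum_edgeGadget hk (mem_powersetCard.mp he).2 hcard, mul_ite, mul_one,
          mul_zero, if_congr (hiff e he) rfl rfl]
    _ = c f := by
        rw [sum_ite_eq', if_pos (mem_powersetCard.mpr ⟨hfQ, hf⟩)]

theorem le_cliqueWeight {k : ℕ} (hk : 2 ≤ k) {t B : ℝ} (hB : 0 ≤ B) {c : Finset V → ℝ}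
    (hc : ∀ e, G.IsNClique 2 e → 0 ≤ c e ∧ c e ≤ B) {S : Finset V} (hS : G.IsNClique k S) :
    t - (k + 1) / k * B * (Fintype.card V : ℝ) ^ 2 ≤ cliqueWeight G k t c S := by
  have hcard : (2 * #(cliquesAbove G (k + 2) S) : ℝ) ≤ (Fintype.card V : ℝ) ^ 2 := by
    have := factorial_mul_card_cliquesAbove_le hS.isClique 2
    rw [hS.card_eq] at this
    exact_mod_cast this
  have hsum : #(cliquesAbove G (k + 2) S) * -(2 * (k + 1) / k * B) ≤
      ∑ Q ∈ cliquesAbove G (k + 2) S, ∑ e ∈ Q.powersetCard 2, c e * edgeGadget k e (Q \ S) := by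
    rw [← nsmul_eq_mul]
    refine card_nsmul_le_sum _ _ _ fun Q hQ => ?_
    obtain ⟨hQ, hSQ⟩ := mem_cliquesAbove_iff.mp hQ
    refine neg_le_sum_mul_edgeGadget hk hQ.card_eq ?_ fun e he => hc e ?_
    · rw [mem_powersetCard, card_sdiff_of_subset hSQ, hQ.card_eq, hS.card_eq]
      exact ⟨sdiff_subset, Nat.add_sub_cancel_left k 2⟩
    · obtain ⟨heQ, he⟩ := mem_powersetCard.mp he
      exact ⟨hQ.isClique.subset (coe_subset.mpr heQ), he⟩
  have hmul := mul_le_mul_of_nonneg_left hcard (by positivity : 0 ≤ (k + 1) / k * B)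
  calc t - (k + 1) / k * B * (Fintype.card V : ℝ) ^ 2
      ≤ t - (k + 1) / k * B * (2 * #(cliquesAbove G (k + 2) S)) := by gcongr
    _ = t + #(cliquesAbove G (k + 2) S) * -(2 * (k + 1) / k * B) := by ring
    _ ≤ cliqueWeight G k t c S := by rw [cliqueWeight]; gcongr

theorem exists_edgeCorrection [Nonempty V] {δ : ℝ} (hδ : 0 ≤ δ)
    (hdeg : ∀ v, (1 - δ) * Fintype.card V ≤ G.degree v) {r : ℕ}
    (hrδ : (2 + (r + 2)).choose 2 * δ ≤ 1 / 2) {f : Finset V} (hf : G.IsNClique 2 f) :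
    ∃ x : ℝ, 0 ≤ x ∧
      x ≤ (2 + r).choose 2 * δ * (2 * (r + 2).factorial / (Fintype.card V : ℝ) ^ (r + 2)) ∧
      #(cliquesAbove G (2 + r) f) * (r.factorial / (Fintype.card V : ℝ) ^ r) +
        #(cliquesAbove G (2 + r + 2) f) * x = 1 := by
  have hn : (0 : ℝ) < Fintype.card V := by exact_mod_cast Fintype.card_pos
  have hupper : (r.factorial * #(cliquesAbove G (2 + r) f) : ℝ) ≤ (Fintype.card V : ℝ) ^ r := by
    have := factorial_mul_card_cliquesAbove_le hf.isClique r
    rw [hf.card_eq] at this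
    exact_mod_cast this
  have hlower := le_factorial_mul_card_cliquesAbove hδ hdeg hf.isClique r
  have hlower₂ := le_factorial_mul_card_cliquesAbove hδ hdeg hf.isClique (r + 2)
  rw [hf.card_eq] at hlower hlower₂
  rw [add_assoc]
  set n : ℝ := (Fintype.card V : ℝ)
  set M : ℝ := (#(cliquesAbove G (2 + r) f) : ℝ)
  set N : ℝ := (#(cliquesAbove G (2 + (r + 2)) f) : ℝ)
  have hhalf : n ^ (r + 2) / (2 * (r + 2).factorial) ≤ N := by
    rw [div_le_iff₀ (by positivity)]
    calc n ^ (r + 2) = 2 * (1 / 2 * n ^ (r + 2)) := by ring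
      _ ≤ 2 * ((1 - (2 + (r + 2)).choose 2 * δ) * n ^ (r + 2)) := by gcongr; linarith
      _ ≤ 2 * ((r + 2).factorial * N) := by gcongr
      _ = N * (2 * (r + 2).factorial) := by ring
  have hN : 0 < N := lt_of_lt_of_le (by positivity) hhalf
  have hdeficit : 0 ≤ 1 - M * (r.factorial / n ^ r) := by
    rw [sub_nonneg, ← mul_div_assoc, div_le_one (by positivity), mul_comm]
    exact hupper
  refine ⟨(1 - M * (r.factorial / n ^ r)) / N, div_nonneg hdeficit hN.le, ?_, ?_⟩
  · have hle : 1 - M * (r.factorial / n ^ r) ≤ (2 + r).choose 2 * δ := by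
      rw [sub_le_comm, ← mul_div_assoc, le_div_iff₀ (by positivity), mul_comm M]
      exact hlower
    calc (1 - M * (r.factorial / n ^ r)) / N
        ≤ (2 + r).choose 2 * δ / (n ^ (r + 2) / (2 * (r + 2).factorial)) := by gcongr
      _ = (2 + r).choose 2 * δ * (2 * (r + 2).factorial / n ^ (r + 2)) := by
        rw [div_div_eq_mul_div, mul_div_assoc]
  · rw [mul_div_cancel₀ _ hN.ne', add_sub_cancel]

theorem exists_nonneg_cliqueWeight [Nonempty V] {δ : ℝ} (hδ : 0 ≤ δ)
    (hdeg : ∀ v, (1 - δ) * Fintype.card V ≤ G.degree v) {k : ℕ} (hk : 2 ≤ k)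
    (hkδ : k ^ 4 * δ ≤ 1) :
    ∃ W : Finset V → ℝ, (∀ S, G.IsNClique k S → 0 ≤ W S) ∧
      ∀ f, G.IsNClique 2 f → ∑ S ∈ cliquesAbove G k f, W S = 1 := by
  obtain ⟨r, rfl⟩ := Nat.exists_eq_add_of_le hk
  have hn : (0 : ℝ) < Fintype.card V := by exact_mod_cast Fintype.card_pos
  have hrδ : (2 + (r + 2)).choose 2 * δ ≤ 1 / 2 := by
    have hchoose : (2 * (2 + (r + 2)).choose 2 : ℝ) ≤ (2 + r : ℕ) ^ 4 := by
      rw [Nat.cast_choose_two]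
      push_cast
      have hr : (0 : ℝ) ≤ r := r.cast_nonneg
      nlinarith [pow_nonneg hr 2, pow_nonneg hr 3, pow_nonneg hr 4]
    linarith [mul_le_mul_of_nonneg_right hchoose hδ]
  choose! c hc₀ hc hsum using fun f hf => exists_edgeCorrection hδ hdeg hrδ (f := f) hf
  refine ⟨cliqueWeight G (2 + r) (r.factorial / (Fintype.card V : ℝ) ^ r) c, fun S hS => ?_,
    fun f hf => (sum_cliqueWeight hk _ c hf.card_eq).trans (hsum f hf)⟩
  refine le_trans ?_ (le_cliqueWeight hk (by positivity) (fun e he => ⟨hc₀ e he, hc e he⟩) hS)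
  set n : ℝ := (Fintype.card V : ℝ)
  have hpoly : ((r + 2) * (r + 1) ^ 2 * (r + 3) : ℝ) ≤ (r + 2) ^ 4 := by
    have hr : (0 : ℝ) ≤ r := r.cast_nonneg
    nlinarith [pow_nonneg hr 2, pow_nonneg hr 3]
  have hfactorial : ((r + 2).factorial : ℝ) = (r + 2) * (r + 1) * r.factorial := by
    rw [Nat.factorial_succ, Nat.factorial_succ]; push_cast; ring
  rw [sub_nonneg]
  calc ((2 + r : ℕ) + 1 : ℝ) / (2 + r : ℕ) *
        ((2 + r).choose 2 * δ * (2 * (r + 2).factorial / n ^ (r + 2))) * n ^ 2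
      = (r + 2) * (r + 1) ^ 2 * (r + 3) * δ * (r.factorial / n ^ r) := by
        rw [Nat.cast_choose_two, hfactorial]
        push_cast
        field_simp
        ring
    _ ≤ (r + 2) ^ 4 * δ * (r.factorial / n ^ r) := by gcongr
    _ ≤ r.factorial / n ^ r :=
        mul_le_of_le_one_left (by positivity) (by simpa [add_comm] using hkδ)

end CliqueWeight

theorem exists_isFracDecomp_of_cliqueWeight {V β : Type*} [Fintype V] [DecidableEq V] [Fintype β]
    {G : SimpleGraph V} [DecidableRel G.Adj] {H : SimpleGraph β} (hH : H ≠ ⊥) {W : Finset V → ℝ}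
    (hW : ∀ S, G.IsNClique (Fintype.card β) S → 0 ≤ W S)
    (hsum : ∀ f, G.IsNClique 2 f → ∑ S ∈ cliquesAbove G (Fintype.card β) f, W S = 1) :
    ∃ ψ : G.Subgraph → ℝ, IsFracDecomp G H ψ := by
  classical
  have hclique (S : G.cliqueFinset (Fintype.card β)) : G.IsNClique (Fintype.card β) S :=
    SimpleGraph.mem_cliqueFinset_iff.mp S.2
  let e (S : G.cliqueFinset (Fintype.card β)) : β ≃ (S : Finset V) :=
    Fintype.equivOfCardEq (by rw [Fintype.card_coe, (hclique S).card_eq])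
  have hfamily : IsFracDecompFamily (fun S => cliqueCopy (hclique S).isClique (e S))
      fun S => W S := by
    refine ⟨fun S => hW S (hclique S), fun x y hxy => ?_⟩
    have hedge : G.IsNClique 2 {x, y} :=
      ⟨by simpa [SimpleGraph.isClique_pair] using fun _ => hxy, card_pair hxy.ne⟩
    simp only [cliqueCopy_toSubgraph_adj_iff _ _ hxy.ne]
    rw [← hsum _ hedge, sum_filter, cliquesAbove, sum_filter]
    exact sum_coe_sort (G.cliqueFinset (Fintype.card β)) fun S => if {x, y} ⊆ S then W S else 0
  obtain ⟨a, b, hab⟩ := SimpleGraph.ne_bot_iff_exists_adj.mp hH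
  exact (hfamily.comp (isFracDecompFamily_permCopy hab)).exists_isFracDecomp

theorem frac_h_decomposition_of_min_degree_general {V β : Type*} [Fintype V] [Fintype β]
    (H : SimpleGraph β) (hH : H.edgeSet.Nonempty) (G : SimpleGraph V)
    (hG : ∀ v, (1 - 1 / (Fintype.card β : ℝ) ^ 4) * Fintype.card V ≤ (G.neighborSet v).ncard) :
    ∃ ψ : G.Subgraph → ℝ, IsFracDecomp G H ψ := by
  classical
  rw [SimpleGraph.edgeSet_nonempty] at hH
  obtain hV | hV := isEmpty_or_nonempty V
  · exact ⟨0, fun _ => le_rfl, fun _ _ => rfl, fun e => e.ind fun x => isEmptyElim x⟩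
  have hβ : 2 ≤ Fintype.card β := by
    obtain ⟨a, b, hab⟩ := SimpleGraph.ne_bot_iff_exists_adj.mp hH
    exact Fintype.one_lt_card_iff.mpr ⟨a, b, hab.ne⟩
  have hdeg (v : V) : (1 - 1 / (Fintype.card β : ℝ) ^ 4) * Fintype.card V ≤ G.degree v := by
    rw [← G.card_neighborSet_eq_degree, ← Set.toFinset_card, ← Set.ncard_eq_toFinset_card']
    exact hG v
  obtain ⟨W, hW, hsum⟩ := exists_nonneg_cliqueWeight (by positivity) hdeg hβ
    (mul_one_div_cancel (by positivity)).le
  exact exists_isFracDecomp_of_cliqueWeight hH hW hsum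

/-- For every integer `k ≥ 3`, every graph `H` with `k` vertices and at least one edge, and every
`ε > 0`, there exists `n₀` such that every graph `G` on `n ≥ n₀` vertices with minimum degree at
least `n·(1 - 1/(9k^10) + ε)` has a fractional `H`-decomposition. -/
theorem frac_h_decomposition_of_min_degree (k : ℕ) (hk : 3 ≤ k) (H : SimpleGraph (Fin k))
    (hH : H.edgeSet.Nonempty) (ε : ℝ) (hε : 0 < ε) :
    ∃ n₀ : ℕ, ∀ n : ℕ, n₀ ≤ n → ∀ G : SimpleGraph (Fin n),
      (∀ v, (n : ℝ) * (1 - 1 / (9 * (k : ℝ) ^ 10) + ε) ≤ ((G.neighborSet v).ncard : ℝ)) →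
      ∃ ψ : G.Subgraph → ℝ, IsFracDecomp G H ψ := by
  refine ⟨0, fun n _ G hG => frac_h_decomposition_of_min_degree_general H hH G fun v => ?_⟩
  have hk1 : (1 : ℝ) ≤ k := by exact_mod_cast (by lia : 1 ≤ k)
  have hpow : (k : ℝ) ^ 4 ≤ 9 * (k : ℝ) ^ 10 :=
    (pow_le_pow_right₀ hk1 (by norm_num)).trans
      (le_mul_of_one_le_left (by positivity) (by norm_num))
  have hbound := one_div_le_one_div_of_le (by positivity) hpow
  rw [Fintype.card_fin, Fintype.card_fin, mul_comm]
  exact le_trans (by gcongr; linarith) (hG v)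
end

section
/- For every fixed graph H with at least one edge and every ε > 0 there exists n₀ such that every graph G on n ≥ n₀ vertices satisfies ν*_H(G) - ν_H(G) ≤ ε·n². (Theorem of Haxell and Rödl.) -/
/-- A fractional `H`-packing of `G`: a function `ψ` from the copies of `H` in `G` to `[0,1]`
such that for each edge `e` of `G`, the sum of `ψ` over the copies of `H` containing `e`
is at most `1`. -/
def IsFracPacking {α β : Type*} (G : SimpleGraph α) (H : SimpleGraph β)
    (ψ : G.Subgraph → ℝ) : Prop :=
  (∀ c, 0 ≤ ψ c ∧ ψ c ≤ 1) ∧ (∀ c, ¬ c.IsCopy H → ψ c = 0) ∧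
  ∀ e ∈ G.edgeSet, (∑ᶠ c ∈ {c : G.Subgraph | c.IsCopy H ∧ e ∈ c.edgeSet}, ψ c) ≤ 1

universe u v

namespace HaxellRodl

open Finset
open scoped BigOperators

lemma sum_biUnion_le_sum {α β : Type*} [DecidableEq β] (s : Finset α) (t : α → Finset β)
    {f : β → ℝ} (hf : ∀ b, 0 ≤ f b) : ∑ b ∈ s.biUnion t, f b ≤ ∑ a ∈ s, ∑ b ∈ t a, f b := by
  classical
  induction s using Finset.induction_on with
  | empty => simp
  | insert a s ha ih =>
    rw [biUnion_insert, sum_insert ha]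
    linarith [sum_union_inter (s₁ := t a) (s₂ := s.biUnion t) (f := f),
      sum_nonneg fun b (_ : b ∈ t a ∩ s.biUnion t) => hf b]

lemma one_sub_sum_le_prod_one_sub {α : Type*} (s : Finset α) {p : α → ℝ} (h₀ : ∀ i ∈ s, 0 ≤ p i)
    (h₁ : ∀ i ∈ s, p i ≤ 1) : 1 - ∑ i ∈ s, p i ≤ ∏ i ∈ s, (1 - p i) := by
  induction s using Finset.cons_induction with
  | empty => simp
  | cons a s ha ih =>
    simp only [forall_mem_cons] at h₀ h₁
    have hle : ∏ i ∈ s, (1 - p i) ≤ 1 :=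
      prod_le_one (fun i hi => sub_nonneg.2 (h₁.2 i hi)) fun i hi => sub_le_self 1 (h₀.2 i hi)
    rw [sum_cons, prod_cons]
    nlinarith [ih h₀.2 h₁.2]

section WeightedHypergraph

variable {ι V : Type*} [Fintype ι] [DecidableEq V] {e : ι → Finset V} {w w' : ι → ℝ}

/-- The weighted degree of the vertex `v` in the hypergraph with edges `e c`, `c : ι`, of
weights `w c`. -/
def load (e : ι → Finset V) (w : ι → ℝ) (v : V) : ℝ := ∑ c with v ∈ e c, w c

/-- The weighted codegree of the vertices `u` and `v`. -/
def coload (e : ι → Finset V) (w : ι → ℝ) (u v : V) : ℝ := ∑ c with u ∈ e c ∧ v ∈ e c, w c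

/-- The total amount by which the weighted degrees exceed `1`, i.e. by which `w` fails to be a
fractional matching. -/
noncomputable def overload [Fintype V] (e : ι → Finset V) (w : ι → ℝ) : ℝ :=
  ∑ v, max 0 (load e w v - 1)

lemma load_nonneg (hw : ∀ c, 0 ≤ w c) (v : V) : 0 ≤ load e w v :=
  sum_nonneg fun c _ => hw c

lemma load_mono (h : ∀ c, w c ≤ w' c) (v : V) : load e w v ≤ load e w' v :=
  sum_le_sum fun c _ => h c

lemma coload_mono (h : ∀ c, w c ≤ w' c) (u v : V) : coload e w u v ≤ coload e w' u v :=
  sum_le_sum fun c _ => h c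

lemma le_load (hw : ∀ c, 0 ≤ w c) {c : ι} {v : V} (hv : v ∈ e c) : w c ≤ load e w v :=
  single_le_sum (fun c _ => hw c) (by simpa using hv)

lemma sum_load_mul (S : Finset V) (f : V → ℝ) :
    ∑ v ∈ S, load e w v * f v = ∑ c, w c * ∑ v ∈ S with v ∈ e c, f v := by
  simp only [load, sum_filter, sum_mul, mul_sum]
  rw [sum_comm]
  exact sum_congr rfl fun c _ => sum_congr rfl fun v _ => by split_ifs <;> simp

lemma sum_filter_not_disjoint_le_card (hw : ∀ c, 0 ≤ w c) {B : Finset V}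
    (hB : ∀ v ∈ B, load e w v ≤ 1) : ∑ c with ¬Disjoint (e c) B, w c ≤ #B := by
  classical
  calc ∑ c with ¬Disjoint (e c) B, w c
      = ∑ c ∈ B.biUnion fun v => {c | v ∈ e c}, w c := by
        congr 1
        ext c
        simp [not_disjoint_iff, and_comm]
    _ ≤ ∑ v ∈ B, load e w v := sum_biUnion_le_sum B _ hw
    _ ≤ #B := by simpa using sum_le_card_nsmul B _ 1 hB

lemma exists_le_of_load_le_one [Fintype V] (hw : ∀ c, 0 ≤ w c) :
    ∃ w' : ι → ℝ, (∀ c, 0 ≤ w' c) ∧ (∀ c, w' c ≤ w c) ∧ (∀ v, load e w' v ≤ 1) ∧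
      ∑ c, w c - overload e w ≤ ∑ c, w' c := by
  set f : V → ℝ := fun v => (max 1 (load e w v))⁻¹
  have hf₀ (v : V) : 0 ≤ f v := by positivity
  have hf₁ (v : V) : f v ≤ 1 := inv_le_one_of_one_le₀ (le_max_left _ _)
  have hf (v : V) : load e w v * (1 - f v) = max 0 (load e w v - 1) := by
    rcases le_total (load e w v) 1 with h | h
    · simp [f, h]
    · have : load e w v ≠ 0 := by linarith
      simp [f, h, mul_sub, this]
  refine ⟨fun c => w c * ∏ v ∈ e c, f v, fun c => mul_nonneg (hw c) (prod_nonneg fun v _ => hf₀ v),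
    fun c => mul_le_of_le_one_right (hw c) (prod_le_one (fun v _ => hf₀ v) fun v _ => hf₁ v),
    fun v => ?_, ?_⟩
  · calc load e (fun c => w c * ∏ u ∈ e c, f u) v
        ≤ ∑ c with v ∈ e c, w c * f v := sum_le_sum fun c hc =>
          mul_le_mul_of_nonneg_left (by
            rw [← mul_prod_erase _ _ (mem_filter.1 hc).2]
            exact mul_le_of_le_one_right (hf₀ v)
              (prod_le_one (fun u _ => hf₀ u) fun u _ => hf₁ u)) (hw c)
      _ = load e w v / max 1 (load e w v) := by rw [← sum_mul, ← load, div_eq_mul_inv]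
      _ ≤ 1 := div_le_one_of_le₀ (le_max_right _ _) (by positivity)
  · have hloss : ∑ c, w c * (1 - ∏ v ∈ e c, f v) ≤ overload e w :=
      calc ∑ c, w c * (1 - ∏ v ∈ e c, f v)
          ≤ ∑ c, w c * ∑ v ∈ e c, (1 - f v) := by
            refine sum_le_sum fun c _ => mul_le_mul_of_nonneg_left ?_ (hw c)
            have := one_sub_sum_le_prod_one_sub (e c) (p := fun v => 1 - f v)
              (fun v _ => sub_nonneg.2 (hf₁ v)) (fun v _ => sub_le_self 1 (hf₀ v))
            simp only [sub_sub_cancel] at this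
            linarith
        _ = overload e w := by
            simpa [hf, overload] using (sum_load_mul (e := e) (w := w) univ fun v => 1 - f v).symm
    simp only [mul_sub, mul_one, sum_sub_distrib] at hloss
    linarith

lemma overload_le [Fintype V] {B : ℝ} (h : ∀ τ : V → ℝ, (∀ v, 0 ≤ τ v) → (∀ v, τ v ≤ 1) →
    ∑ v, load e w v * τ v ≤ ∑ v, τ v + B) : overload e w ≤ B := by
  have := h (fun v => if 1 ≤ load e w v then 1 else 0) (fun v => by positivity)
    fun v => by split_ifs <;> simp
  rw [← sub_le_iff_le_add', ← sum_sub_distrib] at this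
  refine le_trans (sum_le_sum fun v _ => ?_) this
  split_ifs with hv
  · simp [hv]
  · simp [(not_le.1 hv).le]

end WeightedHypergraph

section BernoulliExp

variable {κ : Type*} [Fintype κ] [DecidableEq κ] (p : κ → ℝ)

/-- The expectation of `f X`, where `X` is a random subset of `κ` containing each `k`
independently with probability `p k`. -/
def bernoulliExp : (Finset κ → ℝ) →ₗ[ℝ] ℝ :=
  ∑ X, ((∏ k ∈ X, p k) * ∏ k ∈ Xᶜ, (1 - p k)) • LinearMap.proj X

lemma bernoulliExp_apply (f : Finset κ → ℝ) :
    bernoulliExp p f = ∑ X, ((∏ k ∈ X, p k) * ∏ k ∈ Xᶜ, (1 - p k)) * f X := by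
  simp [bernoulliExp]

lemma bernoulliExp_disjoint (A : Finset κ) :
    bernoulliExp p (fun X => if Disjoint X A then 1 else 0) = ∏ k ∈ A, (1 - p k) := by
  set q : κ → ℝ := fun k => if k ∈ A then 0 else p k
  calc bernoulliExp p (fun X => if Disjoint X A then 1 else 0)
      = ∑ X, (∏ k ∈ X, q k) * ∏ k ∈ Xᶜ, (1 - p k) := by
        rw [bernoulliExp_apply]
        refine sum_congr rfl fun X _ => ?_
        split_ifs with h
        · rw [mul_one, prod_congr rfl fun k hk => (if_neg (disjoint_left.1 h hk)).symm]
        · obtain ⟨k, hkX, hkA⟩ := not_disjoint_iff.1 h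
          rw [prod_eq_zero (f := q) hkX (if_pos hkA), mul_zero, zero_mul]
    _ = ∏ k, (q k + (1 - p k)) := (Fintype.prod_add q fun k => 1 - p k).symm
    _ = ∏ k ∈ A, (1 - p k) := by
        rw [← prod_subset (subset_univ A) fun k _ hk => by simp [q, hk]]
        exact prod_congr rfl fun k hk => by simp [q, hk]

lemma bernoulliExp_const (a : ℝ) : bernoulliExp p (fun _ => a) = a := by
  have h : bernoulliExp p (fun _ => 1) = 1 := by simpa using bernoulliExp_disjoint p ∅
  simpa [h, Pi.smul_def] using map_smul (bernoulliExp p) a (fun _ => 1)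

lemma bernoulliExp_mem_and_disjoint {A : Finset κ} {k : κ} (hk : k ∉ A) :
    bernoulliExp p (fun X => if k ∈ X ∧ Disjoint X A then 1 else 0) =
      p k * ∏ i ∈ A, (1 - p i) := by
  have hsplit : (fun X : Finset κ => if k ∈ X ∧ Disjoint X A then (1 : ℝ) else 0) =
      (fun X => if Disjoint X A then 1 else 0) -
        fun X => if Disjoint X (insert k A) then 1 else 0 := by
    ext X
    by_cases hX : k ∈ X <;> by_cases hA : Disjoint X A <;> simp [hX, hA]
  rw [hsplit, map_sub, bernoulliExp_disjoint, bernoulliExp_disjoint, prod_insert hk]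
  ring

variable {p}

lemma bernoulliExp_mono (hp : ∀ k, p k ∈ Set.Icc (0 : ℝ) 1) {f g : Finset κ → ℝ}
    (hfg : ∀ X, f X ≤ g X) : bernoulliExp p f ≤ bernoulliExp p g := by
  simp only [bernoulliExp_apply]
  exact sum_le_sum fun X _ => mul_le_mul_of_nonneg_left (hfg X)
    (mul_nonneg (prod_nonneg fun k _ => (hp k).1) (prod_nonneg fun k _ => sub_nonneg.2 (hp k).2))

lemma exists_bernoulliExp_le (hp : ∀ k, p k ∈ Set.Icc (0 : ℝ) 1) (f : Finset κ → ℝ) :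
    ∃ X, bernoulliExp p f ≤ f X := by
  obtain ⟨X, hX⟩ := Finite.exists_max f
  exact ⟨X, (bernoulliExp_mono hp hX).trans_eq (bernoulliExp_const p (f X))⟩

end BernoulliExp

section Nibble

/-- `w` is a fractional matching of the hypergraph `e`, supported on nonempty edges of size `r`
inside the vertex set `S`, whose codegrees are at most `δ`. -/
structure IsUniformFracMatching {ι V : Type*} [Fintype ι] [DecidableEq V] (e : ι → Finset V)
    (r : ℕ) (δ : ℝ) (S : Finset V) (w : ι → ℝ) : Prop where
  nonneg : ∀ c, 0 ≤ w c
  subset : ∀ c, w c ≠ 0 → e c ⊆ S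
  nonempty : ∀ c, w c ≠ 0 → (e c).Nonempty
  card_eq : ∀ c, w c ≠ 0 → #(e c) = r
  load_le_one : ∀ v, load e w v ≤ 1
  coload_le : ∀ u v, u ≠ v → coload e w u v ≤ δ
  bound_nonneg : 0 ≤ δ

/-- `M` is an integral matching using only hyperedges of nonzero weight. -/
def IsSupportMatching {ι V : Type*} (e : ι → Finset V) (w : ι → ℝ) (M : Finset ι) : Prop :=
  (∀ c ∈ M, w c ≠ 0) ∧ (M : Set ι).Pairwise fun c d => Disjoint (e c) (e d)

variable {ι V : Type*} [Fintype ι] [DecidableEq V] {e : ι → Finset V} {r : ℕ} {δ η : ℝ}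
  {S : Finset V} {w : ι → ℝ}

/-- The tokens that remove the vertex `v` in a round of the nibble: the hyperedges through `v`,
together with a token of its own. -/
def killers (e : ι → Finset V) (v : V) : Finset (ι ⊕ V) := ({c | v ∈ e c} : Finset ι).disjSum {v}

/-- The probabilities with which tokens are drawn in a round of the nibble. Hyperedges are drawn
in proportion to their weight; the probability of the token of `v` equalises the chances of
survival, so that every vertex survives with probability exactly `1 - η`. -/
noncomputable def tokenProb (e : ι → Finset V) (w : ι → ℝ) (η : ℝ) : ι ⊕ V → ℝ :=
  Sum.elim (fun c => η * w c) fun v => 1 - (1 - η) / ∏ c with v ∈ e c, (1 - η * w c)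

/-- The factor by which the weight of a surviving hyperedge of size `r` is multiplied after a
round. Conditionally on the survival of one vertex, the other `r - 1` survive with probability
about `(1 - η) ^ (r - 1)`; the factor is the inverse of this, in a form valid for `r = 0`. -/
noncomputable def boost (r : ℕ) (η : ℝ) : ℝ := (1 - η) / (1 - η) ^ r

lemma boost_mul_pow (hη : η ∈ Set.Icc (0 : ℝ) (1 / 2)) : boost r η * (1 - η) ^ r = 1 - η :=
  div_mul_cancel₀ _ (pow_ne_zero _ (by linarith [hη.2]))

lemma boost_nonneg (hη : η ∈ Set.Icc (0 : ℝ) (1 / 2)) : 0 ≤ boost r η := by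
  have : 0 ≤ 1 - η := by linarith [hη.2]
  exact div_nonneg this (pow_nonneg this _)

lemma boost_le_two_pow (hη : η ∈ Set.Icc (0 : ℝ) (1 / 2)) : boost r η ≤ 2 ^ r :=
  calc boost r η ≤ 1 / (1 / 2) ^ r := by
        unfold boost
        gcongr <;> linarith [hη.1, hη.2]
    _ = 2 ^ r := by simp

lemma boost_sq_le (hη : η ∈ Set.Icc (0 : ℝ) (1 / 2)) : boost r η ^ 2 ≤ 4 ^ r :=
  calc boost r η ^ 2 ≤ (2 ^ r) ^ 2 :=
        pow_le_pow_left₀ (boost_nonneg hη) (boost_le_two_pow hη) 2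
    _ = 4 ^ r := by rw [← pow_mul, mul_comm, pow_mul]; norm_num

namespace IsUniformFracMatching

lemma weight_le_one (h : IsUniformFracMatching e r δ S w) (c : ι) : w c ≤ 1 := by
  by_cases hc : w c = 0
  · exact hc.trans_le zero_le_one
  · obtain ⟨v, hv⟩ := h.nonempty c hc
    exact (le_load h.nonneg hv).trans (h.load_le_one v)

lemma sum_le_card (h : IsUniformFracMatching e r δ S w) : ∑ c, w c ≤ #S := by
  refine le_trans (le_of_eq ?_)
    (sum_filter_not_disjoint_le_card h.nonneg fun v _ => h.load_le_one v)
  refine (sum_filter_of_ne fun c _ hc => ?_).symm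
  obtain ⟨v, hv⟩ := h.nonempty c hc
  exact not_disjoint_iff.2 ⟨v, hv, h.subset c hc hv⟩

lemma one_sub_le_prod (h : IsUniformFracMatching e r δ S w) (hη : η ∈ Set.Icc (0 : ℝ) (1 / 2))
    (v : V) : 1 - η ≤ ∏ c with v ∈ e c, (1 - η * w c) := by
  refine le_trans ?_ (one_sub_sum_le_prod_one_sub _ (fun c _ => mul_nonneg hη.1 (h.nonneg c))
    fun c _ => ?_)
  · rw [← mul_sum, ← load]
    nlinarith [h.load_le_one v, hη.1]
  · nlinarith [h.nonneg c, h.weight_le_one c, hη.1, hη.2]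

lemma tokenProb_mem_Icc (h : IsUniformFracMatching e r δ S w) (hη : η ∈ Set.Icc (0 : ℝ) (1 / 2))
    (k : ι ⊕ V) : tokenProb e w η k ∈ Set.Icc (0 : ℝ) 1 := by
  rcases k with c | v
  · exact ⟨mul_nonneg hη.1 (h.nonneg c),
      mul_le_one₀ (hη.2.trans (by norm_num)) (h.nonneg c) (h.weight_le_one c)⟩
  · have hη' : 0 ≤ 1 - η := by linarith [hη.2]
    have hprod := h.one_sub_le_prod hη v
    exact ⟨sub_nonneg.2 (div_le_one_of_le₀ hprod (hη'.trans hprod)),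
      sub_le_self 1 (div_nonneg hη' (hη'.trans hprod))⟩

lemma prod_killers (h : IsUniformFracMatching e r δ S w) (hη : η ∈ Set.Icc (0 : ℝ) (1 / 2))
    (v : V) : ∏ k ∈ killers e v, (1 - tokenProb e w η k) = 1 - η := by
  have hη' : 0 < 1 - η := by linarith [hη.2]
  have hprod := h.one_sub_le_prod hη v
  rw [killers, prod_disjSum]
  simp only [tokenProb, Sum.elim_inl, Sum.elim_inr, prod_singleton, sub_sub_cancel]
  exact mul_div_cancel₀ _ (hη'.trans_le hprod).ne'

lemma sum_mul_card_erase_le (h : IsUniformFracMatching e r δ S w) {c : ι} (hc : w c ≠ 0) (v : V) :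
    ∑ c' with v ∈ e c', w c' * #{u ∈ (e c).erase v | u ∈ e c'} ≤ r ^ 2 * δ :=
  calc ∑ c' with v ∈ e c', w c' * #{u ∈ (e c).erase v | u ∈ e c'}
      = ∑ u ∈ (e c).erase v, coload e w u v := by
        simp only [coload, card_filter, Nat.cast_sum, mul_sum, sum_filter]
        rw [sum_comm]
        exact sum_congr rfl fun c' _ => by
          split_ifs with hv <;> simp [hv]
    _ ≤ #((e c).erase v) * δ := by
        rw [← nsmul_eq_mul]
        exact sum_le_card_nsmul _ _ _ fun u hu => h.coload_le u v (ne_of_mem_erase hu)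
    _ ≤ r ^ 2 * δ := by
        refine mul_le_mul_of_nonneg_right ?_ h.bound_nonneg
        have : #((e c).erase v) ≤ r ^ 2 :=
          (card_erase_le.trans_eq (h.card_eq c hc)).trans (Nat.le_self_pow two_ne_zero r)
        exact_mod_cast this

end IsUniformFracMatching

variable [DecidableEq ι]

/-- The indicator of the event that all vertices of `U` survive when the tokens `X` are drawn. -/
noncomputable def alive (e : ι → Finset V) (U : Finset V) (X : Finset (ι ⊕ V)) : ℝ :=
  if Disjoint X (U.biUnion (killers e)) then 1 else 0

/-- The probability that all vertices of `U` survive a round of the nibble. -/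
noncomputable def survivalProb (e : ι → Finset V) (w : ι → ℝ) (η : ℝ) (U : Finset V) : ℝ :=
  ∏ k ∈ U.biUnion (killers e), (1 - tokenProb e w η k)

lemma alive_nonneg (U : Finset V) (X : Finset (ι ⊕ V)) : 0 ≤ alive e U X := by
  unfold alive; split_ifs <;> simp

lemma alive_le_one (U : Finset V) (X : Finset (ι ⊕ V)) : alive e U X ≤ 1 := by
  unfold alive; split_ifs <;> simp

lemma alive_eq_zero_of_mem {U : Finset V} {X : Finset (ι ⊕ V)} {v : V} (hv : v ∈ U)
    (hX : ¬Disjoint X (killers e v)) : alive e U X = 0 :=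
  if_neg fun h => hX (h.mono_right (subset_biUnion_of_mem (killers e) hv))

lemma alive_mul_alive (U U' : Finset V) : alive e U * alive e U' = alive e (U ∪ U') := by
  ext X
  simp only [Pi.mul_apply, alive, union_biUnion, disjoint_union_right]
  split_ifs <;> simp_all

namespace IsUniformFracMatching

section

variable (h : IsUniformFracMatching e r δ S w) (hη : η ∈ Set.Icc (0 : ℝ) (1 / 2))
include h hη

lemma survivalProb_mem_Icc (U : Finset V) : survivalProb e w η U ∈ Set.Icc (0 : ℝ) 1 :=
  ⟨prod_nonneg fun k _ => sub_nonneg.2 (h.tokenProb_mem_Icc hη k).2,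
    prod_le_one (fun k _ => sub_nonneg.2 (h.tokenProb_mem_Icc hη k).2)
      fun k _ => sub_le_self 1 (h.tokenProb_mem_Icc hη k).1⟩

lemma survivalProb_singleton (v : V) : survivalProb e w η {v} = 1 - η := by
  rw [survivalProb, singleton_biUnion, h.prod_killers hη]

lemma survivalProb_insert_mul (v : V) (U : Finset V) :
    survivalProb e w η (insert v U) *
      ∏ k ∈ killers e v ∩ U.biUnion (killers e), (1 - tokenProb e w η k) =
        (1 - η) * survivalProb e w η U := by
  rw [survivalProb, biUnion_insert, prod_union_inter, h.prod_killers hη, survivalProb]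

lemma sum_killers_inter_le {v : V} {U : Finset V} (hv : v ∉ U) :
    ∑ k ∈ killers e v ∩ U.biUnion (killers e), tokenProb e w η k ≤ #U * δ := by
  have hp (k : ι ⊕ V) := (h.tokenProb_mem_Icc hη k).1
  calc ∑ k ∈ killers e v ∩ U.biUnion (killers e), tokenProb e w η k
      ≤ ∑ u ∈ U, ∑ k ∈ killers e v ∩ killers e u, tokenProb e w η k := by
        rw [inter_biUnion]
        exact sum_biUnion_le_sum U _ hp
    _ ≤ ∑ u ∈ U, coload e w u v := by
        refine sum_le_sum fun u hu => ?_
        have hinter : killers e v ∩ killers e u =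
            ({c | u ∈ e c ∧ v ∈ e c} : Finset ι).disjSum ∅ := by
          ext (c | x)
          · simp [killers, and_comm]
          · simp only [killers, mem_inter, inr_mem_disjSum, mem_singleton, notMem_empty, iff_false]
            rintro ⟨rfl, rfl⟩
            exact hv hu
        rw [hinter, sum_disjSum, sum_empty, add_zero]
        exact sum_le_sum fun c _ => mul_le_of_le_one_left (h.nonneg c) (by linarith [hη.2])
    _ ≤ #U * δ := by
        rw [← nsmul_eq_mul]
        exact sum_le_card_nsmul _ _ _ fun u hu => h.coload_le u v (ne_of_mem_of_not_mem hu hv)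

lemma le_survivalProb_insert (v : V) (U : Finset V) :
    (1 - η) * survivalProb e w η U ≤ survivalProb e w η (insert v U) := by
  rw [← h.survivalProb_insert_mul hη]
  exact mul_le_of_le_one_right (h.survivalProb_mem_Icc hη _).1
    (prod_le_one (fun k _ => sub_nonneg.2 (h.tokenProb_mem_Icc hη k).2)
      fun k _ => sub_le_self 1 (h.tokenProb_mem_Icc hη k).1)

lemma survivalProb_insert_le {v : V} {U : Finset V} (hv : v ∉ U) :
    survivalProb e w η (insert v U) ≤ (1 - η) * survivalProb e w η U + #U * δ := by
  have hprob := h.survivalProb_mem_Icc hη (insert v U)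
  have hprod := one_sub_sum_le_prod_one_sub (killers e v ∩ U.biUnion (killers e))
    (fun k _ => (h.tokenProb_mem_Icc hη k).1) fun k _ => (h.tokenProb_mem_Icc hη k).2
  have hsum := h.sum_killers_inter_le hη hv
  have hloss : 1 - #U * δ ≤ ∏ k ∈ killers e v ∩ U.biUnion (killers e), (1 - tokenProb e w η k) := by
    linarith
  have hδ : 0 ≤ #U * δ := mul_nonneg (Nat.cast_nonneg _) h.bound_nonneg
  nlinarith [h.survivalProb_insert_mul hη v U, mul_le_mul_of_nonneg_left hloss hprob.1,
    mul_le_of_le_one_left hδ hprob.2]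

lemma pow_card_le_survivalProb (U : Finset V) : (1 - η) ^ #U ≤ survivalProb e w η U := by
  have hη' : 0 ≤ 1 - η := by linarith [hη.2]
  induction U using Finset.induction_on with
  | empty => simp [survivalProb]
  | insert v U hv ih =>
    rw [card_insert_of_notMem hv, pow_succ']
    exact (mul_le_mul_of_nonneg_left ih hη').trans (h.le_survivalProb_insert hη v U)

lemma survivalProb_le_pow_card_add (U : Finset V) :
    survivalProb e w η U ≤ (1 - η) ^ #U + #U ^ 2 * δ := by
  have hη' : 0 ≤ 1 - η := by linarith [hη.2]
  induction U using Finset.induction_on with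
  | empty => simp [survivalProb]
  | insert v U hv ih =>
    have hδ : 0 ≤ #U * δ := mul_nonneg (Nat.cast_nonneg _) h.bound_nonneg
    have hη'' : (1 - η) * (#U ^ 2 * δ) ≤ #U ^ 2 * δ :=
      mul_le_of_le_one_left (mul_nonneg (by positivity) h.bound_nonneg) (by linarith [hη.1])
    rw [card_insert_of_notMem hv, pow_succ']
    push_cast
    nlinarith [h.survivalProb_insert_le hη hv, mul_le_mul_of_nonneg_left ih hη', h.bound_nonneg]

lemma one_sub_le_boost_mul_survivalProb {c : ι} (hc : w c ≠ 0) :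
    1 - η ≤ boost r η * survivalProb e w η (e c) :=
  calc 1 - η = boost r η * (1 - η) ^ #(e c) := by rw [h.card_eq c hc, boost_mul_pow hη]
    _ ≤ boost r η * survivalProb e w η (e c) :=
      mul_le_mul_of_nonneg_left (h.pow_card_le_survivalProb hη _) (boost_nonneg hη)

lemma boost_sq_mul_survivalProb_union_le {v : V} {c c' : ι} (hc : w c ≠ 0) (hc' : w c' ≠ 0)
    (hinter : e c ∩ e c' = {v}) :
    boost r η ^ 2 * survivalProb e w η (e c ∪ e c') ≤ 1 - η + boost r η ^ 2 * (4 * r ^ 2 * δ) := by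
  have hη' : 1 - η ≠ 0 := by linarith [hη.2]
  have hcard : #(e c ∪ e c') + 1 = r + r := by
    rw [← card_singleton v, ← hinter, card_union_add_card_inter, h.card_eq c hc, h.card_eq c' hc']
  have hpow : boost r η ^ 2 * (1 - η) ^ #(e c ∪ e c') = 1 - η := by
    refine mul_right_cancel₀ hη' ?_
    calc boost r η ^ 2 * (1 - η) ^ #(e c ∪ e c') * (1 - η)
        = (boost r η * (1 - η) ^ r) ^ 2 := by rw [mul_assoc, ← pow_succ, hcard]; ring
      _ = (1 - η) * (1 - η) := by rw [boost_mul_pow hη, sq]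
  have hle : (#(e c ∪ e c') : ℝ) ≤ 2 * r := by exact_mod_cast (by omega : #(e c ∪ e c') ≤ 2 * r)
  have hsq : (#(e c ∪ e c') : ℝ) ^ 2 * δ ≤ 4 * r ^ 2 * δ :=
    mul_le_mul_of_nonneg_right (by nlinarith) h.bound_nonneg
  calc boost r η ^ 2 * survivalProb e w η (e c ∪ e c')
      ≤ boost r η ^ 2 * ((1 - η) ^ #(e c ∪ e c') + 4 * r ^ 2 * δ) := by
        gcongr
        exact (h.survivalProb_le_pow_card_add hη _).trans (by gcongr)
    _ = 1 - η + boost r η ^ 2 * (4 * r ^ 2 * δ) := by rw [mul_add, hpow]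

lemma pair_correlation_le {v : V} {c c' : ι} (hv : v ∈ e c) (hv' : v ∈ e c') (hc : w c ≠ 0)
    (hc' : w c' ≠ 0) :
    boost r η ^ 2 * survivalProb e w η (e c ∪ e c') - boost r η * survivalProb e w η (e c)
        - boost r η * survivalProb e w η (e c') + (1 - η) ≤
      boost r η ^ 2 * (4 * r ^ 2 * δ + #{u ∈ (e c).erase v | u ∈ e c'}) := by
  have hlow := h.one_sub_le_boost_mul_survivalProb hη hc
  have hlow' := h.one_sub_le_boost_mul_survivalProb hη hc'
  have hδ : 0 ≤ boost r η ^ 2 * (4 * r ^ 2 * δ) := by have := h.bound_nonneg; positivity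
  rw [mul_add]
  rcases eq_empty_or_nonempty {u ∈ (e c).erase v | u ∈ e c'} with hempty | hne
  · have hinter : e c ∩ e c' = {v} := by
      rw [← insert_erase hv, insert_inter_of_mem hv', ← filter_mem_eq_inter, hempty,
        insert_empty_eq]
    rw [hempty, card_empty, Nat.cast_zero, mul_zero]
    linarith [h.boost_sq_mul_survivalProb_union_le hη hc hc' hinter]
  · have hone : (1 : ℝ) ≤ #{u ∈ (e c).erase v | u ∈ e c'} := by exact_mod_cast hne.card_pos
    linarith [mul_le_mul_of_nonneg_left ((h.survivalProb_mem_Icc hη (e c ∪ e c')).2.trans hone)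
      (sq_nonneg (boost r η)), hη.2]

end

end IsUniformFracMatching

/-- The weights of the hyperedges after a round with token set `X`: the weight of a hyperedge is
boosted if it survives and becomes zero otherwise. -/
noncomputable def boosted (e : ι → Finset V) (w : ι → ℝ) (s : ℝ) (X : Finset (ι ⊕ V)) (c : ι) : ℝ :=
  w c * (s * alive e (e c) X)

/-- The squared change of the weighted degree of `v` in a round which `v` survives. -/
noncomputable def deviation (e : ι → Finset V) (w : ι → ℝ) (s : ℝ) (v : V)
    (X : Finset (ι ⊕ V)) : ℝ :=
  alive e {v} X * (load e (boosted e w s X) v - load e w v) ^ 2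

lemma deviation_eq_sum (s : ℝ) (v : V) :
    deviation e w s v = ∑ c with v ∈ e c, ∑ c' with v ∈ e c', (w c * w c') •
      (s ^ 2 • alive e (e c ∪ e c') - s • alive e (e c) - s • alive e (e c') + alive e {v}) := by
  have habsorb {c : ι} (hc : v ∈ e c) (X) : alive e {v} X * alive e (e c) X = alive e (e c) X := by
    rw [← Pi.mul_apply, alive_mul_alive, singleton_union, insert_eq_of_mem hc]
  ext X
  have hdiff : load e (boosted e w s X) v - load e w v =
      ∑ c with v ∈ e c, w c * (s * alive e (e c) X - 1) := by
    rw [load, load, ← sum_sub_distrib]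
    exact sum_congr rfl fun c _ => by rw [boosted]; ring
  rw [deviation, hdiff, sq, sum_mul_sum, mul_sum, Finset.sum_apply]
  refine sum_congr rfl fun c hc => ?_
  rw [mul_sum, Finset.sum_apply]
  refine sum_congr rfl fun c' hc' => ?_
  have hc := habsorb (mem_filter.1 hc).2 X
  have hc' := habsorb (mem_filter.1 hc').2 X
  simp only [Pi.smul_apply, Pi.add_apply, Pi.sub_apply, smul_eq_mul, ← alive_mul_alive,
    Pi.mul_apply]
  linear_combination (w c * w c' * s ^ 2 * alive e (e c') X - w c * w c' * s) * hc
    - (w c * w c' * s) * hc'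

/-- The tokens of the hyperedges other than `c` that meet `c`. -/
def conflicts (e : ι → Finset V) (c : ι) : Finset (ι ⊕ V) :=
  ({c' | c' ≠ c ∧ ¬Disjoint (e c') (e c)} : Finset ι).disjSum ∅

/-- The matching selected in a round of the nibble with token set `X`: the hyperedges that are
drawn while none of their conflicts is. -/
noncomputable def firstMatching (e : ι → Finset V) (w : ι → ℝ) (X : Finset (ι ⊕ V)) : Finset ι :=
  {c | w c ≠ 0 ∧ Sum.inl c ∈ X ∧ Disjoint X (conflicts e c)}

/-- The vertices of `S` that survive a round of the nibble with token set `X`. -/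
def survivors (e : ι → Finset V) (S : Finset V) (X : Finset (ι ⊕ V)) : Finset V :=
  {v ∈ S | Disjoint X (killers e v)}

/-- The expected loss per vertex in a round of the nibble, due to weighted degrees exceeding `1`
after boosting; `θ` is a free parameter of the estimate. -/
noncomputable def roundError (r : ℕ) (θ δ : ℝ) : ℝ := θ + θ⁻¹ * (4 ^ r * (5 * r ^ 2 * δ))

lemma boosted_eq_zero {c : ι} {v : V} (hv : v ∈ e c) {X : Finset (ι ⊕ V)}
    (hX : ¬Disjoint X (killers e v)) (s : ℝ) : boosted e w s X c = 0 := by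
  rw [boosted, alive_eq_zero_of_mem hv hX, mul_zero, mul_zero]

lemma isSupportMatching_firstMatching (X : Finset (ι ⊕ V)) :
    IsSupportMatching e w (firstMatching e w X) := by
  refine ⟨fun c hc => (mem_filter.1 hc).2.1, fun c hc d hd hcd => ?_⟩
  by_contra hmeet
  refine disjoint_left.1 (mem_filter.1 hd).2.2.2 (mem_filter.1 hc).2.2.1 ?_
  simpa [conflicts] using ⟨hcd, hmeet⟩

namespace IsUniformFracMatching

lemma load_boosted_le (h : IsUniformFracMatching e r δ S w) {θ : ℝ} (hθ : 0 < θ) (s : ℝ) (v : V)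
    (X : Finset (ι ⊕ V)) : load e (boosted e w s X) v ≤ 1 + (θ + θ⁻¹ * deviation e w s v X) := by
  by_cases hv : Disjoint X (killers e v)
  · have halive : alive e {v} X = 1 := if_pos (by rwa [singleton_biUnion])
    rw [deviation, halive, one_mul]
    set x := load e (boosted e w s X) v - load e w v
    have hAMGM : x ≤ θ + θ⁻¹ * x ^ 2 := by
      have : θ + θ⁻¹ * x ^ 2 - x = θ⁻¹ * ((θ - x / 2) ^ 2 + 3 / 4 * x ^ 2) := by field_simp; ring
      have : 0 ≤ θ⁻¹ * ((θ - x / 2) ^ 2 + 3 / 4 * x ^ 2) := by positivity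
      linarith
    linarith [h.load_le_one v]
  · have hzero : load e (boosted e w s X) v = 0 :=
      sum_eq_zero fun c hc => boosted_eq_zero (mem_filter.1 hc).2 hv s
    have := mul_nonneg (alive_nonneg (e := e) {v} X) (sq_nonneg (0 - load e w v))
    rw [deviation, hzero]
    positivity

lemma survivors_of_le_boosted (h : IsUniformFracMatching e r δ S w)
    (hη : η ∈ Set.Icc (0 : ℝ) (1 / 2)) {w' : ι → ℝ} {X : Finset (ι ⊕ V)} (h₀ : ∀ c, 0 ≤ w' c)
    (hle : ∀ c, w' c ≤ boosted e w (boost r η) X c) (hload : ∀ v, load e w' v ≤ 1) :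
    IsUniformFracMatching e r (2 ^ r * δ) (survivors e S X) w' := by
  have hne {c : ι} (hc : w' c ≠ 0) : boosted e w (boost r η) X c ≠ 0 :=
    (((h₀ c).lt_of_ne' hc).trans_le (hle c)).ne'
  have hle' (c : ι) : w' c ≤ 2 ^ r * w c :=
    calc w' c ≤ w c * (boost r η * alive e (e c) X) := hle c
      _ ≤ w c * (2 ^ r * 1) := mul_le_mul_of_nonneg_left (mul_le_mul (boost_le_two_pow hη)
          (alive_le_one _ _) (alive_nonneg _ _) (by positivity)) (h.nonneg c)
      _ = 2 ^ r * w c := by ring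
  refine ⟨h₀, fun c hc v hv => mem_filter.2 ⟨h.subset c (left_ne_zero_of_mul (hne hc)) hv, ?_⟩,
    fun c hc => h.nonempty c (left_ne_zero_of_mul (hne hc)),
    fun c hc => h.card_eq c (left_ne_zero_of_mul (hne hc)), hload, fun u v huv => ?_,
    mul_nonneg (by positivity) h.bound_nonneg⟩
  · by_contra hX
    exact hne hc (boosted_eq_zero hv hX _)
  · calc coload e w' u v ≤ coload e (fun c => 2 ^ r * w c) u v := coload_mono hle' u v
      _ = 2 ^ r * coload e w u v := (mul_sum _ _ _).symm
      _ ≤ 2 ^ r * δ := by gcongr; exact h.coload_le u v huv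

end IsUniformFracMatching

variable [Fintype V]

lemma bernoulliExp_alive (U : Finset V) :
    bernoulliExp (tokenProb e w η) (alive e U) = survivalProb e w η U :=
  bernoulliExp_disjoint _ _

lemma IsUniformFracMatching.bernoulliExp_deviation_le (h : IsUniformFracMatching e r δ S w)
    (hη : η ∈ Set.Icc (0 : ℝ) (1 / 2)) (v : V) :
    bernoulliExp (tokenProb e w η) (deviation e w (boost r η) v) ≤ 4 ^ r * (5 * r ^ 2 * δ) := by
  have hδ := h.bound_nonneg
  have hload₀ := load_nonneg (e := e) h.nonneg v
  have hinner (c : ι) (hc : w c ≠ 0) :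
      ∑ c' with v ∈ e c', w c' * (4 * r ^ 2 * δ + #{u ∈ (e c).erase v | u ∈ e c'}) ≤
        5 * r ^ 2 * δ := by
    simp only [mul_add (w _), sum_add_distrib, ← sum_mul]
    rw [← load]
    have := mul_le_of_le_one_left (by positivity : 0 ≤ 4 * r ^ 2 * δ) (h.load_le_one v)
    linarith [h.sum_mul_card_erase_le hc v]
  simp only [deviation_eq_sum, map_sum, map_smul, map_add, map_sub, bernoulliExp_alive,
    h.survivalProb_singleton hη, smul_eq_mul]
  calc _ ≤ ∑ c with v ∈ e c, ∑ c' with v ∈ e c', w c * w c' *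
          (boost r η ^ 2 * (4 * r ^ 2 * δ + #{u ∈ (e c).erase v | u ∈ e c'})) := by
        refine sum_le_sum fun c hc => sum_le_sum fun c' hc' => ?_
        by_cases hw : w c = 0
        · simp [hw]
        by_cases hw' : w c' = 0
        · simp [hw']
        exact mul_le_mul_of_nonneg_left (h.pair_correlation_le hη (mem_filter.1 hc).2
          (mem_filter.1 hc').2 hw hw') (mul_nonneg (h.nonneg c) (h.nonneg c'))
    _ = boost r η ^ 2 * ∑ c with v ∈ e c, w c * ∑ c' with v ∈ e c', w c' *
          (4 * r ^ 2 * δ + #{u ∈ (e c).erase v | u ∈ e c'}) := by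
        simp only [mul_sum]
        exact sum_congr rfl fun c _ => sum_congr rfl fun c' _ => by ring
    _ ≤ boost r η ^ 2 * ∑ c with v ∈ e c, w c * (5 * r ^ 2 * δ) := by
        refine mul_le_mul_of_nonneg_left (sum_le_sum fun c _ => ?_) (sq_nonneg _)
        by_cases hw : w c = 0
        · simp [hw]
        · exact mul_le_mul_of_nonneg_left (hinner c hw) (h.nonneg c)
    _ ≤ 4 ^ r * (1 * (5 * r ^ 2 * δ)) := by
        rw [← sum_mul, ← load]
        gcongr
        · exact boost_sq_le hη
        · exact h.load_le_one v
    _ = 4 ^ r * (5 * r ^ 2 * δ) := by rw [one_mul]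

namespace IsUniformFracMatching

lemma overload_boosted_le (h : IsUniformFracMatching e r δ S w) {θ : ℝ} (hθ : 0 < θ) (s : ℝ)
    (X : Finset (ι ⊕ V)) :
    overload e (boosted e w s X) ≤ ∑ v ∈ S, (θ + θ⁻¹ * deviation e w s v X) := by
  have hout (v : V) (hv : v ∉ S) : load e (boosted e w s X) v = 0 := by
    refine sum_eq_zero fun c hc => ?_
    have : w c = 0 := by
      by_contra hw
      exact hv (h.subset c hw (mem_filter.1 hc).2)
    rw [boosted, this, zero_mul]
  rw [overload, ← sum_subset (subset_univ S) fun v _ hv => by simp [hout v hv]]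
  refine sum_le_sum fun v _ => max_le ?_ (sub_le_iff_le_add'.2 (h.load_boosted_le hθ s v X))
  have := mul_nonneg (alive_nonneg (e := e) {v} X)
    (sq_nonneg (load e (boosted e w s X) v - load e w v))
  rw [deviation]
  positivity

section

variable (h : IsUniformFracMatching e r δ S w) (hη : η ∈ Set.Icc (0 : ℝ) (1 / 2))
include h hη

lemma le_bernoulliExp_inl_mem_and_disjoint_conflicts {c : ι} (hc : w c ≠ 0) :
    η * w c * (1 - η * r) ≤ bernoulliExp (tokenProb e w η)
      (fun X => if Sum.inl c ∈ X ∧ Disjoint X (conflicts e c) then 1 else 0) := by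
  have hsum : ∑ k ∈ conflicts e c, tokenProb e w η k ≤ η * r := by
    rw [conflicts, sum_disjSum, sum_empty, add_zero]
    simp only [tokenProb, Sum.elim_inl, ← mul_sum]
    refine mul_le_mul_of_nonneg_left ?_ hη.1
    rw [← h.card_eq c hc]
    refine le_trans (sum_le_sum_of_subset_of_nonneg (fun c' hc' => ?_) fun c' _ _ => h.nonneg c')
      (sum_filter_not_disjoint_le_card h.nonneg fun v _ => h.load_le_one v)
    exact mem_filter.2 ⟨mem_univ _, (mem_filter.1 hc').2.2⟩
  rw [bernoulliExp_mem_and_disjoint _ (by simp [conflicts])]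
  refine mul_le_mul_of_nonneg_left (le_trans (by linarith) (one_sub_sum_le_prod_one_sub _
    (fun k _ => (h.tokenProb_mem_Icc hη k).1) fun k _ => (h.tokenProb_mem_Icc hη k).2))
    (mul_nonneg hη.1 (h.nonneg c))

lemma le_bernoulliExp_card_firstMatching :
    (η - r * η ^ 2) * ∑ c, w c ≤
      bernoulliExp (tokenProb e w η) (fun X => #(firstMatching e w X)) := by
  have hcard : (fun X => (#(firstMatching e w X) : ℝ)) = ∑ c with w c ≠ 0,
      fun X => if Sum.inl c ∈ X ∧ Disjoint X (conflicts e c) then 1 else 0 := by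
    ext X
    rw [Finset.sum_apply, sum_boole, firstMatching, filter_filter]
  rw [hcard, map_sum, ← sum_filter_ne_zero, mul_sum]
  exact sum_le_sum fun c hc => le_trans (le_of_eq (by ring))
    (h.le_bernoulliExp_inl_mem_and_disjoint_conflicts hη (mem_filter.1 hc).2)

lemma le_bernoulliExp_sum_boosted :
    (1 - η) * ∑ c, w c ≤
      bernoulliExp (tokenProb e w η) (fun X => ∑ c, boosted e w (boost r η) X c) := by
  have hsum : (fun X => ∑ c, boosted e w (boost r η) X c) =
      ∑ c, (w c * boost r η) • alive e (e c) := by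
    ext X
    simp [boosted, Finset.sum_apply, mul_assoc]
  simp only [hsum, map_sum, map_smul, bernoulliExp_alive, smul_eq_mul, mul_sum]
  refine sum_le_sum fun c _ => ?_
  by_cases hc : w c = 0
  · simp [hc]
  · rw [mul_comm, mul_assoc]
    exact mul_le_mul_of_nonneg_left (h.one_sub_le_boost_mul_survivalProb hη hc) (h.nonneg c)

lemma bernoulliExp_card_survivors :
    bernoulliExp (tokenProb e w η) (fun X => #(survivors e S X)) = (1 - η) * #S := by
  have hcard : (fun X => (#(survivors e S X) : ℝ)) = ∑ v ∈ S, alive e {v} := by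
    ext X
    simp [survivors, alive, Finset.sum_apply]
  rw [hcard, map_sum, sum_congr rfl fun v _ => (bernoulliExp_alive {v}).trans
    (h.survivalProb_singleton hη v), sum_const, nsmul_eq_mul, mul_comm]

lemma bernoulliExp_overload_boosted_le {θ : ℝ} (hθ : 0 < θ) :
    bernoulliExp (tokenProb e w η) (fun X => overload e (boosted e w (boost r η) X)) ≤
      roundError r θ δ * #S := by
  have hsum : (fun X => ∑ v ∈ S, (θ + θ⁻¹ * deviation e w (boost r η) v X)) =
      ∑ v ∈ S, ((fun _ => θ) + θ⁻¹ • deviation e w (boost r η) v) := by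
    ext X
    simp [Finset.sum_apply]
  refine (bernoulliExp_mono (h.tokenProb_mem_Icc hη)
    (h.overload_boosted_le hθ (boost r η))).trans ?_
  simp only [hsum, map_sum, map_add, map_smul, bernoulliExp_const, smul_eq_mul]
  rw [mul_comm, ← nsmul_eq_mul]
  refine sum_le_card_nsmul _ _ _ fun v _ => ?_
  rw [roundError]
  gcongr
  exact h.bernoulliExp_deviation_le hη v

lemma exists_round_outcome {θ : ℝ} (hθ : 0 < θ) {a : ℝ} (ha : a ∈ Set.Icc (0 : ℝ) 1) (b : ℝ) :
    ∃ X, ((1 - η) * a + η - r * η ^ 2) * ∑ c, w c - ((1 - η) * b + roundError r θ δ) * #S ≤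
      #(firstMatching e w X) + a * (∑ c, boosted e w (boost r η) X c
        - overload e (boosted e w (boost r η) X)) - b * #(survivors e S X) := by
  set f : Finset (ι ⊕ V) → ℝ := (fun X => (#(firstMatching e w X) : ℝ)) +
    a • ((fun X => ∑ c, boosted e w (boost r η) X c)
      - fun X => overload e (boosted e w (boost r η) X)) - b • fun X => (#(survivors e S X) : ℝ)
  obtain ⟨X, hX⟩ := exists_bernoulliExp_le (h.tokenProb_mem_Icc hη) f
  refine ⟨X, le_trans ?_ hX⟩
  simp only [f, map_sub, map_add, map_smul, smul_eq_mul, h.bernoulliExp_card_survivors hη]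
  have herr : 0 ≤ roundError r θ δ * #S := by
    have := h.bound_nonneg
    unfold roundError
    positivity
  nlinarith [h.le_bernoulliExp_card_firstMatching hη, mul_le_of_le_one_left herr ha.2,
    mul_le_mul_of_nonneg_left (h.le_bernoulliExp_sum_boosted hη) ha.1,
    mul_le_mul_of_nonneg_left (h.bernoulliExp_overload_boosted_le hη hθ) ha.1]

omit [DecidableEq ι] [Fintype V] in
lemma exists_nibble_round [Finite V] {θ : ℝ} (hθ : 0 < θ) {a : ℝ} (ha : a ∈ Set.Icc (0 : ℝ) 1)
    (b : ℝ) :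
    ∃ M S' w', IsSupportMatching e w M ∧ IsUniformFracMatching e r (2 ^ r * δ) S' w' ∧
      (∀ d, w' d ≠ 0 → w d ≠ 0 ∧ ∀ c ∈ M, Disjoint (e c) (e d)) ∧
      ((1 - η) * a + η - r * η ^ 2) * ∑ c, w c - ((1 - η) * b + roundError r θ δ) * #S ≤
        #M + (a * ∑ c, w' c - b * #S') := by
  classical
  cases nonempty_fintype V
  obtain ⟨X, hX⟩ := h.exists_round_outcome hη hθ ha b
  obtain ⟨w', h₀, hle, hload, hsum⟩ := exists_le_of_load_le_one (e := e)
    (w := boosted e w (boost r η) X) fun c =>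
      mul_nonneg (h.nonneg c) (mul_nonneg (boost_nonneg hη) (alive_nonneg _ _))
  have hw' := h.survivors_of_le_boosted hη h₀ hle hload
  refine ⟨firstMatching e w X, survivors e S X, w', isSupportMatching_firstMatching X, hw',
    fun d hd => ⟨fun hw => hd (le_antisymm ((hle d).trans_eq ?_) (h₀ d)), fun c hc => ?_⟩, ?_⟩
  · rw [boosted, hw, zero_mul]
  · refine disjoint_left.2 fun v hv hvd => ?_
    have hsurv := (mem_filter.1 (hw'.subset d hd hvd)).2
    exact disjoint_left.1 hsurv (mem_filter.1 hc).2.2.1 (by simpa [killers] using hv)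
  · linarith [mul_le_mul_of_nonneg_left hsum ha.1]

end

end IsUniformFracMatching

omit [Fintype ι] [DecidableEq V] [Fintype V] in
lemma IsSupportMatching.union {w' : ι → ℝ} {M M' : Finset ι} (hM : IsSupportMatching e w M)
    (hM' : IsSupportMatching e w' M')
    (hcross : ∀ d, w' d ≠ 0 → w d ≠ 0 ∧ ∀ c ∈ M, Disjoint (e c) (e d)) :
    IsSupportMatching e w (M ∪ M') := by
  refine ⟨fun c hc => ?_, ?_⟩
  · exact (mem_union.1 hc).elim (hM.1 c) fun hc => (hcross c (hM'.1 c hc)).1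
  · rw [coe_union, Set.pairwise_union]
    refine ⟨hM.2, hM'.2, fun c hc d hd _ => ?_⟩
    have := (hcross d (hM'.1 d hd)).2 c hc
    exact ⟨this, this.symm⟩

omit [DecidableEq ι] [Fintype V] in
lemma roundError_mono {θ δ' : ℝ} (hθ : 0 < θ) (h : δ ≤ δ') :
    roundError r θ δ ≤ roundError r θ δ' := by
  unfold roundError
  gcongr

lemma exists_roundError_le (r : ℕ) {θ : ℝ} (hθ : 0 < θ) : ∃ δ > 0, roundError r θ δ ≤ 2 * θ := by
  set C : ℝ := 4 ^ r * (5 * r ^ 2)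
  have : 0 ≤ C := by positivity
  refine ⟨θ ^ 2 / (C + 1), by positivity, ?_⟩
  have : θ⁻¹ * (C * (θ ^ 2 / (C + 1))) ≤ θ := by
    rw [← div_eq_inv_mul, div_le_iff₀ hθ, mul_div_assoc', div_le_iff₀ (by positivity)]
    nlinarith [sq_nonneg θ]
  rw [roundError, ← mul_assoc (4 ^ r)]
  linarith

omit [DecidableEq ι] [Fintype V] in
lemma IsUniformFracMatching.exists_isSupportMatching_after_rounds [Finite V] {θ δ' : ℝ}
    (hη : η ∈ Set.Ioc (0 : ℝ) (1 / 2)) (hθ : 0 < θ) (t : ℕ) {δ : ℝ} {S : Finset V} {w : ι → ℝ}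
    (h : IsUniformFracMatching e r δ S w) (hδ : (2 ^ r) ^ t * δ ≤ δ') :
    ∃ M, IsSupportMatching e w M ∧
      (1 - (1 - η) ^ t) * ∑ c, w c - (r * η + roundError r θ δ' / η) * #S ≤ #M := by
  classical
  have hη' : 0 ≤ 1 - η := by linarith [hη.2]
  induction t generalizing δ S w with
  | zero =>
    refine ⟨∅, ⟨by simp, by simp⟩, ?_⟩
    have hδ' : 0 ≤ δ' := h.bound_nonneg.trans (by simpa using hδ)
    have : 0 ≤ (r * η + roundError r θ δ' / η) * #S := by
      have := hη.1
      unfold roundError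
      positivity
    simpa using this
  | succ t ih =>
    set E := roundError r θ δ'
    have hpow : (1 - η) ^ t ∈ Set.Icc (0 : ℝ) 1 :=
      ⟨pow_nonneg hη' t, pow_le_one₀ hη' (by linarith [hη.1])⟩
    have hδδ' : δ ≤ δ' :=
      (le_mul_of_one_le_left h.bound_nonneg
        (one_le_pow₀ (one_le_pow₀ one_le_two))).trans hδ
    obtain ⟨M₀, S', w', hM₀, hw', hcross, hround⟩ := h.exists_nibble_round ⟨hη.1.le, hη.2⟩ hθ
      (a := 1 - (1 - η) ^ t) ⟨sub_nonneg.2 hpow.2, sub_le_self 1 hpow.1⟩ (r * η + E / η)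
    obtain ⟨M', hM', hcard⟩ := ih hw' (by rwa [← mul_assoc, ← pow_succ])
    have hdisj : Disjoint M₀ M' := disjoint_left.2 fun c hc hc' => by
      have hc' := hM'.1 c hc'
      exact (hw'.nonempty c hc').ne_empty ((hcross c hc').2 c hc).eq_bot_of_self
    refine ⟨M₀ ∪ M', hM₀.union hM' hcross, ?_⟩
    have hloss : r * η ^ 2 * ∑ c, w c ≤ r * η ^ 2 * #S := by gcongr; exact h.sum_le_card
    have herr : roundError r θ δ * #S ≤ E * #S := by gcongr; exact roundError_mono hθ hδδ'
    have hE : E / η * η = E := div_mul_cancel₀ _ hη.1.ne'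
    rw [card_union_of_disjoint hdisj, pow_succ]
    push_cast
    linear_combination hround + hcard + hloss + herr - #S * hE

end Nibble

lemma exists_isSupportMatching_sum_sub_le (r : ℕ) {ε : ℝ} (hε : 0 < ε) : ∃ δ > 0,
    ∀ {ι : Type u} {V : Type v} [Fintype ι] [Finite V] [DecidableEq V] (e : ι → Finset V)
      (S : Finset V) (w : ι → ℝ), IsUniformFracMatching e r δ S w →
      ∃ M, IsSupportMatching e w M ∧ ∑ c, w c - ε * #S ≤ #M := by
  classical
  obtain ⟨η, hη, hrη⟩ : ∃ η ∈ Set.Ioc (0 : ℝ) (1 / 2), r * η ≤ ε / 4 := by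
    refine ⟨min (1 / 2) (ε / (4 * (r + 1))), ⟨by positivity, min_le_left _ _⟩, ?_⟩
    calc r * min (1 / 2) (ε / (4 * (r + 1))) ≤ (r + 1) * (ε / (4 * (r + 1))) := by
          gcongr
          · linarith
          · exact min_le_right _ _
      _ = ε / 4 := by field_simp
  obtain ⟨t, ht⟩ := exists_pow_lt_of_lt_one (show 0 < ε / 4 by positivity)
    (show 1 - η < 1 by linarith [hη.1])
  have hη₀ := hη.1
  obtain ⟨δ, hδ₀, hδ⟩ := exists_roundError_le r (show 0 < η * (ε / 4) by positivity)
  refine ⟨δ / (2 ^ r) ^ t, by positivity, fun e S w h => ?_⟩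
  obtain ⟨M, hM, hcard⟩ := h.exists_isSupportMatching_after_rounds hη
    (show 0 < η * (ε / 4) by positivity) t (δ' := δ) (mul_div_cancel₀ _ (by positivity)).le
  refine ⟨M, hM, le_trans ?_ hcard⟩
  have hunmatched : (1 - η) ^ t * ∑ c, w c ≤ ε / 4 * #S :=
    mul_le_mul ht.le h.sum_le_card (sum_nonneg fun c _ => h.nonneg c) (by positivity)
  have herr : roundError r (η * (ε / 4)) δ / η ≤ ε / 2 := by
    rw [div_le_iff₀ hη₀]
    linarith
  have : (r * η + roundError r (η * (ε / 4)) δ / η) * #S ≤ (ε / 4 + ε / 2) * #S := by gcongr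
  linarith

section CountingLemma

variable {W V : Type*}

/-- The cut norm of `f` on `A × B`, divided by the size of `A × B`, is at most `ε`. -/
def CutNormLE (f : V → V → ℝ) (A B : Finset V) (ε : ℝ) : Prop :=
  ∀ A' ⊆ A, ∀ B' ⊆ B, |∑ u ∈ A', ∑ v ∈ B', f u v| ≤ ε * (#A * #B)

lemma abs_sum_mul_le {A : Finset V} {f P : V → ℝ} {K : ℝ} (hP : ∀ u, |P u| ≤ 1)
    (hK : ∀ A' ⊆ A, |∑ u ∈ A', f u| ≤ K) : |∑ u ∈ A, P u * f u| ≤ 2 * K := by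
  have hpos : ∑ u ∈ A with 0 ≤ f u, |f u| ≤ K := by
    rw [sum_congr rfl fun u hu => abs_of_nonneg (mem_filter.1 hu).2]
    exact (le_abs_self _).trans (hK _ (filter_subset _ _))
  have hneg : ∑ u ∈ A with ¬0 ≤ f u, |f u| ≤ K := by
    rw [sum_congr rfl fun u hu => abs_of_neg (not_le.1 (mem_filter.1 hu).2), sum_neg_distrib]
    exact (neg_le_abs _).trans (hK _ (filter_subset _ _))
  calc |∑ u ∈ A, P u * f u| ≤ ∑ u ∈ A, |f u| := by
        refine (abs_sum_le_sum_abs _ _).trans (sum_le_sum fun u _ => ?_)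
        rw [abs_mul]
        exact mul_le_of_le_one_left (abs_nonneg _) (hP u)
    _ ≤ 2 * K := by
        rw [← sum_filter_add_sum_filter_not A (0 ≤ f ·)]
        linarith

lemma CutNormLE.abs_sum_mul_mul_le {A B : Finset V} {f : V → V → ℝ} {ε : ℝ} {P Q : V → ℝ}
    (h : CutNormLE f A B ε) (hP : ∀ u, |P u| ≤ 1) (hQ : ∀ v, |Q v| ≤ 1) :
    |∑ u ∈ A, ∑ v ∈ B, P u * Q v * f u v| ≤ 4 * (ε * (#A * #B)) := by
  have hrow (A') (hA' : A' ⊆ A) :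
      |∑ u ∈ A', ∑ v ∈ B, Q v * f u v| ≤ 2 * (ε * (#A * #B)) := by
    rw [sum_comm]
    simp only [← mul_sum]
    refine abs_sum_mul_le hQ fun B' hB' => ?_
    rw [sum_comm]
    exact h A' hA' B' hB'
  have := abs_sum_mul_le hP hrow
  simp only [mul_sum, ← mul_assoc (P _)] at this
  linarith

lemma CutNormLE.abs_expect_mul_mul_le {A B : Finset V} {f : V → V → ℝ} {ε : ℝ} {P Q : V → ℝ}
    (h : CutNormLE f A B ε) (hA : A.Nonempty) (hB : B.Nonempty) (hP : ∀ u, |P u| ≤ 1)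
    (hQ : ∀ v, |Q v| ≤ 1) : |𝔼 u ∈ A, 𝔼 v ∈ B, P u * Q v * f u v| ≤ 4 * ε := by
  have := hA.card_pos
  have := hB.card_pos
  simp only [expect_eq_sum_div_card, ← sum_div, div_div]
  rw [abs_div, abs_of_pos (show (0 : ℝ) < #B * #A by positivity), div_le_iff₀ (by positivity)]
  linarith [h.abs_sum_mul_mul_le hP hQ]

lemma cutNormLE_adj_sub_edgeDensity {G : SimpleGraph V} [DecidableRel G.Adj]
    {ε : ℝ} {A B : Finset V} (h : G.IsUniform ε A B) :
    CutNormLE (fun u v => (if G.Adj u v then 1 else 0) - (G.edgeDensity A B : ℝ)) A B ε := by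
  classical
  intro A' hA' B' hB'
  have hε := h.pos
  have hcA : (#A' : ℝ) ≤ #A := by exact_mod_cast card_le_card hA'
  have hcB : (#B' : ℝ) ≤ #B := by exact_mod_cast card_le_card hB'
  have hsum : ∑ u ∈ A', ∑ v ∈ B', ((if G.Adj u v then 1 else 0) - (G.edgeDensity A B : ℝ)) =
      ((G.edgeDensity A' B' : ℝ) - G.edgeDensity A B) * (#A' * #B') := by
    have : (G.edgeDensity A' B' : ℝ) * (#A' * #B') = #(G.interedges A' B') := by
      rw [SimpleGraph.edgeDensity_def]
      push_cast
      refine div_mul_cancel_of_imp fun h => ?_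
      have := G.card_interedges_le_mul A' B'
      have h : #A' * #B' = 0 := by exact_mod_cast h
      exact_mod_cast Nat.le_zero.1 (h ▸ this)
    rw [sub_mul, this, ← sum_product', sum_sub_distrib, sum_boole, sum_const, card_product]
    simp [SimpleGraph.interedges, Rel.interedges, mul_comm]
  have hdist : |(G.edgeDensity A' B' : ℝ) - G.edgeDensity A B| ≤ 1 := by
    have h₀ (A B : Finset V) : (0 : ℝ) ≤ G.edgeDensity A B := by
      exact_mod_cast G.edgeDensity_nonneg A B
    have h₁ (A B : Finset V) : (G.edgeDensity A B : ℝ) ≤ 1 := by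
      exact_mod_cast G.edgeDensity_le_one A B
    exact abs_sub_le_of_nonneg_of_le (h₀ _ _) (h₁ _ _) (h₀ _ _) (h₁ _ _)
  rw [hsum, abs_mul, abs_of_nonneg (show (0 : ℝ) ≤ #A' * #B' by positivity)]
  rcases lt_or_ge (#A' : ℝ) (#A * ε) with hA | hA
  · calc _ ≤ 1 * (#A * ε * (#B : ℝ)) := by gcongr
      _ = _ := by ring
  rcases lt_or_ge (#B' : ℝ) (#B * ε) with hB | hB
  · calc _ ≤ 1 * ((#A : ℝ) * (#B * ε)) := by gcongr
      _ = _ := by ring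
  · gcongr
    exact (h hA' hB' hA hB).le

/-- With all coordinates but `i` and `j` fixed, `Φ` is the product of a bounded function of the
coordinate `i` and a bounded function of the coordinate `j`. -/
def SplitsAt [DecidableEq W] (i j : W) (Φ : (W → V) → ℝ) : Prop :=
  ∀ z, ∃ P Q : V → ℝ, (∀ u, |P u| ≤ 1) ∧ (∀ v, |Q v| ≤ 1) ∧
    ∀ u v, Φ (Function.update (Function.update z i u) j v) = P u * Q v

namespace SplitsAt

variable [DecidableEq W] {i j : W} {Φ Ψ : (W → V) → ℝ}

lemma one (i j : W) : SplitsAt i j fun _ : W → V => 1 := fun _ =>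
  ⟨fun _ => 1, fun _ => 1, by simp, by simp, by simp⟩

lemma mul (hΦ : SplitsAt i j Φ) (hΨ : SplitsAt i j Ψ) : SplitsAt i j fun z => Φ z * Ψ z := by
  intro z
  obtain ⟨P, Q, hP, hQ, hPQ⟩ := hΦ z
  obtain ⟨P', Q', hP', hQ', hPQ'⟩ := hΨ z
  refine ⟨fun u => P u * P' u, fun v => Q v * Q' v, fun u => ?_, fun v => ?_, fun u v => ?_⟩
  · exact (abs_mul _ _).trans_le (mul_le_one₀ (hP u) (abs_nonneg _) (hP' u))
  · exact (abs_mul _ _).trans_le (mul_le_one₀ (hQ v) (abs_nonneg _) (hQ' v))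
  · simp only [hPQ, hPQ']
    ring

lemma prod {α : Type*} (s : Finset α) {Φ : α → (W → V) → ℝ} (h : ∀ a ∈ s, SplitsAt i j (Φ a)) :
    SplitsAt i j fun z => ∏ a ∈ s, Φ a z := by
  induction s using Finset.cons_induction with
  | empty => simpa using one i j
  | cons a s ha ih =>
    rw [forall_mem_cons] at h
    simpa only [prod_cons] using h.1.mul (ih h.2)

lemma map_sym2 (hij : i ≠ j) {e : Sym2 W} (he : e ≠ s(i, j)) {g : Sym2 V → ℝ}
    (hg : ∀ e, |g e| ≤ 1) : SplitsAt i j fun z => g (e.map z) := by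
  intro z
  have hmap {k : W} (hk : k ∉ e) (z : W → V) (u : V) : e.map (Function.update z k u) = e.map z :=
    Sym2.map_congr fun l hl => Function.update_of_ne (ne_of_mem_of_not_mem hl hk) _ _
  by_cases hj : j ∈ e
  · have hi : i ∉ e := fun hi => he ((Sym2.mem_and_mem_iff hij).1 ⟨hi, hj⟩)
    exact ⟨fun _ => 1, fun v => g (e.map (Function.update z j v)), by simp, fun _ => hg _,
      fun u v => by simp only [Function.update_comm hij, hmap hi, one_mul]⟩
  · exact ⟨fun u => g (e.map (Function.update z i u)), fun _ => 1, fun _ => hg _, by simp,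
      fun u v => by simp only [hmap hj, mul_one]⟩

end SplitsAt

variable [Fintype W] [DecidableEq W] {A : W → Finset V} {ε : ℝ} {Φ : (W → V) → ℝ}

lemma expect_piFinset_update (A : W → Finset V) (i : W) (Φ : (W → V) → ℝ) :
    𝔼 z ∈ Fintype.piFinset A, 𝔼 u ∈ A i, Φ (Function.update z i u) =
      𝔼 z ∈ Fintype.piFinset A, Φ z := by
  have hswap : ∀ x ∈ Fintype.piFinset A ×ˢ A i,
      (Function.update x.1 i x.2, x.1 i) ∈ Fintype.piFinset A ×ˢ A i := by
    simp only [mem_product, Fintype.mem_piFinset]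
    refine fun x hx => ⟨fun j => ?_, hx.1 i⟩
    rcases eq_or_ne j i with rfl | h
    · simpa using hx.2
    · simpa [h] using hx.1 j
  calc 𝔼 z ∈ Fintype.piFinset A, 𝔼 u ∈ A i, Φ (Function.update z i u)
      = 𝔼 z ∈ Fintype.piFinset A, 𝔼 _u ∈ A i, Φ z := by
        rw [← expect_product', ← expect_product']
        exact expect_nbij' (fun x => (Function.update x.1 i x.2, x.1 i))
          (fun x => (Function.update x.1 i x.2, x.1 i)) hswap hswap (by simp) (by simp) (by simp)
    _ = 𝔼 z ∈ Fintype.piFinset A, Φ z :=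
        expect_congr rfl fun z hz => expect_const ⟨z i, Fintype.mem_piFinset.1 hz i⟩ _

lemma expect_piFinset_update₂ (A : W → Finset V) (i j : W) (Φ : (W → V) → ℝ) :
    𝔼 z ∈ Fintype.piFinset A, 𝔼 u ∈ A i, 𝔼 v ∈ A j,
        Φ (Function.update (Function.update z i u) j v) = 𝔼 z ∈ Fintype.piFinset A, Φ z := by
  rw [expect_piFinset_update A i fun z => 𝔼 v ∈ A j, Φ (Function.update z j v),
    expect_piFinset_update]

lemma expect_piFinset_apply₂ (hA : ∀ k, (A k).Nonempty) {i j : W} (hij : i ≠ j) (f : V → V → ℝ) :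
    𝔼 z ∈ Fintype.piFinset A, f (z i) (z j) = 𝔼 u ∈ A i, 𝔼 v ∈ A j, f u v := by
  rw [← expect_piFinset_update₂ A i j]
  simp [hij, expect_const (Fintype.piFinset_nonempty.2 hA)]

lemma abs_expect_mul_le_of_splitsAt (hA : ∀ k, (A k).Nonempty) {i j : W} (hij : i ≠ j)
    (hΦ : SplitsAt i j Φ) {f : V → V → ℝ} (hf : CutNormLE f (A i) (A j) ε) :
    |𝔼 z ∈ Fintype.piFinset A, Φ z * f (z i) (z j)| ≤ 4 * ε := by
  rw [← expect_piFinset_update₂ A i j]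
  refine (abs_expect_le _ _).trans
    (expect_le (Fintype.piFinset_nonempty.2 hA) fun z _ => ?_)
  obtain ⟨P, Q, hP, hQ, hPQ⟩ := hΦ z
  simpa [hPQ, hij] using hf.abs_expect_mul_mul_le (hA i) (hA j) hP hQ

/-- The counting lemma in its weighted form: inside `Φ`, the factors `g (e.map z)` may be replaced
by their means `d e`. -/
lemma abs_expect_mul_prod_sub_le (hA : ∀ k, (A k).Nonempty) (F : Finset (Sym2 W))
    (hF : ∀ e ∈ F, ¬e.IsDiag) {g : Sym2 V → ℝ} (hg : ∀ e, |g e| ≤ 1) {d : Sym2 W → ℝ}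
    (hd : ∀ e, |d e| ≤ 1)
    (hcut : ∀ i j, s(i, j) ∈ F → CutNormLE (fun u v => g s(u, v) - d s(i, j)) (A i) (A j) ε)
    (hΦ : ∀ i j, s(i, j) ∈ F → SplitsAt i j Φ) :
    |𝔼 z ∈ Fintype.piFinset A, Φ z * ∏ e ∈ F, g (e.map z) -
      (∏ e ∈ F, d e) * 𝔼 z ∈ Fintype.piFinset A, Φ z| ≤ #F * (4 * ε) := by
  induction F using Finset.cons_induction with
  | empty => simp
  | cons e F he ih =>
    induction e using Sym2.inductionOn with | _ i j
    have hij : i ≠ j := hF _ (mem_cons_self _ _)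
    set Ψ : (W → V) → ℝ := fun z => Φ z * ∏ e ∈ F, g (e.map z)
    have hΨ : SplitsAt i j Ψ := (hΦ i j (mem_cons_self _ _)).mul <| SplitsAt.prod F fun f hf =>
      .map_sym2 hij (ne_of_mem_of_not_mem hf he) hg
    have hstep := abs_expect_mul_le_of_splitsAt hA hij hΨ (hcut i j (mem_cons_self _ _))
    have ih := ih (fun f hf => hF f (mem_cons_of_mem hf))
      (fun k l h => hcut k l (mem_cons_of_mem h)) (fun k l h => hΦ k l (mem_cons_of_mem h))
    have hdih := (abs_mul (d s(i, j)) _).trans_le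
      (mul_le_of_le_one_left (abs_nonneg _) (hd s(i, j))) |>.trans ih
    have hsplit : 𝔼 z ∈ Fintype.piFinset A, Φ z * ∏ e ∈ cons s(i, j) F he, g (e.map z) =
        𝔼 z ∈ Fintype.piFinset A, Ψ z * (g s(z i, z j) - d s(i, j)) +
          d s(i, j) * 𝔼 z ∈ Fintype.piFinset A, Ψ z := by
      rw [mul_expect, ← expect_add_distrib]
      refine expect_congr rfl fun z _ => ?_
      rw [prod_cons, Sym2.map_mk]
      ring
    rw [hsplit, prod_cons, card_cons, mul_assoc, add_sub_assoc, ← mul_sub]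
    push_cast
    linarith [abs_add_le (𝔼 z ∈ Fintype.piFinset A, Ψ z * (g s(z i, z j) - d s(i, j)))
      (d s(i, j) * (𝔼 z ∈ Fintype.piFinset A, Ψ z -
        (∏ e ∈ F, d e) * 𝔼 z ∈ Fintype.piFinset A, Φ z))]

end CountingLemma

section PartiteHoms

lemma expect_filter {α : Type*} (s : Finset α) (p : α → Prop) [DecidablePred p] (f : α → ℝ) :
    𝔼 a ∈ s with p a, f a =
      (𝔼 a ∈ s, if p a then f a else 0) / 𝔼 a ∈ s, if p a then 1 else 0 := by
  rcases s.eq_empty_or_nonempty with rfl | hs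
  · simp
  · have := hs.card_pos
    simp only [expect_eq_sum_div_card, ← sum_filter, sum_const, nsmul_one]
    field_simp

lemma abs_div_sub_div_le {X T Y Y₁ D K c : ℝ} (hc : 0 < c) (hT : c ≤ T) (hTY : T ≤ Y₁)
    (hX : |X - D * Y| ≤ K) (hT' : |T - D * Y₁| ≤ K) (hY : |Y| ≤ Y₁) :
    |X / T - Y / Y₁| ≤ 2 * K / c := by
  have hT₀ : 0 < T := hc.trans_le hT
  have hY₀ : 0 < Y₁ := hT₀.trans_le hTY
  have hdiff : X / T - Y / Y₁ = ((X - D * Y) - Y / Y₁ * (T - D * Y₁)) / T := by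
    field_simp
    ring
  have hratio : |Y / Y₁| ≤ 1 := by
    rw [abs_div, abs_of_pos hY₀]
    exact div_le_one_of_le₀ hY hY₀.le
  have hnum : |(X - D * Y) - Y / Y₁ * (T - D * Y₁)| ≤ K + 1 * K :=
    (abs_sub _ _).trans (add_le_add hX (by rw [abs_mul]; gcongr))
  rw [hdiff, abs_div, abs_of_pos hT₀]
  exact (div_le_div₀ (by linarith [(abs_nonneg _).trans hX]) hnum hc hT).trans_eq (by ring)

variable {W V : Type*} [Fintype W] [DecidableEq W] (H : SimpleGraph W)
  [Fintype H.edgeSet] (G : SimpleGraph V) [DecidableRel G.Adj] {A : W → Finset V} {ε c : ℝ}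

/-- The homomorphisms from `H` to `G` that send each vertex `k` into the prescribed set `A k`. -/
def partiteHoms (A : W → Finset V) : Finset (W → V) :=
  {z ∈ Fintype.piFinset A | ∀ e ∈ H.edgeFinset, e.map z ∈ G.edgeSet}

variable {H G} in
lemma expect_ite_forall_mem_edgeSet (A : W → Finset V) :
    𝔼 z ∈ Fintype.piFinset A, (if ∀ e ∈ H.edgeFinset, e.map z ∈ G.edgeSet then 1 else 0 : ℝ) =
      #(partiteHoms H G A) / ∏ k, (#(A k) : ℝ) := by
  simp [expect_eq_sum_div_card, partiteHoms, Fintype.card_piFinset]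

variable {H G} in
lemma ite_mem_edgeSet_mul_prod_erase {f : Sym2 W} (hf : f ∈ H.edgeFinset) (z : W → V) (a : ℝ) :
    (if f.map z ∈ G.edgeSet then a else 0) *
        ∏ e ∈ H.edgeFinset.erase f, (if e.map z ∈ G.edgeSet then 1 else 0) =
      if ∀ e ∈ H.edgeFinset, e.map z ∈ G.edgeSet then a else 0 := by
  have hiff : (∀ e ∈ H.edgeFinset, e.map z ∈ G.edgeSet) ↔
      (∀ e ∈ H.edgeFinset.erase f, e.map z ∈ G.edgeSet) ∧ f.map z ∈ G.edgeSet := by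
    refine ⟨fun h => ⟨fun e he => h e (mem_of_mem_erase he), h f hf⟩, fun h e he => ?_⟩
    rcases eq_or_ne e f with rfl | hne
    exacts [h.2, h.1 e (mem_erase.2 ⟨hne, he⟩)]
  simp only [prod_ite_zero, prod_const_one, hiff, ite_and, mul_ite, mul_one, mul_zero]

variable {G} in
lemma expect_interedges (hA : ∀ k, (A k).Nonempty) {i j : W} (hij : i ≠ j) (σ : Sym2 V → ℝ) :
    𝔼 q ∈ G.interedges (A i) (A j), σ s(q.1, q.2) =
      (𝔼 z ∈ Fintype.piFinset A, if G.Adj (z i) (z j) then σ s(z i, z j) else 0) /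
        𝔼 z ∈ Fintype.piFinset A, if G.Adj (z i) (z j) then 1 else 0 := by
  rw [expect_piFinset_apply₂ hA hij fun u v => if G.Adj u v then σ s(u, v) else 0,
    expect_piFinset_apply₂ hA hij fun u v => if G.Adj u v then 1 else 0,
    ← expect_product', ← expect_product', ← expect_filter]
  rfl

/-- The edge density of `G` between the sets assigned to the two ends of an edge. -/
def pairDensity (A : W → Finset V) : Sym2 W → ℝ :=
  Sym2.lift ⟨fun i j => G.edgeDensity (A i) (A j),
    fun _ _ => congrArg _ (G.edgeDensity_comm _ _)⟩

variable {H G}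

lemma abs_expect_mul_prod_mem_edgeSet_sub_le (hA : ∀ k, (A k).Nonempty)
    (hu : ∀ i j, H.Adj i j → G.IsUniform ε (A i) (A j)) {F : Finset (Sym2 W)}
    (hF : F ⊆ H.edgeFinset) {Φ : (W → V) → ℝ} (hΦ : ∀ i j, s(i, j) ∈ F → SplitsAt i j Φ) :
    |𝔼 z ∈ Fintype.piFinset A, Φ z * ∏ e ∈ F, (if e.map z ∈ G.edgeSet then 1 else 0) -
      (∏ e ∈ F, pairDensity G A e) * 𝔼 z ∈ Fintype.piFinset A, Φ z| ≤
      #F * (4 * ε) := by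
  refine abs_expect_mul_prod_sub_le hA F
    (fun e he => H.not_isDiag_of_mem_edgeSet (SimpleGraph.mem_edgeFinset.1 (hF he)))
    (g := fun e => if e ∈ G.edgeSet then 1 else 0) (fun e => by split_ifs <;> simp)
    (fun e => ?_) (fun i j he => ?_) hΦ
  · induction e using Sym2.inductionOn with | _ i j
    have h₀ : (0 : ℝ) ≤ G.edgeDensity (A i) (A j) := by exact_mod_cast G.edgeDensity_nonneg _ _
    have h₁ : (G.edgeDensity (A i) (A j) : ℝ) ≤ 1 := by exact_mod_cast G.edgeDensity_le_one _ _
    exact (abs_of_nonneg h₀).trans_le h₁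
  · exact cutNormLE_adj_sub_edgeDensity (hu i j (SimpleGraph.mem_edgeFinset.1 (hF he)))

lemma le_card_partiteHoms (hA : ∀ k, (A k).Nonempty)
    (hu : ∀ i j, H.Adj i j → G.IsUniform ε (A i) (A j)) {d : ℝ} (hd : 0 ≤ d)
    (hdens : ∀ i j, H.Adj i j → d ≤ G.edgeDensity (A i) (A j)) :
    (d ^ #H.edgeFinset - #H.edgeFinset * (4 * ε)) * ∏ k, (#(A k) : ℝ) ≤
      #(partiteHoms H G A) := by
  have hprod : (0 : ℝ) < ∏ k, (#(A k) : ℝ) :=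
    prod_pos fun k _ => by exact_mod_cast (hA k).card_pos
  have hcount := abs_expect_mul_prod_mem_edgeSet_sub_le hA hu subset_rfl fun i j _ => .one i j
  simp only [one_mul, prod_ite_zero, prod_const_one, expect_ite_forall_mem_edgeSet,
    expect_const (Fintype.piFinset_nonempty.2 hA), mul_one] at hcount
  have hpow : d ^ #H.edgeFinset ≤ ∏ e ∈ H.edgeFinset, pairDensity G A e := by
    rw [← prod_const]
    refine prod_le_prod (fun _ _ => hd) fun e he => ?_
    induction e using Sym2.inductionOn with | _ i j
    exact hdens i j (SimpleGraph.mem_edgeFinset.1 he)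
  rw [← le_div_iff₀ hprod]
  linarith [(abs_le.1 hcount).1]

lemma abs_expect_ite_mem_edgeSet_sub_le (hA : ∀ k, (A k).Nonempty)
    (hu : ∀ i j, H.Adj i j → G.IsUniform ε (A i) (A j)) {i j : W} (hij : H.Adj i j)
    {σ : Sym2 V → ℝ} (hσ : ∀ e, |σ e| ≤ 1) :
    |(𝔼 z ∈ Fintype.piFinset A,
        if ∀ e ∈ H.edgeFinset, e.map z ∈ G.edgeSet then σ s(z i, z j) else 0) -
      (∏ e ∈ H.edgeFinset.erase s(i, j), pairDensity G A e) *
        𝔼 z ∈ Fintype.piFinset A, if G.Adj (z i) (z j) then σ s(z i, z j) else 0| ≤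
    #H.edgeFinset * (4 * ε) := by
  have hε := (hu i j hij).pos
  have hsplit (k l : W) (hkl : s(k, l) ∈ H.edgeFinset.erase s(i, j)) :
      SplitsAt k l fun z => if G.Adj (z i) (z j) then σ s(z i, z j) else 0 :=
    .map_sym2 (e := s(i, j)) (g := fun e => if e ∈ G.edgeSet then σ e else 0)
      (H.ne_of_adj (by simpa using mem_of_mem_erase hkl)) (ne_of_mem_erase hkl).symm
      fun e => by split_ifs <;> simp [hσ]
  have hcount := abs_expect_mul_prod_mem_edgeSet_sub_le hA hu (erase_subset s(i, j) _) hsplit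
  have hfactor (z : W → V) := ite_mem_edgeSet_mul_prod_erase (H := H) (G := G)
    (f := s(i, j)) (SimpleGraph.mem_edgeFinset.2 hij) z (σ s(z i, z j))
  simp only [Sym2.map_mk, SimpleGraph.mem_edgeSet] at hfactor
  simp only [hfactor] at hcount
  refine hcount.trans ?_
  gcongr
  exact erase_subset _ _

lemma abs_expect_partiteHoms_sub_le (hA : ∀ k, (A k).Nonempty)
    (hu : ∀ i j, H.Adj i j → G.IsUniform ε (A i) (A j)) (hc : 0 < c)
    (hcard : c * ∏ k, (#(A k) : ℝ) ≤ #(partiteHoms H G A)) {i j : W} (hij : H.Adj i j)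
    {σ : Sym2 V → ℝ} (hσ : ∀ e, |σ e| ≤ 1) :
    |𝔼 z ∈ partiteHoms H G A, σ s(z i, z j) - 𝔼 q ∈ G.interedges (A i) (A j), σ s(q.1, q.2)| ≤
      2 * (#H.edgeFinset * (4 * ε)) / c := by
  rw [partiteHoms, expect_filter, expect_interedges hA hij.ne]
  refine abs_div_sub_div_le hc ?_ (expect_le_expect fun z _ => ?_)
    (abs_expect_ite_mem_edgeSet_sub_le hA hu hij hσ)
    (abs_expect_ite_mem_edgeSet_sub_le hA hu hij (σ := fun _ => 1) (by simp))
    ((abs_expect_le _ _).trans (expect_le_expect fun z _ => ?_))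
  · rwa [expect_ite_forall_mem_edgeSet,
      le_div_iff₀ (prod_pos fun k _ => by exact_mod_cast (hA k).card_pos)]
  · have : (∀ e ∈ H.edgeFinset, e.map z ∈ G.edgeSet) → G.Adj (z i) (z j) := fun h =>
      h s(i, j) (SimpleGraph.mem_edgeFinset.2 hij)
    split_ifs <;> simp_all
  · split_ifs <;> simp [hσ]

end PartiteHoms

section Regularity

open SzemerediRegularity

lemma div_two_mul_le_natDiv {n k : ℕ} (hk : 0 < k) (hn : k ≤ n) :
    (n : ℝ) / (2 * k) ≤ (n / k : ℕ) := by
  have hlt : n < k * (n / k + 1) := Nat.lt_mul_div_succ n hk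
  have hle : k * 1 ≤ k * (n / k) := Nat.mul_le_mul_left k ((Nat.one_le_div_iff hk).2 hn)
  rw [div_le_iff₀' (by positivity)]
  exact_mod_cast (by linarith : n ≤ 2 * k * (n / k))

variable {V : Type*} [Fintype V] [DecidableEq V] {G : SimpleGraph V} [DecidableRel G.Adj]
  {P : Finpartition (univ : Finset V)} {ε d : ℝ}

lemma card_div_le_card_part {K : ℕ} (hP : P.IsEquipartition) (hK : #P.parts ≤ K) (x : V) :
    (Fintype.card V : ℝ) / (2 * K) ≤ #(P.part x) := by
  have hx : P.part x ∈ P.parts := P.part_mem.2 (mem_univ x)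
  have hpos : 0 < #P.parts := card_pos.2 ⟨_, hx⟩
  calc (Fintype.card V : ℝ) / (2 * K) ≤ Fintype.card V / (2 * #P.parts) := by gcongr
    _ ≤ (Fintype.card V / #P.parts : ℕ) := div_two_mul_le_natDiv hpos P.card_parts_le_card
    _ ≤ #(P.part x) := mod_cast hP.average_le_card_part hx

lemma regularityReduced_adj_part {x y : V} (h : (G.regularityReduced P ε d).Adj x y) :
    P.part x ≠ P.part y ∧ G.IsUniform ε (P.part x) (P.part y) ∧
      d ≤ G.edgeDensity (P.part x) (P.part y) := by
  obtain ⟨-, U, hU, U', hU', hx, hy, h⟩ := h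
  rwa [P.part_eq_of_mem hU hx, P.part_eq_of_mem hU' hy]

lemma edgeFinset_sdiff_regularityReduced_subset :
    G.edgeFinset \ (G.regularityReduced P ε d).edgeFinset ⊆
      (((P.nonUniforms G ε).biUnion fun U => U.1 ×ˢ U.2) ∪ P.parts.biUnion offDiag ∪
        (P.sparsePairs G d).biUnion fun U => G.interedges U.1 U.2).image fun p => s(p.1, p.2) := by
  intro e he
  induction e using Sym2.inductionOn with | _ x y
  simp only [mem_sdiff, SimpleGraph.mem_edgeFinset, SimpleGraph.mem_edgeSet] at he
  obtain ⟨hxy, hred⟩ := he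
  have hX := P.part_mem.2 (mem_univ x)
  have hY := P.part_mem.2 (mem_univ y)
  have hx := P.mem_part (mem_univ x)
  have hy := P.mem_part (mem_univ y)
  refine mem_image.2 ⟨(x, y), ?_, rfl⟩
  simp only [mem_union, mem_biUnion, mem_product, mem_offDiag, Prod.exists,
    SimpleGraph.mem_interedges_iff, P.mk_mem_nonUniforms, P.mk_mem_sparsePairs]
  by_cases hne : P.part x = P.part y
  · exact .inl (.inr ⟨_, hX, hx, hne ▸ hy, hxy.ne⟩)
  by_cases hunif : G.IsUniform ε (P.part x) (P.part y)
  · refine .inr ⟨_, _, ⟨hX, hY, hne, lt_of_not_ge fun hdens => hred ?_⟩, hx, hy, hxy⟩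
    exact ⟨hxy, _, hX, _, hY, hx, hy, hne, hunif, hdens⟩
  · exact .inl (.inl ⟨_, _, ⟨hX, hY, hne, hunif⟩, hx, hy⟩)

lemma card_edgeFinset_sdiff_regularityReduced_le [Nonempty V] (hP : P.IsEquipartition)
    (hPε : P.IsUniform G ε) (hε : 0 < ε) (hd : 0 < d) (hPd : 4 / (2 * d) ≤ #P.parts) :
    (#(G.edgeFinset \ (G.regularityReduced P ε d).edgeFinset) : ℝ) ≤
      (4 * ε + 5 * d) * Fintype.card V ^ 2 := by
  have hirregular := hP.sum_nonUniforms_lt univ_nonempty hε hPε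
  have hinner := hP.card_biUnion_offDiag_le (ε := 2 * d) (by positivity) hPd
  have hsparse := hP.card_interedges_sparsePairs_le (G := G) hd.le
  have hunion := (card_le_card (edgeFinset_sdiff_regularityReduced_subset (G := G) (P := P)
    (ε := ε) (d := d))).trans <| card_image_le.trans <| (card_union_le _ _).trans
      (Nat.add_le_add_right (card_union_le _ _) _)
  rw [← Nat.cast_le (α := ℝ)] at hunion
  push_cast [card_univ] at hunion hirregular hinner hsparse
  linarith

lemma exists_finpartition_card_edgeFinset_sdiff_le (hε : 0 < ε) (hd : 0 < d) :
    ∃ N K : ℕ, 0 < K ∧ ∀ (V : Type v) [Fintype V] [DecidableEq V] (G : SimpleGraph V)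
      [DecidableRel G.Adj], N ≤ Fintype.card V →
        ∃ P : Finpartition (univ : Finset V), (∀ x, (Fintype.card V : ℝ) / K ≤ #(P.part x)) ∧
          (#(G.edgeFinset \ (G.regularityReduced P ε d).edgeFinset) : ℝ) ≤
            (4 * ε + 5 * d) * Fintype.card V ^ 2 := by
  set l := ⌈4 / (2 * d)⌉₊
  refine ⟨l + 1, 2 * bound ε l, mul_pos two_pos (bound_pos _ _), fun V _ _ G _ hN => ?_⟩
  have : Nonempty V := Fintype.card_pos_iff.1 (by omega)
  obtain ⟨P, hP, hlow, hup, hunif⟩ := szemeredi_regularity G hε (l := l) (by omega)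
  exact ⟨P, fun x => mod_cast card_div_le_card_part hP hup x,
    card_edgeFinset_sdiff_regularityReduced_le hP hunif hε hd
      ((Nat.le_ceil _).trans (mod_cast hlow))⟩

end Regularity

section CountingMaps

variable {W V : Type*} [DecidableEq V]

lemma three_le_card_toFinset_union [DecidableEq W] {e f : Sym2 W} (he : ¬e.IsDiag) (hf : ¬f.IsDiag)
    (hne : e ≠ f) :
    3 ≤ #(e.toFinset ∪ f.toFinset) := by
  by_contra! hlt
  have heq (g : Sym2 W) (hg : ¬g.IsDiag) (hsub : g.toFinset ⊆ e.toFinset ∪ f.toFinset) :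
      g.toFinset = e.toFinset ∪ f.toFinset :=
    eq_of_subset_of_card_le hsub (by rw [Sym2.card_toFinset_of_not_isDiag g hg]; omega)
  refine hne (Sym2.ext fun x => ?_)
  rw [← Sym2.mem_toFinset, ← Sym2.mem_toFinset,
    (heq e he subset_union_left).trans (heq f hf subset_union_right).symm]

/-- The set of edges of the image of `H` under the map `z`. -/
def imageEdges (H : SimpleGraph W) [Fintype H.edgeSet] (z : W → V) : Finset (Sym2 V) :=
  H.edgeFinset.image (Sym2.map z)

variable {H : SimpleGraph W} [Fintype H.edgeSet]

lemma three_le_card_filter_mem_toFinset_union [Fintype W] {z : W → V} {e e' : Sym2 V}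
    (hee : e ≠ e') (he : e ∈ imageEdges H z) (he' : e' ∈ imageEdges H z) :
    3 ≤ #{l | z l ∈ e.toFinset ∪ e'.toFinset} := by
  classical
  obtain ⟨f, hf, rfl⟩ := mem_image.1 he
  obtain ⟨f', hf', rfl⟩ := mem_image.1 he'
  rw [SimpleGraph.mem_edgeFinset] at hf hf'
  refine (three_le_card_toFinset_union (H.not_isDiag_of_mem_edgeSet hf)
    (H.not_isDiag_of_mem_edgeSet hf') (ne_of_apply_ne _ hee)).trans (card_le_card fun l hl => ?_)
  simp only [mem_union, Sym2.mem_toFinset, mem_filter, mem_univ, true_and, Sym2.mem_map] at hl ⊢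
  exact hl.imp (fun h => ⟨l, h, rfl⟩) fun h => ⟨l, h, rfl⟩

variable [Fintype W] [DecidableEq W] [Fintype V]

lemma card_filter_apply_eq_apply {i j : W} (hij : i ≠ j) :
    (#{z : W → V | z i = z j} : ℝ) * Fintype.card V = Fintype.card V ^ Fintype.card W := by
  cases isEmpty_or_nonempty V
  · simp [Fintype.card_pos_iff.2 ⟨i⟩ |>.ne']
  have h := expect_piFinset_apply₂ (A := fun _ : W => (univ : Finset V)) (fun _ => univ_nonempty)
    hij fun u v => if u = v then 1 else 0
  have hV : (Fintype.card V : ℝ) ≠ 0 := by simp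
  simp only [Fintype.piFinset_univ, expect_eq_sum_div_card, sum_ite_eq, mem_univ, if_true,
    sum_const, card_univ, nsmul_eq_mul] at h
  rw [sum_boole, Fintype.card_fun] at h
  field_simp at h
  push_cast at h
  linarith

lemma card_filter_not_injective_mul_le :
    (#{z : W → V | ¬Function.Injective z} : ℝ) * Fintype.card V ≤
      Fintype.card W ^ 2 * Fintype.card V ^ Fintype.card W := by
  have hcover : ({z : W → V | ¬Function.Injective z} : Finset _) ⊆
      (univ : Finset W).offDiag.biUnion fun p => {z : W → V | z p.1 = z p.2} := by
    intro z hz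
    simp only [mem_filter, mem_univ, true_and, Function.not_injective_iff] at hz
    obtain ⟨i, j, h, hij⟩ := hz
    exact mem_biUnion.2 ⟨(i, j), by simpa using hij, by simpa using h⟩
  have hpairs : #(univ : Finset W).offDiag ≤ Fintype.card W ^ 2 := by
    simp [offDiag_card, sq]
  calc (#{z : W → V | ¬Function.Injective z} : ℝ) * Fintype.card V
      ≤ (∑ p ∈ (univ : Finset W).offDiag, #{z : W → V | z p.1 = z p.2} : ℕ) * Fintype.card V := by
        gcongr
        exact (card_le_card hcover).trans card_biUnion_le
    _ = #(univ : Finset W).offDiag * (Fintype.card V ^ Fintype.card W : ℝ) := by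
        rw [Nat.cast_sum, sum_mul, sum_congr rfl fun p hp =>
          card_filter_apply_eq_apply (mem_offDiag.1 hp).2.2, sum_const, nsmul_eq_mul]
    _ ≤ Fintype.card W ^ 2 * Fintype.card V ^ Fintype.card W := by
        gcongr
        exact_mod_cast hpairs

lemma card_filter_forall_mem_mul (I : Finset W) (S : Finset V) :
    #{z : W → V | ∀ l ∈ I, z l ∈ S} * Fintype.card V ^ #I =
      #S ^ #I * Fintype.card V ^ Fintype.card W := by
  have hpi : ({z : W → V | ∀ l ∈ I, z l ∈ S} : Finset _) =
      Fintype.piFinset fun l => if l ∈ I then S else univ := by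
    ext z
    simp only [mem_filter, mem_univ, true_and, Fintype.mem_piFinset]
    refine forall_congr' fun l => ?_
    split_ifs with hl <;> simp [hl]
  have hcard : #(univ \ I) + #I = Fintype.card W := card_sdiff_add_card_eq_card I.subset_univ
  rw [hpi, Fintype.card_piFinset, ← hcard, pow_add]
  simp only [apply_ite card, prod_ite, prod_const, filter_mem_eq_inter, filter_notMem_eq_sdiff,
    univ_inter, card_univ]
  ring

lemma card_filter_le_card_filter_mem_mul_le (k : ℕ) (S : Finset V) :
    #{z : W → V | k ≤ #{l | z l ∈ S}} * Fintype.card V ^ k ≤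
      2 ^ Fintype.card W * #S ^ k * Fintype.card V ^ Fintype.card W := by
  have hcover : ({z : W → V | k ≤ #{l | z l ∈ S}} : Finset _) ⊆
      (powersetCard k univ).biUnion fun I => {z | ∀ l ∈ I, z l ∈ S} := by
    intro z hz
    obtain ⟨I, hI, hIk⟩ := exists_subset_card_eq (mem_filter.1 hz).2
    exact mem_biUnion.2 ⟨I, mem_powersetCard.2 ⟨I.subset_univ, hIk⟩,
      mem_filter.2 ⟨mem_univ z, fun l hl => (mem_filter.1 (hI hl)).2⟩⟩
  calc #{z : W → V | k ≤ #{l | z l ∈ S}} * Fintype.card V ^ k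
      ≤ (∑ I ∈ powersetCard k univ, #{z : W → V | ∀ l ∈ I, z l ∈ S}) * Fintype.card V ^ k :=
        Nat.mul_le_mul_right _ ((card_le_card hcover).trans card_biUnion_le)
    _ = #(powersetCard k (univ : Finset W)) * (#S ^ k * Fintype.card V ^ Fintype.card W) := by
        rw [sum_mul, sum_congr rfl fun I hI => by
          rw [← (mem_powersetCard.1 hI).2, card_filter_forall_mem_mul, (mem_powersetCard.1 hI).2],
          sum_const, smul_eq_mul]
    _ ≤ 2 ^ Fintype.card W * #S ^ k * Fintype.card V ^ Fintype.card W := by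
        rw [card_powersetCard, card_univ, mul_assoc]
        exact Nat.mul_le_mul_right _ (Nat.choose_le_two_pow _ _)

lemma card_filter_mem_imageEdges_mul_le {e e' : Sym2 V} (hee : e ≠ e') :
    #{z : W → V | e ∈ imageEdges H z ∧ e' ∈ imageEdges H z} * Fintype.card V ^ 3 ≤
      2 ^ Fintype.card W * 4 ^ 3 * Fintype.card V ^ Fintype.card W := by
  have hS : #(e.toFinset ∪ e'.toFinset) ≤ 4 := by
    have (g : Sym2 V) : #g.toFinset ≤ 2 := by rw [Sym2.card_toFinset]; split_ifs <;> simp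
    exact (card_union_le _ _).trans (add_le_add (this e) (this e'))
  calc #{z : W → V | e ∈ imageEdges H z ∧ e' ∈ imageEdges H z} * Fintype.card V ^ 3
      ≤ #{z : W → V | 3 ≤ #{l | z l ∈ e.toFinset ∪ e'.toFinset}} * Fintype.card V ^ 3 :=
        Nat.mul_le_mul_right _ <| card_le_card <| monotone_filter_right _ fun z _ hz =>
          three_le_card_filter_mem_toFinset_union hee hz.1 hz.2
    _ ≤ 2 ^ Fintype.card W * #(e.toFinset ∪ e'.toFinset) ^ 3 * Fintype.card V ^ Fintype.card W :=
        card_filter_le_card_filter_mem_mul_le 3 _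
    _ ≤ 2 ^ Fintype.card W * 4 ^ 3 * Fintype.card V ^ Fintype.card W := by gcongr

end CountingMaps

section FracPackings

variable {W V : Type*} [DecidableEq V] {H : SimpleGraph W} [Fintype H.edgeSet]

lemma sum_imageEdges {x : W → V} (hx : Function.Injective x) (F : Sym2 V → ℝ) :
    ∑ e ∈ imageEdges H x, F e = ∑ f ∈ H.edgeFinset, F (f.map x) :=
  sum_image (Sym2.map.injective hx).injOn

lemma sum_imageEdges_le {F : Sym2 V → ℝ} (hF : ∀ e, 0 ≤ F e) (x : W → V) :
    ∑ e ∈ imageEdges H x, F e ≤ ∑ f ∈ H.edgeFinset, F (f.map x) :=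
  sum_image_le_of_nonneg fun e _ => hF e

variable [Fintype W] [Fintype V] [DecidableEq W]

/-- `φ` is a fractional packing of `G` by the injective homomorphisms from `H`, each of which
stands for the copy of `H` that is its image. A copy is the image of several such homomorphisms,
among which its weight may be split in any way. -/
structure IsFracEmbPacking (H : SimpleGraph W) [Fintype H.edgeSet] (G : SimpleGraph V)
    (φ : (W → V) → ℝ) : Prop where
  nonneg : ∀ x, 0 ≤ φ x
  injective : ∀ x, φ x ≠ 0 → Function.Injective x
  map_mem : ∀ x, φ x ≠ 0 → ∀ e ∈ H.edgeFinset, e.map x ∈ G.edgeSet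
  load_le_one : ∀ e, load (imageEdges H) φ e ≤ 1

variable {G : SimpleGraph V} {φ w : (W → V) → ℝ}

namespace IsFracEmbPacking

lemma imageEdges_subset [Fintype G.edgeSet] (h : IsFracEmbPacking H G φ) {x : W → V}
    (hx : φ x ≠ 0) : imageEdges H x ⊆ G.edgeFinset :=
  image_subset_iff.2 fun e he => SimpleGraph.mem_edgeFinset.2 (h.map_mem x hx e he)

lemma of_le (h : IsFracEmbPacking H G φ) (hw : ∀ x, 0 ≤ w x) (hwφ : ∀ x, w x ≤ φ x) :
    IsFracEmbPacking H G w := by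
  have hne (x) (hx : w x ≠ 0) : φ x ≠ 0 := fun h₀ => hx (le_antisymm (h₀ ▸ hwφ x) (hw x))
  exact ⟨hw, fun x hx => h.injective x (hne x hx), fun x hx => h.map_mem x (hne x hx),
    fun e => (load_mono hwφ e).trans (h.load_le_one e)⟩

lemma sum_le_card_edgeFinset [Fintype G.edgeSet] (h : IsFracEmbPacking H G φ)
    (hH : H.edgeFinset.Nonempty) : ∑ x, φ x ≤ #G.edgeFinset := by
  refine le_trans (le_of_eq ?_) (sum_filter_not_disjoint_le_card (e := imageEdges H) h.nonneg
    fun e (_ : e ∈ G.edgeFinset) => h.load_le_one e)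
  refine (sum_filter_of_ne fun x _ hx => ?_).symm
  rw [disjoint_iff_inter_eq_empty, inter_eq_left.2 (h.imageEdges_subset hx)]
  exact (hH.image _).ne_empty

lemma exists_sum_sub_card_sdiff_le [Fintype G.edgeSet] (h : IsFracEmbPacking H G φ)
    (G' : SimpleGraph V) [Fintype G'.edgeSet] :
    ∃ φ', IsFracEmbPacking H G' φ' ∧
      ∑ x, φ x - #(G.edgeFinset \ G'.edgeFinset) ≤ ∑ x, φ' x := by
  set B := G.edgeFinset \ G'.edgeFinset
  set φ' : (W → V) → ℝ := fun x => if Disjoint (imageEdges H x) B then φ x else 0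
  have hle : IsFracEmbPacking H G φ' := h.of_le
    (fun x => by dsimp only [φ']; split_ifs; exacts [h.nonneg x, le_rfl])
    (fun x => by dsimp only [φ']; split_ifs; exacts [le_rfl, h.nonneg x])
  refine ⟨φ', ⟨hle.nonneg, hle.injective, fun x hx e he => ?_, hle.load_le_one⟩, ?_⟩
  · have hdisj : Disjoint (imageEdges H x) B := of_not_not fun hd => hx (if_neg hd)
    have := disjoint_left.1 hdisj (mem_image_of_mem (Sym2.map x) he)
    simpa [B, hle.map_mem x hx e he] using this
  · have hsplit := sum_filter_add_sum_filter_not univ (fun x => Disjoint (imageEdges H x) B) φ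
    rw [sum_filter] at hsplit
    linarith [sum_filter_not_disjoint_le_card (e := imageEdges H) h.nonneg
      fun e (_ : e ∈ B) => h.load_le_one e]

end IsFracEmbPacking

open Classical in
lemma exists_isFracEmbPacking_of_homs (hw : ∀ z, 0 ≤ w z)
    (hhom : ∀ z, w z ≠ 0 → ∀ e ∈ H.edgeFinset, e.map z ∈ G.edgeSet) :
    ∃ w', IsFracEmbPacking H G w' ∧ (∀ z, w' z ≤ w z) ∧
      ∑ z, w z - ∑ z with ¬Function.Injective z, w z - overload (imageEdges H) w ≤ ∑ z, w' z := by
  set φ : (W → V) → ℝ := fun z => if Function.Injective z then w z else 0 with hφ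
  have hφ₀ (z) : 0 ≤ φ z := by dsimp only [φ]; split_ifs; exacts [hw z, le_rfl]
  have hφw (z) : φ z ≤ w z := by dsimp only [φ]; split_ifs; exacts [le_rfl, hw z]
  obtain ⟨w', hw'₀, hw'φ, hload, hsum⟩ := exists_le_of_load_le_one (e := imageEdges H) hφ₀
  have hne (z) (hz : w' z ≠ 0) : φ z ≠ 0 := fun h => hz (le_antisymm (h ▸ hw'φ z) (hw'₀ z))
  refine ⟨w', ⟨hw'₀, fun z hz => of_not_not fun h => hne z hz (if_neg h), fun z hz => hhom z
    fun h => hne z hz (le_antisymm (h ▸ hφw z) (hφ₀ z)), hload⟩,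
    fun z => (hw'φ z).trans (hφw z), ?_⟩
  have hover : overload (imageEdges H) φ ≤ overload (imageEdges H) w :=
    sum_le_sum fun e _ => max_le_max le_rfl (sub_le_sub_right (load_mono hφw e) 1)
  have hsplit := sum_filter_add_sum_filter_not univ (Function.Injective (α := W) (β := V)) w
  rw [sum_filter, ← hφ] at hsplit
  linarith

end FracPackings

section Spreading

lemma sum_expect_filter_eq_apply {α β : Type*} [DecidableEq β] (s : Finset α) (p : α → β)
    (f : α → ℝ) : ∑ b ∈ s, 𝔼 a ∈ s with p a = p b, f a = ∑ a ∈ s, f a := by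
  have hmap (a : α) (ha : a ∈ s) : p a ∈ s.image p := mem_image_of_mem p ha
  rw [← sum_fiberwise_of_maps_to hmap, ← sum_fiberwise_of_maps_to hmap]
  refine sum_congr rfl fun c _ => ?_
  rw [sum_congr rfl fun b hb => by rw [(mem_filter.1 hb).2], sum_const, card_smul_expect]

variable {W V : Type*} [Fintype V] [DecidableEq V] {H : SimpleGraph W} {G : SimpleGraph V}
  [DecidableRel G.Adj] {P : Finpartition (univ : Finset V)} {ε d c : ℝ}

variable (G P) in
/-- The edges of `G` that join the same two parts of `P` as `e` does. -/
def parallelEdges (e : Sym2 V) : Finset (Sym2 V) :=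
  {f ∈ G.edgeFinset | f.map P.part = e.map P.part}

lemma expect_interedges_part {a b : V} (hab : P.part a ≠ P.part b) (σ : Sym2 V → ℝ) :
    𝔼 q ∈ G.interedges (P.part a) (P.part b), σ s(q.1, q.2) =
      𝔼 f ∈ parallelEdges G P s(a, b), σ f := by
  have hmem (q : V × V) : q ∈ G.interedges (P.part a) (P.part b) ↔
      P.part q.1 = P.part a ∧ P.part q.2 = P.part b ∧ G.Adj q.1 q.2 := by
    simp only [G.mem_interedges_iff, P.mem_part_iff_part_eq_part (mem_univ _) (mem_univ _)]
  have himage : (G.interedges (P.part a) (P.part b)).image (fun q => s(q.1, q.2)) =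
      parallelEdges G P s(a, b) := by
    ext f
    induction f using Sym2.inductionOn with | _ x y
    rw [parallelEdges, mem_filter]
    simp only [mem_image, hmem, SimpleGraph.mem_edgeFinset, SimpleGraph.mem_edgeSet, Sym2.map_mk,
      Sym2.eq_iff, Prod.exists]
    constructor
    · rintro ⟨x, y, ⟨hx, hy, hxy⟩, ⟨rfl, rfl⟩ | ⟨rfl, rfl⟩⟩
      exacts [⟨hxy, .inl ⟨hx, hy⟩⟩, ⟨hxy.symm, .inr ⟨hy, hx⟩⟩]
    · rintro ⟨hxy, ⟨hx, hy⟩ | ⟨hx, hy⟩⟩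
      exacts [⟨x, y, ⟨hx, hy, hxy⟩, .inl ⟨rfl, rfl⟩⟩, ⟨y, x, ⟨hy, hx, hxy.symm⟩, .inr ⟨rfl, rfl⟩⟩]
  rw [← himage, expect_image]
  rintro ⟨x, y⟩ hq ⟨x', y'⟩ hq' h
  simp only [mem_coe, hmem] at hq hq'
  obtain ⟨rfl, rfl⟩ | ⟨rfl, rfl⟩ := Sym2.eq_iff.1 h
  exacts [rfl, absurd (hq.1.symm.trans hq'.2.1) hab]

variable [Fintype W] [DecidableEq W] [Fintype H.edgeSet]

variable (H G P) in
/-- The weighting obtained from `φ` by spreading the weight of each map `x` evenly over the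
homomorphisms from `H` to `G` that send every vertex `k` into the part containing `x k`. -/
noncomputable def spread (φ : (W → V) → ℝ) (z : W → V) : ℝ :=
  ∑ x with z ∈ partiteHoms H G (fun k => P.part (x k)),
    φ x / #(partiteHoms H G fun k => P.part (x k))

variable {φ : (W → V) → ℝ}

lemma spread_nonneg (hφ : ∀ x, 0 ≤ φ x) (z : W → V) : 0 ≤ spread H G P φ z :=
  sum_nonneg fun x _ => div_nonneg (hφ x) (Nat.cast_nonneg _)

lemma map_mem_edgeSet_of_spread_ne_zero {z : W → V} (hz : spread H G P φ z ≠ 0) :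
    ∀ e ∈ H.edgeFinset, e.map z ∈ G.edgeSet := by
  obtain ⟨x, hx, -⟩ := exists_ne_zero_of_sum_ne_zero hz
  exact (mem_filter.1 (mem_filter.1 hx).2).2

lemma sum_spread_mul (F : (W → V) → ℝ) :
    ∑ z, spread H G P φ z * F z =
      ∑ x, φ x * 𝔼 z ∈ partiteHoms H G (fun k => P.part (x k)), F z := by
  simp only [spread, sum_mul, sum_filter]
  rw [sum_comm]
  refine sum_congr rfl fun x _ => ?_
  simp only [ite_mul, zero_mul, sum_ite_mem, univ_inter, expect_eq_sum_div_card, ← mul_sum]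
  ring

lemma sum_spread (h : ∀ x, φ x ≠ 0 → (partiteHoms H G fun k => P.part (x k)).Nonempty) :
    ∑ z, spread H G P φ z = ∑ x, φ x := by
  have := sum_spread_mul (H := H) (G := G) (P := P) (φ := φ) fun _ => 1
  simp only [mul_one] at this
  refine this.trans (sum_congr rfl fun x _ => ?_)
  by_cases hx : φ x = 0
  · simp [hx]
  · rw [expect_const (h x hx), mul_one]

lemma spread_le (hφ : ∀ x, 0 ≤ φ x) (hc : 0 < c)
    (h : ∀ x, φ x ≠ 0 → c ≤ #(partiteHoms H G fun k => P.part (x k))) (z : W → V) :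
    spread H G P φ z ≤ (∑ x, φ x) / c := by
  rw [sum_div]
  refine (sum_le_sum fun x _ => ?_).trans
    (sum_le_univ_sum_of_nonneg fun x => div_nonneg (hφ x) hc.le)
  by_cases hx : φ x = 0
  · simp [hx]
  · exact div_le_div_of_nonneg_left (hφ x) hc (h x hx)

namespace IsFracEmbPacking

variable (hφ : IsFracEmbPacking H (G.regularityReduced P ε d) φ)
include hφ

lemma adj_part {x : W → V} (hx : φ x ≠ 0) {i j : W} (hij : H.Adj i j) :
    P.part (x i) ≠ P.part (x j) ∧ G.IsUniform ε (P.part (x i)) (P.part (x j)) ∧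
      d ≤ G.edgeDensity (P.part (x i)) (P.part (x j)) :=
  regularityReduced_adj_part (hφ.map_mem x hx s(i, j) (SimpleGraph.mem_edgeFinset.2 hij))

lemma le_card_partiteHoms_part (hd : 0 ≤ d) (hc : c ≤ d ^ #H.edgeFinset - #H.edgeFinset * (4 * ε))
    {x : W → V} (hx : φ x ≠ 0) :
    c * ∏ k, (#(P.part (x k)) : ℝ) ≤ #(partiteHoms H G fun k => P.part (x k)) := by
  refine le_trans ?_ (le_card_partiteHoms (fun k => ⟨x k, P.mem_part (mem_univ _)⟩)
    (fun i j hij => (hφ.adj_part hx hij).2.1) hd fun i j hij => (hφ.adj_part hx hij).2.2)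
  gcongr

lemma expect_partiteHoms_part_le (hd : 0 ≤ d) (hc₀ : 0 < c)
    (hc : c ≤ d ^ #H.edgeFinset - #H.edgeFinset * (4 * ε)) {τ : Sym2 V → ℝ} (hτ₀ : ∀ e, 0 ≤ τ e)
    (hτ₁ : ∀ e, τ e ≤ 1) {x : W → V} (hx : φ x ≠ 0) {f : Sym2 W} (hf : f ∈ H.edgeFinset) :
    𝔼 z ∈ partiteHoms H G (fun k => P.part (x k)), τ (f.map z) ≤
      𝔼 e ∈ parallelEdges G P (f.map x), τ e + 2 * (#H.edgeFinset * (4 * ε)) / c := by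
  induction f using Sym2.inductionOn with | _ i j
  rw [SimpleGraph.mem_edgeFinset, SimpleGraph.mem_edgeSet] at hf
  have := abs_expect_partiteHoms_sub_le (fun k => ⟨x k, P.mem_part (mem_univ _)⟩)
    (fun i j hij => (hφ.adj_part hx hij).2.1) hc₀ (hφ.le_card_partiteHoms_part hd hc hx) hf
    fun e => (abs_of_nonneg (hτ₀ e)).trans_le (hτ₁ e)
  rw [expect_interedges_part (hφ.adj_part hx hf).1] at this
  exact sub_le_iff_le_add'.1 (le_of_abs_le this)

lemma sum_mul_sum_expect_parallelEdges_le {τ : Sym2 V → ℝ} (hτ₀ : ∀ e, 0 ≤ τ e) :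
    ∑ x, φ x * ∑ f ∈ H.edgeFinset, 𝔼 e ∈ parallelEdges G P (f.map x), τ e ≤ ∑ e, τ e := by
  have hedges (x : W → V) (hx : φ x ≠ 0) : imageEdges H x ⊆ G.edgeFinset := by
    refine (hφ.imageEdges_subset hx).trans ?_
    exact SimpleGraph.edgeFinset_mono SimpleGraph.regularityReduced_le
  calc ∑ x, φ x * ∑ f ∈ H.edgeFinset, 𝔼 e ∈ parallelEdges G P (f.map x), τ e
      = ∑ g ∈ G.edgeFinset, load (imageEdges H) φ g * 𝔼 e ∈ parallelEdges G P g, τ e := by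
        rw [sum_load_mul]
        refine sum_congr rfl fun x _ => ?_
        by_cases hx : φ x = 0
        · simp [hx]
        · rw [filter_mem_eq_inter, inter_eq_right.2 (hedges x hx),
            sum_imageEdges (hφ.injective x hx)]
    _ ≤ ∑ g ∈ G.edgeFinset, 𝔼 e ∈ parallelEdges G P g, τ e :=
        sum_le_sum fun g _ => mul_le_of_le_one_left (expect_nonneg fun e _ => hτ₀ e)
          (hφ.load_le_one g)
    _ = ∑ e ∈ G.edgeFinset, τ e := sum_expect_filter_eq_apply _ _ _
    _ ≤ ∑ e, τ e := sum_le_univ_sum_of_nonneg hτ₀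

lemma overload_spread_le (hd : 0 ≤ d) (hc₀ : 0 < c)
    (hc : c ≤ d ^ #H.edgeFinset - #H.edgeFinset * (4 * ε)) :
    overload (imageEdges H) (spread H G P φ) ≤
      (∑ x, φ x) * (#H.edgeFinset * (2 * (#H.edgeFinset * (4 * ε)) / c)) := by
  set η := 2 * (#H.edgeFinset * (4 * ε)) / c
  refine overload_le fun τ hτ₀ hτ₁ => ?_
  calc ∑ e, load (imageEdges H) (spread H G P φ) e * τ e
      = ∑ z, spread H G P φ z * ∑ e ∈ imageEdges H z, τ e := by
        simp only [sum_load_mul, filter_mem_eq_inter, univ_inter]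
    _ ≤ ∑ z, spread H G P φ z * ∑ f ∈ H.edgeFinset, τ (f.map z) := by
        gcongr with z
        exacts [spread_nonneg hφ.nonneg z, sum_imageEdges_le hτ₀ z]
    _ = ∑ x, φ x * ∑ f ∈ H.edgeFinset, 𝔼 z ∈ partiteHoms H G (fun k => P.part (x k)),
          τ (f.map z) := by simp only [sum_spread_mul, expect_sum_comm]
    _ ≤ ∑ x, φ x * ∑ f ∈ H.edgeFinset, (𝔼 e ∈ parallelEdges G P (f.map x), τ e + η) := by
        refine sum_le_sum fun x _ => ?_
        by_cases hx : φ x = 0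
        · simp [hx]
        · exact mul_le_mul_of_nonneg_left (sum_le_sum fun f hf =>
            hφ.expect_partiteHoms_part_le hd hc₀ hc hτ₀ hτ₁ hx hf) (hφ.nonneg x)
    _ = ∑ x, φ x * ∑ f ∈ H.edgeFinset, 𝔼 e ∈ parallelEdges G P (f.map x), τ e +
          (∑ x, φ x) * (#H.edgeFinset * η) := by
        simp only [sum_add_distrib, mul_add, sum_const, nsmul_eq_mul, sum_mul]
    _ ≤ ∑ e, τ e + (∑ x, φ x) * (#H.edgeFinset * η) := by
        gcongr
        exact hφ.sum_mul_sum_expect_parallelEdges_le hτ₀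

end IsFracEmbPacking

end Spreading

section PackingNumbers

variable {W V : Type*} [Fintype W] [Fintype V]

lemma card_edgeFinset_le_sq (G : SimpleGraph V) [Fintype G.edgeSet] :
    #G.edgeFinset ≤ Fintype.card V ^ 2 :=
  G.card_edgeFinset_le_card_choose_two.trans (Nat.choose_le_pow _ _)

lemma sum_mul_pow_le [Nonempty V] {w : (W → V) → ℝ} {B a : ℝ} {k : ℕ} (hB : 0 ≤ B)
    (hw : ∀ z, w z * Fintype.card V ^ Fintype.card W ≤ B) {T : Finset (W → V)}
    (hT : #T * (Fintype.card V : ℝ) ^ k ≤ a * Fintype.card V ^ Fintype.card W) :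
    (∑ z ∈ T, w z) * Fintype.card V ^ k ≤ a * B := by
  have hV : (0 : ℝ) < Fintype.card V := by exact_mod_cast Fintype.card_pos
  refine le_of_mul_le_mul_right ?_ (pow_pos hV (Fintype.card W))
  calc (∑ z ∈ T, w z) * Fintype.card V ^ k * Fintype.card V ^ Fintype.card W
      = (∑ z ∈ T, w z * Fintype.card V ^ Fintype.card W) * Fintype.card V ^ k := by
        rw [← sum_mul]; ring
    _ ≤ #T * B * Fintype.card V ^ k := by
        gcongr
        simpa using sum_le_card_nsmul T _ B fun z _ => hw z
    _ = #T * (Fintype.card V : ℝ) ^ k * B := by ring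
    _ ≤ a * Fintype.card V ^ Fintype.card W * B := by gcongr
    _ = a * B * Fintype.card V ^ Fintype.card W := by ring

variable [DecidableEq W] [DecidableEq V] {H : SimpleGraph W} [Fintype H.edgeSet]

lemma IsFracEmbPacking.sum_le_card_sq {G : SimpleGraph V} {φ : (W → V) → ℝ}
    (hφ : IsFracEmbPacking H G φ) (hH : H.edgeFinset.Nonempty) :
    ∑ x, φ x ≤ (Fintype.card V : ℝ) ^ 2 := by
  classical
  exact (hφ.sum_le_card_edgeFinset hH).trans (mod_cast card_edgeFinset_le_sq G)

lemma exists_regularity_parameters (r : ℕ) {ε : ℝ} (hε : 0 < ε) :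
    ∃ δ d c : ℝ, 0 < δ ∧ 0 < d ∧ 0 < c ∧ c ≤ d ^ r - r * (4 * δ) ∧
      r * (2 * (r * (4 * δ)) / c) ≤ ε ∧ 4 * δ + 5 * d ≤ ε := by
  set d := ε / 10 with hd
  set c := d ^ r / 2 with hc
  have hd₀ : 0 < d := by positivity
  have hc₀ : 0 < c := by positivity
  have hsmall {f : ℝ → ℝ} {a b : ℝ} (hf : Continuous f) (h₀ : f 0 = a) (hab : a < b) :
      ∀ᶠ δ in nhdsWithin 0 (Set.Ioi 0), f δ < b :=
    ((hf.tendsto' 0 a h₀).mono_left nhdsWithin_le_nhds).eventually_lt_const hab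
  obtain ⟨δ, h₁, h₂, h₃, hδ⟩ :=
    ((hsmall (f := fun δ => r * (4 * δ)) (by fun_prop) (by simp) hc₀).and <|
      (hsmall (f := fun δ => r * (2 * (r * (4 * δ)) / c)) (by fun_prop) (by simp) hε).and <|
      (hsmall (f := fun δ => 4 * δ + 5 * d) (a := 5 * d) (b := ε) (by fun_prop) (by simp)
        (by linarith)).and self_mem_nhdsWithin).exists
  exact ⟨δ, d, c, hδ, hd₀, hc₀, by linarith, h₂.le, h₃.le⟩

namespace IsFracEmbPacking

variable {G : SimpleGraph V} [DecidableRel G.Adj] {P : Finpartition (univ : Finset V)}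
  {δ d c K : ℝ} {φ : (W → V) → ℝ} [Nonempty V]
  (hφ : IsFracEmbPacking H (G.regularityReduced P δ d) φ)
include hφ

lemma le_card_partiteHoms_of_le_card_part (hd : 0 ≤ d) (hc₀ : 0 < c)
    (hc : c ≤ d ^ #H.edgeFinset - #H.edgeFinset * (4 * δ)) (hK : 0 < K)
    (hP : ∀ x, Fintype.card V / K ≤ #(P.part x)) {x : W → V} (hx : φ x ≠ 0) :
    c * (Fintype.card V / K) ^ Fintype.card W ≤ #(partiteHoms H G fun k => P.part (x k)) := by
  refine le_trans ?_ (hφ.le_card_partiteHoms_part hd hc hx)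
  rw [← card_univ (α := W), ← prod_const]
  gcongr with k
  exact hP (x k)

open Classical in
lemma exists_mul_card_pow_le (hH : H.edgeFinset.Nonempty) (hd : 0 ≤ d) (hc₀ : 0 < c)
    (hc : c ≤ d ^ #H.edgeFinset - #H.edgeFinset * (4 * δ)) (hK : 0 < K)
    (hP : ∀ x, Fintype.card V / K ≤ #(P.part x)) :
    ∃ w, IsFracEmbPacking H G w ∧
      (∀ z, w z * Fintype.card V ^ Fintype.card W ≤
        K ^ Fintype.card W / c * Fintype.card V ^ 2) ∧
      ∑ x, φ x - Fintype.card W ^ 2 * (K ^ Fintype.card W / c) * Fintype.card V -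
        (∑ x, φ x) * (#H.edgeFinset * (2 * (#H.edgeFinset * (4 * δ)) / c)) ≤ ∑ z, w z := by
  have hV : (0 : ℝ) < Fintype.card V := by exact_mod_cast Fintype.card_pos
  set C := K ^ Fintype.card W / c with hC
  have hhoms (x : W → V) (hx : φ x ≠ 0) :=
    hφ.le_card_partiteHoms_of_le_card_part hd hc₀ hc hK hP hx
  have hpos : 0 < c * (Fintype.card V / K) ^ Fintype.card W := by positivity
  have hmax (z : W → V) : spread H G P φ z * Fintype.card V ^ Fintype.card W ≤
      C * Fintype.card V ^ 2 :=
    calc spread H G P φ z * Fintype.card V ^ Fintype.card W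
        ≤ (∑ x, φ x) / (c * (Fintype.card V / K) ^ Fintype.card W) *
            Fintype.card V ^ Fintype.card W := by
          gcongr
          exact spread_le hφ.nonneg hpos hhoms z
      _ = C * ∑ x, φ x := by rw [hC, div_pow]; field_simp
      _ ≤ C * Fintype.card V ^ 2 := by gcongr; exact hφ.sum_le_card_sq hH
  obtain ⟨w, hw, hle, hsum⟩ := exists_isFracEmbPacking_of_homs (H := H)
    (spread_nonneg (H := H) (G := G) (P := P) hφ.nonneg) fun z => map_mem_edgeSet_of_spread_ne_zero
  refine ⟨w, hw, fun z => le_trans (by gcongr; exact hle z) (hmax z), ?_⟩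
  have hinj : ∑ z with ¬Function.Injective z, spread H G P φ z ≤
      Fintype.card W ^ 2 * C * Fintype.card V := by
    have := sum_mul_pow_le (k := 1) (by positivity) hmax
      (by simpa using card_filter_not_injective_mul_le)
    rw [pow_one] at this
    exact le_of_mul_le_mul_right (this.trans_eq (by ring)) hV
  have hover := hφ.overload_spread_le hd hc₀ hc
  rw [sum_spread fun x hx => card_pos.1 (mod_cast hpos.trans_le (hhoms x hx))] at hsum
  linarith

end IsFracEmbPacking

variable (H)

lemma exists_isFracEmbPacking_mul_card_pow_le (hH : H.edgeFinset.Nonempty) {ε : ℝ} (hε : 0 < ε) :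
    ∃ (n₀ : ℕ) (C : ℝ), 0 ≤ C ∧ ∀ (V : Type v) [Fintype V] [DecidableEq V] (G : SimpleGraph V)
      (φ : (W → V) → ℝ), n₀ ≤ Fintype.card V → IsFracEmbPacking H G φ →
        ∃ w, IsFracEmbPacking H G w ∧
          (∀ z, w z * Fintype.card V ^ Fintype.card W ≤ C * Fintype.card V ^ 2) ∧
          ∑ x, φ x - ε * Fintype.card V ^ 2 ≤ ∑ z, w z := by
  classical
  obtain ⟨δ, d, c, hδ, hd, hc₀, hc, hover, hlost⟩ :=
    exists_regularity_parameters #H.edgeFinset (ε := ε / 3) (by positivity)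
  obtain ⟨N, K, hK, hreg⟩ := exists_finpartition_card_edgeFinset_sdiff_le.{v} hδ hd
  set C := (K : ℝ) ^ Fintype.card W / c
  set N' := ⌈Fintype.card W ^ 2 * C / (ε / 3)⌉₊
  refine ⟨max N N' + 1, C, by positivity, fun V _ _ G φ hn hφ => ?_⟩
  have hV : Nonempty V := Fintype.card_pos_iff.1 (by omega)
  obtain ⟨P, hP, hcard⟩ := hreg V G (by omega)
  obtain ⟨φ', hφ', hsum'⟩ := hφ.exists_sum_sub_card_sdiff_le (G.regularityReduced P δ d)
  obtain ⟨w, hw, hmax, hsum⟩ := hφ'.exists_mul_card_pow_le hH hd.le hc₀ hc (mod_cast hK) hP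
  refine ⟨w, hw, hmax, ?_⟩
  have hN' : Fintype.card W ^ 2 * C * Fintype.card V ≤ ε / 3 * Fintype.card V ^ 2 := by
    have : Fintype.card W ^ 2 * C / (ε / 3) ≤ Fintype.card V := Nat.ceil_le.1 (by omega)
    rw [div_le_iff₀' (by positivity)] at this
    rw [sq (Fintype.card V : ℝ), ← mul_assoc]
    gcongr
  have hspread : (∑ x, φ' x) * (#H.edgeFinset * (2 * (#H.edgeFinset * (4 * δ)) / c)) ≤
      Fintype.card V ^ 2 * (ε / 3) :=
    mul_le_mul (hφ'.sum_le_card_sq hH) hover (by positivity) (by positivity)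
  have hreduced : (4 * δ + 5 * d) * (Fintype.card V : ℝ) ^ 2 ≤ ε / 3 * Fintype.card V ^ 2 := by
    gcongr
  linarith

lemma exists_edgeDisjoint_of_mul_card_pow_le (hH : H.edgeFinset.Nonempty) {ε C : ℝ} (hε : 0 < ε)
    (hC : 0 ≤ C) :
    ∃ n₀ : ℕ, ∀ (V : Type v) [Fintype V] [DecidableEq V] (G : SimpleGraph V) (w : (W → V) → ℝ),
      n₀ ≤ Fintype.card V → IsFracEmbPacking H G w →
        (∀ z, w z * Fintype.card V ^ Fintype.card W ≤ C * Fintype.card V ^ 2) →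
          ∃ M : Finset (W → V), (∀ z ∈ M, w z ≠ 0) ∧
            (M : Set (W → V)).Pairwise (fun z z' => Disjoint (imageEdges H z) (imageEdges H z')) ∧
            ∑ z, w z - ε * Fintype.card V ^ 2 ≤ #M := by
  classical
  obtain ⟨δ, hδ, hmatching⟩ := exists_isSupportMatching_sum_sub_le #H.edgeFinset hε
  set a : ℝ := 2 ^ Fintype.card W * 4 ^ 3
  refine ⟨⌈a * C / δ⌉₊ + 1, fun V _ _ G w hn hw hmax => ?_⟩
  have : Nonempty V := Fintype.card_pos_iff.1 (by omega)
  have hV : (0 : ℝ) < Fintype.card V := by exact_mod_cast Fintype.card_pos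
  have hcoload (e e' : Sym2 V) (hee : e ≠ e') : coload (imageEdges H) w e e' ≤ δ := by
    have hcount := sum_mul_pow_le (a := a) (k := 3) (by positivity) hmax
      (T := {z | e ∈ imageEdges H z ∧ e' ∈ imageEdges H z})
      (by dsimp only [a]; exact_mod_cast card_filter_mem_imageEdges_mul_le hee)
    have hn : a * C / δ ≤ Fintype.card V := Nat.ceil_le.1 (by omega)
    rw [div_le_iff₀ hδ] at hn
    refine le_of_mul_le_mul_right ?_ (pow_pos hV 3)
    calc coload (imageEdges H) w e e' * Fintype.card V ^ 3
        ≤ a * (C * Fintype.card V ^ 2) := hcount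
      _ = a * C * Fintype.card V ^ 2 := by ring
      _ ≤ Fintype.card V * δ * Fintype.card V ^ 2 := by gcongr
      _ = δ * Fintype.card V ^ 3 := by ring
  obtain ⟨M, hM, hcard⟩ := hmatching (imageEdges H) G.edgeFinset w
    ⟨hw.nonneg, fun z hz => hw.imageEdges_subset hz,
      fun z _ => hH.image _,
      fun z hz => card_image_of_injective _ (Sym2.map.injective (hw.injective z hz)),
      hw.load_le_one, hcoload, hδ.le⟩
  refine ⟨M, hM.1, hM.2, le_trans ?_ hcard⟩
  gcongr
  exact_mod_cast card_edgeFinset_le_sq G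

end PackingNumbers

section Copies

variable {W V : Type*} {H : SimpleGraph W} {G : SimpleGraph V}

lemma exists_injective_of_isCopy {c : G.Subgraph} (hc : c.IsCopy H) :
    ∃ x : W → V, Function.Injective x ∧ ∀ e ∈ H.edgeSet, e.map x ∈ c.edgeSet := by
  obtain ⟨i⟩ := hc
  refine ⟨fun a => i.symm a, Subtype.val_injective.comp i.symm.injective, fun e he => ?_⟩
  induction e using Sym2.inductionOn with | _ a b
  exact (i.symm.map_rel_iff.2 he : c.coe.Adj _ _)

variable [Fintype H.edgeSet] [DecidableEq V]

lemma exists_isCopy_edgeSet_eq_imageEdges {z : W → V} (hz : Function.Injective z)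
    (hmap : ∀ e ∈ H.edgeFinset, e.map z ∈ G.edgeSet) :
    ∃ c : G.Subgraph, c.IsCopy H ∧ c.edgeSet = imageEdges H z := by
  let f : H.Copy G :=
    ⟨⟨z, fun {a b} hab => hmap s(a, b) (SimpleGraph.mem_edgeFinset.2 hab)⟩, hz⟩
  refine ⟨f.toSubgraph, ⟨f.isoToSubgraph.symm⟩, ?_⟩
  rw [SimpleGraph.Copy.toSubgraph, SimpleGraph.Subgraph.edgeSet_map, imageEdges, coe_image,
    SimpleGraph.coe_edgeFinset, SimpleGraph.Subgraph.edgeSet_top]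
  rfl

open Classical in
lemma exists_isCopy_edgeDisjoint (hH : H.edgeFinset.Nonempty) {M : Finset (W → V)}
    (hinj : ∀ z ∈ M, Function.Injective z)
    (hmap : ∀ z ∈ M, ∀ e ∈ H.edgeFinset, e.map z ∈ G.edgeSet)
    (hdisj : (M : Set (W → V)).Pairwise fun z z' => Disjoint (imageEdges H z) (imageEdges H z')) :
    ∃ P : Finset G.Subgraph, (∀ c ∈ P, c.IsCopy H) ∧
      (P : Set G.Subgraph).Pairwise (fun c d => Disjoint c.edgeSet d.edgeSet) ∧ #P = #M := by
  choose! S hcopy hS using fun z hz =>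
    exists_isCopy_edgeSet_eq_imageEdges (hinj z hz) (hmap z hz)
  have hSinj : Set.InjOn S M := fun z hz z' hz' h => by
    by_contra hne
    have hself : Disjoint (imageEdges H z) (imageEdges H z') := hdisj hz hz' hne
    have heq : imageEdges H z = imageEdges H z' := by
      rw [← coe_inj, ← hS z hz, ← hS z' hz', h]
    rw [← heq, disjoint_self_iff_empty] at hself
    exact (hH.image _).ne_empty hself
  refine ⟨M.image S, by simpa using hcopy, ?_, card_image_of_injOn hSinj⟩
  rw [coe_image, hSinj.pairwise_image]
  intro z hz z' hz' hne
  rw [Function.onFun, hS z hz, hS z' hz', disjoint_coe]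
  exact hdisj hz hz' hne

variable [Fintype W] [Fintype V] [DecidableEq W]

lemma exists_isFracEmbPacking_sum_eq {ψ : G.Subgraph → ℝ} (hψ : IsFracPacking G H ψ) :
    ∃ φ, IsFracEmbPacking H G φ ∧
      ∑ x, φ x = ∑ᶠ c ∈ {c : G.Subgraph | c.IsCopy H}, ψ c := by
  classical
  have : Fintype {c : G.Subgraph | c.IsCopy H} := Fintype.ofFinite _
  obtain ⟨hψ₀, -, hψ₁⟩ := hψ
  choose X hinj hmap using
    fun c : {c : G.Subgraph | c.IsCopy H} => exists_injective_of_isCopy c.2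
  simp only [← SimpleGraph.mem_edgeFinset (G := H)] at hmap
  have hedges (c) : ∀ e ∈ imageEdges H (X c), e ∈ c.1.edgeSet := by
    simpa only [imageEdges, forall_mem_image] using hmap c
  set φ : (W → V) → ℝ := fun x => ∑ c with X c = x, ψ c
  have hsupp (x) (hx : φ x ≠ 0) : ∃ c, X c = x := by
    obtain ⟨c, hc, -⟩ := exists_ne_zero_of_sum_ne_zero hx
    exact ⟨c, (mem_filter.1 hc).2⟩
  refine ⟨φ, ⟨fun x => sum_nonneg fun c _ => (hψ₀ c).1, fun x hx => ?_, fun x hx e he => ?_,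
    fun e => ?_⟩, ?_⟩
  · obtain ⟨c, rfl⟩ := hsupp x hx
    exact hinj c
  · obtain ⟨c, rfl⟩ := hsupp x hx
    exact c.1.edgeSet_subset (hmap c e he)
  · have hload : load (imageEdges H) φ e =
        ∑ c ∈ ({c | e ∈ imageEdges H (X c)} : Finset _).map (.subtype _), ψ c := by
      rw [load, sum_fiberwise_eq_sum_filter, sum_map]
      simp only [mem_filter, mem_univ, true_and, Function.Embedding.subtype_apply]
    by_cases he : e ∈ G.edgeSet
    · refine le_trans ?_ (hψ₁ e he)
      rw [hload, finsum_mem_eq_finite_toFinset_sum ψ (Set.toFinite _)]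
      refine sum_le_sum_of_subset_of_nonneg (fun c hc => ?_) fun c _ _ => (hψ₀ c).1
      obtain ⟨x, hx, rfl⟩ := mem_map.1 hc
      exact (Set.Finite.mem_toFinset _).2 ⟨x.2, hedges x e (mem_filter.1 hx).2⟩
    · rw [hload, filter_false_of_mem fun c _ hc => he (c.1.edgeSet_subset (hedges c e hc))]
      simp
  · rw [sum_fiberwise, ← finsum_set_coe_eq_finsum_mem, finsum_eq_sum_of_fintype]

end Copies

end HaxellRodl

open HaxellRodl in
theorem haxell_rodl_general {W : Type u} [Finite W] (H : SimpleGraph W)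
    (hH : H.edgeSet.Nonempty) (ε : ℝ) (hε : 0 < ε) :
    ∃ n₀ : ℕ, ∀ (V : Type v) [Fintype V], n₀ ≤ Fintype.card V → ∀ (G : SimpleGraph V)
      (ψ : G.Subgraph → ℝ), IsFracPacking G H ψ →
        ∃ P : Finset G.Subgraph,
          (∀ c ∈ P, c.IsCopy H) ∧
          (P : Set G.Subgraph).Pairwise (fun c d => Disjoint c.edgeSet d.edgeSet) ∧
          (∑ᶠ c ∈ {c : G.Subgraph | c.IsCopy H}, ψ c) - (P.card : ℝ) ≤
            ε * (Fintype.card V : ℝ) ^ 2 := by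
  classical
  cases nonempty_fintype W
  have hE : H.edgeFinset.Nonempty := Set.toFinset_nonempty.2 hH
  obtain ⟨n₁, C, hC, hbounded⟩ :=
    exists_isFracEmbPacking_mul_card_pow_le.{v} H hE (half_pos hε)
  obtain ⟨n₂, hintegral⟩ := exists_edgeDisjoint_of_mul_card_pow_le.{v} H hE (half_pos hε) hC
  refine ⟨max n₁ n₂, fun V _ hn G ψ hψ => ?_⟩
  obtain ⟨φ, hφ, hφψ⟩ := exists_isFracEmbPacking_sum_eq hψ
  obtain ⟨w, hw, hmax, hwφ⟩ := hbounded V G φ (le_of_max_le_left hn) hφ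
  obtain ⟨M, hM, hdisj, hMw⟩ := hintegral V G w (le_of_max_le_right hn) hw hmax
  obtain ⟨P, hcopy, hPdisj, hPM⟩ := exists_isCopy_edgeDisjoint hE
    (fun z hz => hw.injective z (hM z hz)) (fun z hz => hw.map_mem z (hM z hz)) hdisj
  refine ⟨P, hcopy, hPdisj, ?_⟩
  rw [← hφψ, hPM]
  linarith

/-- Theorem of Haxell and Rödl: for every fixed graph `H` with at least one edge and every
`ε > 0` there exists `n₀` such that every graph `G` on `n ≥ n₀` vertices satisfies
`ν*_H(G) - ν_H(G) ≤ ε·n²`: every fractional `H`-packing of `G` exceeds some integral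
`H`-packing by at most `ε·n²`. -/
theorem haxell_rodl (m : ℕ) (H : SimpleGraph (Fin m)) (hH : H.edgeSet.Nonempty)
    (ε : ℝ) (hε : 0 < ε) :
    ∃ n₀ : ℕ, ∀ n : ℕ, n₀ ≤ n → ∀ G : SimpleGraph (Fin n),
      ∀ ψ : G.Subgraph → ℝ, IsFracPacking G H ψ →
        ∃ P : Finset G.Subgraph,
          (∀ c ∈ P, c.IsCopy H) ∧
          (P : Set G.Subgraph).Pairwise (fun c d => Disjoint c.edgeSet d.edgeSet) ∧
          (∑ᶠ c ∈ {c : G.Subgraph | c.IsCopy H}, ψ c) - (P.card : ℝ) ≤ ε * (n : ℝ) ^ 2 := by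
  obtain ⟨n₀, h⟩ := haxell_rodl_general H hH ε hε
  exact ⟨n₀, fun n hn => by simpa only [Fintype.card_fin] using h (Fin n) (by simpa using hn)⟩
end
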